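/- Let G be a connected simple graph on n ≥ 2 vertices. Then G has a spanning closed walk of length at most (14(√2 − 1)/(12√2 − 13)) · OLP(G). In particular, the integrality gap of the Held-Karp relaxation for graph-TSP is at most 14(√2 − 1)/(12√2 − 13) < 1.461. -/

import Mathlib

open SimpleGraph

/-- The value `Σ_{e ∈ E} x e` of an assignment `x` on the edges of `G`. -/
noncomputable def hkValue {V : Type*} (G : SimpleGraph V) (x : Sym2 V → ℝ) : ℝ :=
  ∑ᶠ e ∈ G.edgeSet, x e

/-- The total weight `Σ_{e ∈ δ(S)} x e` of the edges of `G` crossing the cut `(S, Sᶜ)`. -/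
noncomputable def hkCut {V : Type*} (G : SimpleGraph V) (x : Sym2 V → ℝ)
    (S : Set V) : ℝ :=
  ∑ᶠ e ∈ {e ∈ G.edgeSet | ∃ a b, e = s(a, b) ∧ a ∈ S ∧ b ∉ S}, x e

/-- Feasibility for the Held-Karp relaxation of graph-TSP on `G`. -/
def HKFeasible {V : Type*} (G : SimpleGraph V) (x : Sym2 V → ℝ) : Prop :=
  (∀ e, 0 ≤ x e) ∧
  ∀ S : Set V, S.Nonempty → S ≠ Set.univ → 2 ≤ hkCut G x S

/-- The optimum value `OLP(G)` of the Held-Karp relaxation of graph-TSP on `G`. -/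
noncomputable def OLP {V : Type*} [Fintype V] (G : SimpleGraph V) : ℝ :=
  sInf {y | ∃ x, HKFeasible G x ∧ y = hkValue G x}


/-- Moving to a basic solution of a system of linear inequalities without increasing the cost. -/
lemma basic_sol {E κ : Type*} [AddCommGroup E] [Module ℝ E] [Fintype κ]
    (A : κ → E →ₗ[ℝ] ℝ) (b : κ → ℝ) (c : E →ₗ[ℝ] ℝ)
    (hrec : ∀ z : E, (∀ k, 0 ≤ A k z) → c z ≤ 0 → z = 0) :
    ∀ (m : ℕ) (x : E), (∀ k, b k ≤ A k x) →
      (Set.ncard {k | A k x ≠ b k} ≤ m) →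
      ∃ x' : E, (∀ k, b k ≤ A k x') ∧ c x' ≤ c x ∧ (∀ k, A k x = b k → A k x' = b k) ∧
        ∀ z, (∀ k, A k x' = b k → A k z = 0) → z = 0 := by
  classical
  intro m
  induction m with
  | zero =>
    intro x hx hm
    refine ⟨x, hx, le_rfl, fun _ h => h, ?_⟩
    intro z hz
    have hall : ∀ k, A k x = b k := by
      intro k
      by_contra hk
      have h0 : Set.ncard {k | A k x ≠ b k} = 0 := by omega
      rw [Set.ncard_eq_zero] at h0
      have : k ∈ {k | A k x ≠ b k} := hk
      rw [h0] at this
      exact this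
    rcases le_total (c z) 0 with h | h
    · exact hrec z (fun k => (hz k (hall k)).ge) h
    · have := hrec (-z) (fun k => by rw [map_neg, hz k (hall k)]; simp) (by rw [map_neg]; linarith)
      simpa using this
  | succ m ih =>
    intro x hx hm
    by_cases hker : ∀ z, (∀ k, A k x = b k → A k z = 0) → z = 0
    · exact ⟨x, hx, le_rfl, fun _ h => h, hker⟩
    push Not at hker
    obtain ⟨z, hz, hz0⟩ : ∃ z, (∀ k, A k x = b k → A k z = 0) ∧ z ≠ 0 := hker
    obtain ⟨z, hz, hz0, hcz⟩ : ∃ z, (∀ k, A k x = b k → A k z = 0) ∧ z ≠ 0 ∧ c z ≤ 0 := by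
      rcases le_total (c z) 0 with h | h
      · exact ⟨z, hz, hz0, h⟩
      · exact ⟨-z, fun k hk => by rw [map_neg, hz k hk]; simp, by simpa using hz0,
          by rw [map_neg]; linarith⟩
    have hex : ∃ k, A k z < 0 := by
      by_contra hcon
      push Not at hcon
      exact hz0 (hrec z hcon hcz)
    obtain ⟨k0, hk0, hmin⟩ := Finset.exists_min_image (Finset.univ.filter fun k => A k z < 0)
      (fun k => (A k x - b k) / (-(A k z))) (by
        obtain ⟨k, hk⟩ := hex
        exact ⟨k, by simpa using hk⟩)
    simp only [Finset.mem_filter, Finset.mem_univ, true_and] at hk0 hmin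
    set ε := (A k0 x - b k0) / (-(A k0 z)) with hε
    have hε0 : 0 ≤ ε := div_nonneg (by linarith [hx k0]) (by linarith)
    have hfe : ∀ k, b k ≤ A k (x + ε • z) := by
      intro k
      rw [map_add, map_smul, smul_eq_mul]
      rcases lt_or_ge (A k z) 0 with h | h
      · have h1 := hmin k h
        rw [le_div_iff₀ (by linarith)] at h1
        linarith
      · nlinarith [hx k, mul_nonneg hε0 h]
    have hti : ∀ k, A k x = b k → A k (x + ε • z) = b k := by
      intro k hk
      rw [map_add, map_smul, smul_eq_mul, hz k hk, hk]; simp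
    have hk0t : A k0 (x + ε • z) = b k0 := by
      rw [map_add, map_smul, smul_eq_mul, hε]
      have : A k0 z ≠ 0 := hk0.ne
      field_simp
      ring
    have hk0n : A k0 x ≠ b k0 := fun h => by
      have := hz k0 h
      linarith
    have hlt : Set.ncard {k | A k (x + ε • z) ≠ b k} < Set.ncard {k | A k x ≠ b k} := by
      apply Set.ncard_lt_ncard _ (Set.toFinite _)
      refine ⟨fun k hk h => hk (hti k h), fun h => ?_⟩
      exact h hk0n hk0t
    obtain ⟨x', h1, h2, h3, h4⟩ := ih (x + ε • z) hfe (by omega)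
    refine ⟨x', h1, h2.trans ?_, fun k hk => h3 k (hti k hk), h4⟩
    rw [map_add, map_smul, smul_eq_mul]
    nlinarith

lemma card_le_of_ker {ι κ : Type*} [Fintype ι] (F : Finset ι) (L : Finset κ)
    (φ : κ → (ι → ℝ) →ₗ[ℝ] ℝ)
    (h : ∀ z : ι → ℝ, (∀ i, i ∉ F → z i = 0) → (∀ k ∈ L, φ k z = 0) → z = 0) :
    F.card ≤ L.card := by
  classical
  let ext : (F → ℝ) →ₗ[ℝ] (ι → ℝ) := Function.ExtendByZero.linearMap ℝ (Subtype.val : F → ι)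
  let Φ : (F → ℝ) →ₗ[ℝ] (L → ℝ) := LinearMap.pi (fun k : L => (φ k.1).comp ext)
  have hinj : Function.Injective Φ := by
    rw [injective_iff_map_eq_zero]
    intro z hz
    have h1 : ext z = 0 := by
      apply h
      · intro i hi
        show Function.extend Subtype.val z 0 i = 0
        rw [Function.extend_apply']
        · rfl
        · rintro ⟨a, rfl⟩
          exact hi a.2
      · intro k hk
        have := congrFun hz ⟨k, hk⟩
        simpa [Φ] using this
    funext i
    have h2 := congrFun h1 i.1
    have h3 : ext z i.1 = z i := Subtype.val_injective.extend_apply z 0 i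
    rw [h3] at h2
    simpa using h2
  have := LinearMap.finrank_le_finrank_of_injective hinj
  simpa using this

/-- Net inflow at a node. -/
noncomputable def divg {N A : Type*} [Fintype A] [DecidableEq N] (s t : A → N) (n : N) :
    (A → ℝ) →ₗ[ℝ] ℝ :=
  ∑ a, ((if t a = n then (1:ℝ) else 0) - (if s a = n then 1 else 0)) • LinearMap.proj a

lemma divg_apply {N A : Type*} [Fintype A] [DecidableEq N] (s t : A → N) (n : N) (f : A → ℝ) :
    divg s t n f = ∑ a, ((if t a = n then (1:ℝ) else 0) - (if s a = n then 1 else 0)) * f a := by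
  simp [divg]

lemma divg_sum {N A : Type*} [Fintype A] [Fintype N] [DecidableEq N] (s t : A → N)
    (f : A → ℝ) : ∑ n, divg s t n f = 0 := by
  simp only [divg_apply]
  rw [Finset.sum_comm]
  apply Finset.sum_eq_zero
  intro a _
  rw [← Finset.sum_mul, Finset.sum_sub_distrib]
  simp

lemma int_of_sum {A : Type*} [Fintype A] [DecidableEq A] (d : A → ℤ) (x : A → ℝ) (a0 : A)
    (hd : d a0 = 1 ∨ d a0 = -1) (h : ∀ a, a ≠ a0 → d a ≠ 0 → ∃ m : ℤ, (m : ℝ) = x a)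
    (hs : ∑ a, (d a : ℝ) * x a = 0) : ∃ m : ℤ, (m : ℝ) = x a0 := by
  have h1 : ∀ a, a ≠ a0 → ∃ m : ℤ, (m : ℝ) = d a * x a := by
    intro a ha
    by_cases hda : d a = 0
    · exact ⟨0, by simp [hda]⟩
    · obtain ⟨m, hm⟩ := h a ha hda
      exact ⟨d a * m, by push_cast; rw [hm]⟩
  rw [← Finset.add_sum_erase _ _ (Finset.mem_univ a0)] at hs
  have h2 : ∃ m : ℤ, (m : ℝ) = ∑ a ∈ Finset.univ.erase a0, (d a : ℝ) * x a := by
    choose! g hg using h1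
    refine ⟨∑ a ∈ Finset.univ.erase a0, g a, ?_⟩
    push_cast
    apply Finset.sum_congr rfl
    intro a ha
    exact hg a (Finset.ne_of_mem_erase ha)
  obtain ⟨m, hm⟩ := h2
  rcases hd with hd | hd
  · exact ⟨-m, by rw [hd] at hs; push_cast at hs ⊢; linarith⟩
  · exact ⟨m, by rw [hd] at hs; push_cast at hs ⊢; linarith⟩

/-- Integral rounding of circulations. -/
lemma flow_round {N A : Type*} [Fintype N] [Fintype A] [DecidableEq N] (s t : A → N)
    (f c : A → ℝ) (hf : ∀ n, divg s t n f = 0) :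
    ∃ g : A → ℤ, (∀ n, divg s t n (fun a => (g a : ℝ)) = 0) ∧
      (∀ a, ⌊f a⌋ ≤ g a ∧ g a ≤ ⌈f a⌉) ∧ ∑ a, c a * g a ≤ ∑ a, c a * f a := by
  classical
  let κ := (N ⊕ N) ⊕ (A ⊕ A)
  let L : κ → (A → ℝ) →ₗ[ℝ] ℝ := Sum.elim
    (Sum.elim (fun n => divg s t n) (fun n => -divg s t n))
    (Sum.elim (fun a => LinearMap.proj a) (fun a => -LinearMap.proj a))
  let b : κ → ℝ := Sum.elim (Sum.elim (fun _ => 0) (fun _ => 0))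
    (Sum.elim (fun a => (⌊f a⌋ : ℝ)) (fun a => -(⌈f a⌉ : ℝ)))
  let C : (A → ℝ) →ₗ[ℝ] ℝ := ∑ a, c a • LinearMap.proj a
  have hC : ∀ x, C x = ∑ a, c a * x a := by intro x; simp [C]
  have hrec : ∀ z : A → ℝ, (∀ k, 0 ≤ L k z) → C z ≤ 0 → z = 0 := by
    intro z hz _
    funext a
    have h1 := hz (Sum.inr (Sum.inl a))
    have h2 := hz (Sum.inr (Sum.inr a))
    simp [L] at h1 h2
    simpa using le_antisymm h2 h1
  have hx : ∀ k, b k ≤ L k f := by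
    rintro ((n | n) | (a | a))
    · simp [L, b, hf]
    · simp [L, b, hf]
    · simpa [L, b] using Int.floor_le _
    · simpa [L, b] using Int.le_ceil _
  obtain ⟨x, hxf, hxc, -, hker⟩ := basic_sol L b C hrec _ f hx le_rfl
  have hdx : ∀ n, divg s t n x = 0 := by
    intro n
    have h1 := hxf (Sum.inl (Sum.inl n))
    have h2 := hxf (Sum.inl (Sum.inr n))
    simp [L, b] at h1 h2
    linarith
  have hlo : ∀ a, (⌊f a⌋ : ℝ) ≤ x a := fun a => by
    simpa [L, b] using hxf (Sum.inr (Sum.inl a))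
  have hhi : ∀ a, x a ≤ (⌈f a⌉ : ℝ) := fun a => by
    simpa [L, b] using hxf (Sum.inr (Sum.inr a))
  set F : Finset A := Finset.univ.filter fun a => x a ≠ ⌊f a⌋ ∧ x a ≠ ⌈f a⌉ with hF
  have hker' : ∀ z : A → ℝ, (∀ a, a ∉ F → z a = 0) → (∀ n, divg s t n z = 0) → z = 0 := by
    intro z hz hd
    apply hker
    rintro ((n | n) | (a | a)) hk
    · simpa [L] using hd n
    · simpa [L] using hd n
    · simp only [L, b, Sum.elim_inr, Sum.elim_inl, LinearMap.proj_apply] at hk ⊢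
      exact hz a (by simp [F, hk])
    · simp only [L, b, Sum.elim_inr, LinearMap.neg_apply, LinearMap.proj_apply] at hk ⊢
      rw [hz a (by simp [F]; intro _; linarith)]
      simp
  have hnonint : ∀ a ∈ F, ∀ m : ℤ, (m : ℝ) ≠ x a := by
    intro a ha m hm
    simp only [F, Finset.mem_filter, Finset.mem_univ, true_and] at ha
    have h1 : (⌊f a⌋ : ℝ) < m := by rw [hm]; exact lt_of_le_of_ne (hlo a) (Ne.symm ha.1)
    have h2 : (m : ℝ) < ⌈f a⌉ := by rw [hm]; exact lt_of_le_of_ne (hhi a) ha.2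
    have h3 : ⌊f a⌋ < m := by exact_mod_cast h1
    have h4 : m < ⌈f a⌉ := by exact_mod_cast h2
    have := Int.ceil_le_floor_add_one (f a)
    omega
  have hwhole : ∀ a, a ∉ F → ∃ m : ℤ, (m : ℝ) = x a := by
    intro a ha
    simp only [F, Finset.mem_filter, Finset.mem_univ, true_and, not_and_or, not_not] at ha
    rcases ha with h | h
    · exact ⟨_, h.symm⟩
    · exact ⟨_, h.symm⟩
  have hFe : F = ∅ := by
    by_contra hne
    have hne : F.Nonempty := Finset.nonempty_iff_ne_empty.mpr hne
    set Tn : Finset N := F.image s ∪ F.image t with hTn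
    obtain ⟨a1, ha1⟩ := hne
    have hn0 : s a1 ∈ Tn := Finset.mem_union_left _ (Finset.mem_image_of_mem _ ha1)
    have hcard1 : F.card ≤ (Tn.erase (s a1)).card := by
      apply card_le_of_ker F _ (fun n => divg s t n)
      intro z hz hd
      apply hker' z hz
      have hother : ∀ n, n ≠ s a1 → divg s t n z = 0 := by
        intro n hn
        by_cases hnT : n ∈ Tn
        · exact hd n (Finset.mem_erase.mpr ⟨hn, hnT⟩)
        · rw [divg_apply]
          apply Finset.sum_eq_zero
          intro a _
          by_cases haF : a ∈ F
          · have h1 : t a ≠ n := fun h => hnT (h ▸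
              Finset.mem_union_right _ (Finset.mem_image_of_mem _ haF))
            have h2 : s a ≠ n := fun h => hnT (h ▸
              Finset.mem_union_left _ (Finset.mem_image_of_mem _ haF))
            simp [h1, h2]
          · rw [hz a haF]; simp
      intro n
      by_cases hn : n = s a1
      · have := divg_sum s t z
        rw [← Finset.add_sum_erase _ _ (Finset.mem_univ (s a1))] at this
        rw [Finset.sum_eq_zero (fun m hm => hother m (Finset.ne_of_mem_erase hm))] at this
        rw [hn]; linarith
      · exact hother n hn
    rw [Finset.card_erase_of_mem hn0] at hcard1
    have hTpos : 0 < Tn.card := Finset.card_pos.mpr ⟨_, hn0⟩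
    have hdeg : ∀ n ∈ Tn, 2 ≤ (F.filter (fun a => s a = n)).card
        + (F.filter (fun a => t a = n)).card := by
      intro n hn
      by_contra hlt
      have hpos : 1 ≤ (F.filter (fun a => s a = n)).card
        + (F.filter (fun a => t a = n)).card := by
        rcases Finset.mem_union.mp hn with h | h
        · obtain ⟨a, ha, rfl⟩ := Finset.mem_image.mp h
          have : 0 < (F.filter (fun a' => s a' = s a)).card :=
            Finset.card_pos.mpr ⟨a, by simp [ha]⟩
          omega
        · obtain ⟨a, ha, rfl⟩ := Finset.mem_image.mp h
          have : 0 < (F.filter (fun a' => t a' = t a)).card :=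
            Finset.card_pos.mpr ⟨a, by simp [ha]⟩
          omega
      have hkey : ∃ a0 ∈ F, ((s a0 = n ∧ t a0 ≠ n) ∨ (s a0 ≠ n ∧ t a0 = n)) ∧
          ∀ a ∈ F, a ≠ a0 → s a ≠ n ∧ t a ≠ n := by
        have hcase : ((F.filter (fun a => s a = n)).card = 1 ∧
            (F.filter (fun a => t a = n)).card = 0) ∨
            ((F.filter (fun a => s a = n)).card = 0 ∧
            (F.filter (fun a => t a = n)).card = 1) := by omega
        rcases hcase with ⟨h1, h2⟩ | ⟨h2, h1⟩
        · obtain ⟨a0, ha0⟩ := Finset.card_eq_one.mp h1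
          rw [Finset.card_eq_zero] at h2
          have m0 : a0 ∈ F.filter (fun a => s a = n) := by rw [ha0]; simp
          rw [Finset.mem_filter] at m0
          have h3 : ∀ a ∈ F, t a ≠ n := fun a ha => (Finset.filter_eq_empty_iff.mp h2) ha
          refine ⟨a0, m0.1, Or.inl ⟨m0.2, h3 _ m0.1⟩, fun a ha hne => ⟨fun h => hne ?_, h3 a ha⟩⟩
          have : a ∈ F.filter (fun a => s a = n) := by simp [ha, h]
          rw [ha0] at this; simpa using this
        · obtain ⟨a0, ha0⟩ := Finset.card_eq_one.mp h1
          rw [Finset.card_eq_zero] at h2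
          have m0 : a0 ∈ F.filter (fun a => t a = n) := by rw [ha0]; simp
          rw [Finset.mem_filter] at m0
          have h3 : ∀ a ∈ F, s a ≠ n := fun a ha => (Finset.filter_eq_empty_iff.mp h2) ha
          refine ⟨a0, m0.1, Or.inr ⟨h3 _ m0.1, m0.2⟩, fun a ha hne => ⟨h3 a ha, fun h => hne ?_⟩⟩
          have : a ∈ F.filter (fun a => t a = n) := by simp [ha, h]
          rw [ha0] at this; simpa using this
      obtain ⟨a0, ha0F, hor, hoth⟩ := hkey
      have := int_of_sum (fun a => (if t a = n then (1:ℤ) else 0) - (if s a = n then 1 else 0)) x a0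
        (by rcases hor with ⟨h1, h2⟩ | ⟨h1, h2⟩ <;> simp [h1, h2])
        (by
          intro a ha hd
          by_cases haF : a ∈ F
          · have := hoth a haF ha
            simp [this.1, this.2] at hd
          · exact hwhole a haF)
        (by
          have := hdx n
          rw [divg_apply] at this
          push_cast
          exact this)
      obtain ⟨m, hm⟩ := this
      exact hnonint a0 ha0F m hm
    have hsum := Finset.sum_le_sum hdeg
    rw [Finset.sum_add_distrib] at hsum
    rw [← Finset.card_eq_sum_card_fiberwise (fun a ha => ?_),
      ← Finset.card_eq_sum_card_fiberwise (fun a ha => ?_)] at hsum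
    · simp at hsum
      omega
    · exact Finset.mem_union_right _ (Finset.mem_image_of_mem _ ha)
    · exact Finset.mem_union_left _ (Finset.mem_image_of_mem _ ha)
  have hwhole' : ∀ a, ∃ m : ℤ, (m : ℝ) = x a := fun a => hwhole a (by simp [hFe])
  choose g hg using hwhole'
  refine ⟨g, ?_, ?_, ?_⟩
  · intro n
    have : (fun a => (g a : ℝ)) = x := funext hg
    rw [this]; exact hdx n
  · intro a
    have h1 := hlo a
    have h2 := hhi a
    rw [← hg] at h1 h2
    exact ⟨by exact_mod_cast h1, by exact_mod_cast h2⟩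
  · rw [hC, hC] at hxc
    simpa [hg] using hxc

section Sparse

variable {V : Type*} [Fintype V] [DecidableEq V]

lemma laminar_card (M : Finset V) : ∀ L : Finset (Finset V),
    (∀ A ∈ L, A.Nonempty ∧ A ⊆ M) →
    (∀ A ∈ L, ∀ B ∈ L, A ⊆ B ∨ B ⊆ A ∨ Disjoint A B) → L.card ≤ 2 * M.card := by
  induction M using Finset.induction_on with
  | empty =>
    intro L h1 _
    have : L = ∅ := by
      apply Finset.eq_empty_of_forall_notMem
      intro A hA
      obtain ⟨⟨a, ha⟩, h⟩ := h1 A hA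
      exact absurd (h ha) (by simp)
    simp [this]
  | insert m M hm ih =>
    intro L h1 h2
    set Lc := L.filter (fun A => m ∉ A ∧ insert m A ∈ L) with hLc
    set L' := ((L \ Lc).image (fun A => A.erase m)).erase ∅ with hL'
    have c1 : Lc.card ≤ 1 := by
      rw [Finset.card_le_one]
      intro A hA B hB
      simp only [hLc, Finset.mem_filter] at hA hB
      obtain ⟨hAL, hmA, hA'⟩ := hA
      obtain ⟨hBL, hmB, hB'⟩ := hB
      have sub : ∀ A B : Finset V, A ∈ L → m ∉ A → insert m A ∈ L → B ∈ L → m ∉ B →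
          insert m A ⊆ insert m B → insert m B ∈ L → A = B := by
        intro A B hAL hmA hA' hBL hmB hss hB'
        have hAB : A ⊆ B := by
          intro a ha
          have := hss (Finset.mem_insert_of_mem ha)
          rcases Finset.mem_insert.mp this with h | h
          · exact absurd (h ▸ ha) hmA
          · exact h
        obtain ⟨a, ha⟩ := (h1 A hAL).1
        rcases h2 (insert m A) hA' B hBL with h | h | h
        · exact absurd (h (Finset.mem_insert_self _ _)) hmB
        · apply Finset.Subset.antisymm hAB
          intro b hb
          rcases Finset.mem_insert.mp (h hb) with h' | h'
          · exact absurd (h' ▸ hb) hmB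
          · exact h'
        · exact absurd (hAB ha) (Finset.disjoint_left.mp h (Finset.mem_insert_of_mem ha))
      rcases h2 _ hA' _ hB' with h | h | h
      · exact sub A B hAL hmA hA' hBL hmB h hB'
      · exact (sub B A hBL hmB hB' hAL hmA h hA').symm
      · exact absurd (Finset.mem_insert_self m B)
          (Finset.disjoint_left.mp h (Finset.mem_insert_self _ _))
    have c2 : (L \ Lc).card = ((L \ Lc).image (fun A => A.erase m)).card := by
      rw [Finset.card_image_of_injOn]
      intro A hA B hB hAB
      simp only [hLc, Finset.coe_sdiff, Finset.coe_filter, Set.mem_sdiff, Finset.mem_coe,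
        Set.mem_ofPred_eq, not_and] at hA hB
      simp only at hAB
      by_cases hmA : m ∈ A <;> by_cases hmB : m ∈ B
      · rw [← Finset.insert_erase hmA, ← Finset.insert_erase hmB, hAB]
      · rw [Finset.erase_eq_of_notMem hmB] at hAB
        exact absurd (by rw [← hAB, Finset.insert_erase hmA]; exact hA.1) (hB.2 hB.1 hmB)
      · rw [Finset.erase_eq_of_notMem hmA] at hAB
        exact absurd (by rw [hAB, Finset.insert_erase hmB]; exact hB.1) (hA.2 hA.1 hmA)
      · rwa [Finset.erase_eq_of_notMem hmA, Finset.erase_eq_of_notMem hmB] at hAB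
    have c3 : ((L \ Lc).image (fun A => A.erase m)).card ≤ L'.card + 1 :=
      by
      have := Finset.pred_card_le_card_erase (s := (L \ Lc).image (fun A => A.erase m)) (a := ∅)
      rw [← hL'] at this
      omega
    have c4 : L.card ≤ (L \ Lc).card + Lc.card := Finset.card_le_card_sdiff_add_card
    have c5 : L'.card ≤ 2 * M.card := by
      apply ih
      · intro A hA
        simp only [hL', Finset.mem_erase, Finset.mem_image, Finset.mem_sdiff] at hA
        obtain ⟨hne, B, ⟨hB, -⟩, rfl⟩ := hA
        refine ⟨Finset.nonempty_iff_ne_empty.mpr hne, ?_⟩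
        intro a ha
        rw [Finset.mem_erase] at ha
        exact (Finset.mem_insert.mp ((h1 B hB).2 ha.2)).resolve_left ha.1
      · intro A hA B hB
        simp only [hL', Finset.mem_erase, Finset.mem_image, Finset.mem_sdiff] at hA hB
        obtain ⟨_, A, ⟨hA, -⟩, rfl⟩ := hA
        obtain ⟨_, B, ⟨hB, -⟩, rfl⟩ := hB
        rcases h2 A hA B hB with h | h | h
        · exact Or.inl (Finset.erase_subset_erase _ h)
        · exact Or.inr (Or.inl (Finset.erase_subset_erase _ h))
        · exact Or.inr (Or.inr (h.mono (Finset.erase_subset _ _) (Finset.erase_subset _ _)))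
    rw [Finset.card_insert_of_notMem hm]
    omega

/-- The pair `e` crosses the set `S`. -/
def crs (S : Finset V) (e : Sym2 V) : Prop := ∃ a b, e = s(a, b) ∧ a ∈ S ∧ b ∉ S

lemma crs_mk (S : Finset V) (a b : V) :
    crs S s(a, b) ↔ (a ∈ S ∧ b ∉ S) ∨ (b ∈ S ∧ a ∉ S) := by
  constructor
  · rintro ⟨c, d, h, hc, hd⟩
    rcases Sym2.eq_iff.mp h with ⟨rfl, rfl⟩ | ⟨rfl, rfl⟩
    · exact Or.inl ⟨hc, hd⟩
    · exact Or.inr ⟨hc, hd⟩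
  · rintro (h | h)
    · exact ⟨a, b, rfl, h⟩
    · exact ⟨b, a, Sym2.eq_swap, h⟩

open Classical in
/-- Indicator of crossing. -/
noncomputable def crI (S : Finset V) (e : Sym2 V) : ℝ := if crs S e then 1 else 0

lemma crI_submod (A B : Finset V) (e : Sym2 V) :
    crI (A ∩ B) e + crI (A ∪ B) e ≤ crI A e + crI B e := by
  induction e using Sym2.ind with
  | _ a b =>
    unfold crI
    simp only [crs_mk, Finset.mem_inter, Finset.mem_union]
    by_cases h1 : a ∈ A <;> by_cases h2 : b ∈ A <;> by_cases h3 : a ∈ B <;> by_cases h4 : b ∈ B <;>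
      simp [h1, h2, h3, h4]

/-- The weight of a cut, as a linear form. -/
noncomputable def cutL (S : Finset V) : (Sym2 V → ℝ) →ₗ[ℝ] ℝ := ∑ e, crI S e • LinearMap.proj e

lemma cutL_apply (S : Finset V) (x : Sym2 V → ℝ) : cutL S x = ∑ e, crI S e * x e := by
  simp [cutL]

lemma cut_uncross (x : Sym2 V → ℝ) (hx : ∀ e, 0 ≤ x e) (A B : Finset V)
    (hA : cutL A x = 2) (hB : cutL B x = 2) (hi : 2 ≤ cutL (A ∩ B) x) (hu : 2 ≤ cutL (A ∪ B) x) :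
    cutL (A ∩ B) x = 2 ∧ cutL (A ∪ B) x = 2 ∧
    ∀ z : Sym2 V → ℝ, (∀ e, x e = 0 → z e = 0) →
      cutL A z + cutL B z = cutL (A ∩ B) z + cutL (A ∪ B) z := by
  have hnn : ∀ e ∈ Finset.univ, 0 ≤ (crI A e + crI B e - crI (A ∩ B) e - crI (A ∪ B) e) * x e := by
    intro e _
    exact mul_nonneg (by linarith [crI_submod A B e]) (hx e)
  have hexp : ∀ y : Sym2 V → ℝ,
      ∑ e, (crI A e + crI B e - crI (A ∩ B) e - crI (A ∪ B) e) * y e =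
      cutL A y + cutL B y - cutL (A ∩ B) y - cutL (A ∪ B) y := by
    intro y
    simp only [cutL_apply, sub_mul, add_mul, Finset.sum_sub_distrib, Finset.sum_add_distrib]
  have h0 := Finset.sum_nonneg hnn
  rw [hexp] at h0
  have hz : ∑ e, (crI A e + crI B e - crI (A ∩ B) e - crI (A ∪ B) e) * x e = 0 := by
    rw [hexp]; linarith
  refine ⟨by linarith, by linarith, ?_⟩
  intro z hzx
  rw [Finset.sum_eq_zero_iff_of_nonneg hnn] at hz
  have : ∑ e, (crI A e + crI B e - crI (A ∩ B) e - crI (A ∪ B) e) * z e = 0 := by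
    apply Finset.sum_eq_zero
    intro e he
    rcases mul_eq_zero.mp (hz e he) with h | h
    · rw [h]; simp
    · rw [hzx e h]; simp
  rw [hexp] at this
  linarith

lemma sparse_sol (r : V) (x : Sym2 V → ℝ) (hx0 : ∀ e, 0 ≤ x e)
    (hcut : ∀ S : Finset V, S.Nonempty → r ∉ S → 2 ≤ cutL S x) :
    ∃ y : Sym2 V → ℝ, (∀ e, 0 ≤ y e) ∧ (∀ S : Finset V, S.Nonempty → r ∉ S → 2 ≤ cutL S y) ∧
      ∑ e, y e ≤ ∑ e, x e ∧ (∀ e, x e = 0 → y e = 0) ∧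
      (Finset.univ.filter (fun e => y e ≠ 0)).card ≤ 2 * (Fintype.card V - 1) := by
  classical
  let κ := Sym2 V ⊕ {S : Finset V // S.Nonempty ∧ r ∉ S}
  let L : κ → (Sym2 V → ℝ) →ₗ[ℝ] ℝ := Sum.elim (fun e => LinearMap.proj e) (fun S => cutL S.1)
  let b : κ → ℝ := Sum.elim (fun _ => 0) (fun _ => 2)
  let C : (Sym2 V → ℝ) →ₗ[ℝ] ℝ := ∑ e, LinearMap.proj e
  have hC : ∀ x, C x = ∑ e, x e := by intro x; simp [C]
  obtain ⟨y, h1, h2, h3, h4⟩ := basic_sol L b C (by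
      intro z hz hc
      rw [hC] at hc
      have hz0 : ∀ e ∈ Finset.univ, 0 ≤ z e := fun e _ => by simpa [L] using hz (Sum.inl e)
      have := le_antisymm hc (Finset.sum_nonneg hz0)
      rw [Finset.sum_eq_zero_iff_of_nonneg hz0] at this
      funext e
      exact this e (Finset.mem_univ e)) _ x (by
      rintro (e | ⟨S, hS, hr⟩)
      · simpa [L, b] using hx0 e
      · simpa [L, b] using hcut S hS hr) le_rfl
  have hy0 : ∀ e, 0 ≤ y e := fun e => by simpa [L, b] using h1 (Sum.inl e)
  have hyc : ∀ S : Finset V, S.Nonempty → r ∉ S → 2 ≤ cutL S y := fun S hS hr => by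
    simpa [L, b] using h1 (Sum.inr ⟨S, hS, hr⟩)
  refine ⟨y, hy0, hyc, by simpa [hC] using h2, fun e he => ?_, ?_⟩
  · simpa [L, b] using h3 (Sum.inl e) (by simpa [L, b] using he)
  -- tight sets
  let tight : Finset V → Prop := fun S => S.Nonempty ∧ r ∉ S ∧ cutL S y = 2
  let lam : Finset (Finset V) → Prop := fun L =>
    (∀ A ∈ L, tight A) ∧ (∀ A ∈ L, ∀ B ∈ L, A ⊆ B ∨ B ⊆ A ∨ Disjoint A B)
  obtain ⟨M, hM, hmax⟩ := Finset.exists_max_image (Finset.univ.filter lam) Finset.card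
    ⟨∅, by simp [lam]⟩
  simp only [Finset.mem_filter, Finset.mem_univ, true_and] at hM hmax
  have hcardM : M.card ≤ 2 * (Fintype.card V - 1) := by
    have := laminar_card (Finset.univ.erase r) M (fun A hA => ⟨(hM.1 A hA).1, fun a ha => by
      simp only [Finset.mem_erase, Finset.mem_univ, and_true]
      rintro rfl
      exact (hM.1 A hA).2.1 ha⟩) hM.2
    simpa [Finset.card_erase_of_mem] using this
  refine le_trans ?_ hcardM
  apply card_le_of_ker _ M (fun S => cutL S)
  intro z hz hzM
  have hz' : ∀ e, y e = 0 → z e = 0 := fun e he => hz e (by simp [he])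
  let cross : Finset V → Finset V → Prop := fun A S => ¬ Disjoint A S ∧ ¬ A ⊆ S ∧ ¬ S ⊆ A
  have hall : ∀ m : ℕ, ∀ S, tight S → (M.filter (fun A => cross A S)).card ≤ m →
      cutL S z = 0 := by
    intro m
    induction m with
    | zero =>
      intro S hS hm
      have hno : ∀ A ∈ M, ¬ cross A S := by
        intro A hA hc
        have : A ∈ M.filter (fun A => cross A S) := by simp [hA, hc]
        have := Finset.card_pos.mpr ⟨A, this⟩
        omega
      by_cases hSM : S ∈ M
      · exact hzM S hSM
      exfalso
      have hlam : lam (insert S M) := by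
        refine ⟨?_, ?_⟩
        · intro A hA
          rcases Finset.mem_insert.mp hA with rfl | hA
          · exact hS
          · exact hM.1 A hA
        · intro A hA B hB
          rcases Finset.mem_insert.mp hA with h | hA' <;> rcases Finset.mem_insert.mp hB with h' | hB'
          · subst h h'; exact Or.inl (Finset.Subset.refl _)
          · subst h
            have := hno B hB'
            simp only [cross, not_and_or, not_not] at this
            rcases this with h | h | h
            · exact Or.inr (Or.inr h.symm)
            · exact Or.inr (Or.inl h)
            · exact Or.inl h
          · subst h'
            have := hno A hA'
            simp only [cross, not_and_or, not_not] at this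
            rcases this with h | h | h
            · exact Or.inr (Or.inr h)
            · exact Or.inl h
            · exact Or.inr (Or.inl h)
          · exact hM.2 A hA' B hB'
      have := hmax _ hlam
      rw [Finset.card_insert_of_notMem hSM] at this
      omega
    | succ m ih =>
      intro S hS hm
      by_cases hex : ∃ A ∈ M, cross A S
      swap
      · apply ih S hS
        push Not at hex
        rw [Finset.filter_eq_empty_iff.mpr (fun A hA => hex A hA)]
        simp
      obtain ⟨A, hA, hAS⟩ := hex
      have hAt := hM.1 A hA
      have hine : (A ∩ S).Nonempty := Finset.not_disjoint_iff_nonempty_inter.mp hAS.1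
      have hir : r ∉ A ∩ S := fun h => hAt.2.1 (Finset.mem_inter.mp h).1
      have hune : (A ∪ S).Nonempty := hAt.1.mono Finset.subset_union_left
      have hur : r ∉ A ∪ S := fun h => (Finset.mem_union.mp h).elim hAt.2.1 hS.2.1
      obtain ⟨q1, q2, q3⟩ := cut_uncross y hy0 A S hAt.2.2 hS.2.2 (hyc _ hine hir) (hyc _ hune hur)
      have q4 := q3 z hz'
      have f1 : (M.filter (fun B => cross B (A ∩ S))).card < (M.filter (fun B => cross B S)).card := by
        apply Finset.card_lt_card
        rw [Finset.ssubset_iff_of_subset]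
        · refine ⟨A, by simp [hA, hAS], ?_⟩
          simp [cross]
        · intro B hB
          simp only [Finset.mem_filter] at hB ⊢
          obtain ⟨hBM, c1, c2, c3⟩ := hB
          refine ⟨hBM, ?_⟩
          rcases hM.2 B hBM A hA with h | h | h
          · refine ⟨fun hd => c1 (hd.mono_right Finset.inter_subset_right), fun hs => c2 ?_, fun hs => ?_⟩
            · exact Finset.subset_inter h hs
            · exact hAS.2.2 (hs.trans h)
          · exact absurd (Finset.inter_subset_left.trans h) c3
          · exact absurd (h.mono_right Finset.inter_subset_left) c1
      have f2 : (M.filter (fun B => cross B (A ∪ S))).card < (M.filter (fun B => cross B S)).card := by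
        apply Finset.card_lt_card
        rw [Finset.ssubset_iff_of_subset]
        · refine ⟨A, by simp [hA, hAS], ?_⟩
          simp [cross]
        · intro B hB
          simp only [Finset.mem_filter] at hB ⊢
          obtain ⟨hBM, c1, c2, c3⟩ := hB
          refine ⟨hBM, ?_⟩
          rcases hM.2 B hBM A hA with h | h | h
          · exact absurd (h.trans Finset.subset_union_left) c2
          · refine ⟨fun hd => hAS.1 (hd.mono_left h), fun hs => c2 (hs.trans Finset.subset_union_right),
              fun hs => c3 (Finset.union_subset h hs)⟩
          · refine ⟨fun hd => c1 (Finset.disjoint_union_right.mpr ⟨h, hd⟩),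
              fun hs => c2 (hs.trans Finset.subset_union_right),
              fun hs => hAS.1 (h.symm.mono_right hs)⟩
      have g1 := ih (A ∩ S) ⟨hine, hir, q1⟩ (by omega)
      have g2 := ih (A ∪ S) ⟨hune, hur, q2⟩ (by omega)
      have g3 := hzM A hA
      linarith
  apply h4
  rintro (e | ⟨S, hS, hr⟩) hk
  · simp only [L, b, Sum.elim_inl, LinearMap.proj_apply] at hk ⊢
    exact hz' e hk
  · simp only [L, b, Sum.elim_inr] at hk ⊢
    exact hall _ S ⟨hS, hr, hk⟩ le_rfl

end Sparse

section Parity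

set_option linter.unusedSectionVars false

variable {V E : Type*} [Fintype V] [DecidableEq V] [Fintype E] [DecidableEq E]

/-- Indicator of a point, modulo two. -/
def pt (a : V) : V → ZMod 2 := fun v => if a = v then 1 else 0

lemma add_self_two (f : V → ZMod 2) : f + f = 0 := by
  funext v
  exact CharTwo.add_self_eq_zero _

lemma zmod2_cases (x : ZMod 2) : x = 0 ∨ x = 1 := by
  revert x; decide

lemma pt_self (a : V) : pt a a = 1 := by simp [pt]

lemma pt_ne {a b : V} (h : a ≠ b) : pt a b = 0 := by simp [pt, h]

/-- Mod-two boundary of a set of edges. -/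
def bd (s t : E → V) (X : Finset E) : V → ZMod 2 := ∑ e ∈ X, (pt (s e) + pt (t e))

/-- Edges of the multigraph crossing `U`. -/
def cutE (s t : E → V) (U : Finset V) : Finset E :=
  Finset.univ.filter (fun e => ¬ (s e ∈ U ↔ t e ∈ U))

/-- The edge `e` joins `u` and `v`. -/
def Jn (s t : E → V) (e : E) (u v : V) : Prop := (s e = u ∧ t e = v) ∨ (s e = v ∧ t e = u)

variable (s t : E → V)

lemma Jn.bd_eq {s t : E → V} {e : E} {u v : V} (h : Jn s t e u v) :
    pt (s e) + pt (t e) = pt u + pt v := by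
  rcases h with ⟨rfl, rfl⟩ | ⟨rfl, rfl⟩
  · rfl
  · rw [add_comm]

lemma Jn.mem_cut {s t : E → V} {e : E} {u v : V} (h : Jn s t e u v) (hne : u ≠ v) :
    e ∈ cutE s t {u} := by
  rcases h with ⟨rfl, rfl⟩ | ⟨rfl, rfl⟩ <;> simp [cutE, hne, hne.symm]

lemma Jn.notMem_cut {s t : E → V} {e : E} {u v b : V} (h : Jn s t e u v) (h1 : u ≠ b)
    (h2 : v ≠ b) : e ∉ cutE s t {b} := by
  rcases h with ⟨rfl, rfl⟩ | ⟨rfl, rfl⟩ <;> simp [cutE, h1, h2]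

lemma Jn.symm {s t : E → V} {e : E} {u v : V} (h : Jn s t e u v) : Jn s t e v u := by
  rcases h with h | h
  · exact Or.inr h
  · exact Or.inl h

lemma exists_Jn {e : E} {b : V} (h : e ∈ cutE s t {b}) : ∃ c, c ≠ b ∧ Jn s t e b c := by
  simp only [cutE, Finset.mem_filter, Finset.mem_univ, true_and, Finset.mem_singleton] at h
  by_cases h1 : s e = b
  · exact ⟨t e, by tauto, Or.inl ⟨h1, rfl⟩⟩
  · exact ⟨s e, h1, Or.inr ⟨rfl, by tauto⟩⟩

lemma bd_empty : bd s t ∅ = 0 := by simp [bd]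

lemma bd_singleton (e : E) : bd s t {e} = pt (s e) + pt (t e) := by simp [bd]

lemma bd_union {X Y : Finset E} (h : Disjoint X Y) : bd s t (X ∪ Y) = bd s t X + bd s t Y := by
  simp [bd, Finset.sum_union h]

lemma bd_insert {X : Finset E} {e : E} (h : e ∉ X) :
    bd s t (insert e X) = pt (s e) + pt (t e) + bd s t X := by
  simp [bd, Finset.sum_insert h]

lemma bd_sdiff {X Y : Finset E} (h : Y ⊆ X) : bd s t (X \ Y) = bd s t X + bd s t Y := by
  have h1 : bd s t (X \ Y) + bd s t Y = bd s t X := Finset.sum_sdiff h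
  rw [← h1, add_assoc, add_self_two, add_zero]

lemma bd_erase {X : Finset E} {e : E} (h : e ∈ X) :
    bd s t (X.erase e) = bd s t X + (pt (s e) + pt (t e)) := by
  rw [← Finset.sdiff_singleton_eq_erase, bd_sdiff s t (by simpa using h), bd_singleton]

lemma bd_symmDiff (X Y : Finset E) : bd s t (symmDiff X Y) = bd s t X + bd s t Y := by
  have h1 : bd s t X = bd s t (X \ Y) + bd s t (X ∩ Y) := by
    rw [← bd_union _ _ (Finset.disjoint_sdiff_inter X Y), Finset.sdiff_union_inter]
  have h2 : bd s t Y = bd s t (Y \ X) + bd s t (X ∩ Y) := by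
    rw [Finset.inter_comm, ← bd_union _ _ (Finset.disjoint_sdiff_inter Y X),
      Finset.sdiff_union_inter]
  have h3 : bd s t (symmDiff X Y) = bd s t (X \ Y) + bd s t (Y \ X) := by
    rw [← bd_union _ _ disjoint_sdiff_sdiff]; rfl
  rw [h1, h2, h3]
  have := add_self_two (bd s t (X ∩ Y))
  linear_combination (exp := 1) -this

lemma bd_cut (X : Finset E) (U : Finset V) :
    ∑ v ∈ U, bd s t X v = ((X ∩ cutE s t U).card : ZMod 2) := by
  have h1 : ∀ v, bd s t X v = ∑ e ∈ X, (pt (s e) v + pt (t e) v) := by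
    intro v; simp [bd]
  simp only [h1]
  rw [Finset.sum_comm, Finset.card_eq_sum_ones, Nat.cast_sum, ← Finset.filter_mem_eq_inter,
    Finset.sum_filter]
  apply Finset.sum_congr rfl
  intro e _
  rw [Finset.sum_add_distrib]
  simp only [pt, Finset.sum_ite_eq, cutE, Finset.mem_filter, Finset.mem_univ, true_and]
  by_cases h1 : s e ∈ U <;> by_cases h2 : t e ∈ U <;> simp [h1, h2]
  exact CharTwo.add_self_eq_zero _

lemma bd_vertex (X : Finset E) (b : V) :
    bd s t X b = ((X ∩ cutE s t {b}).card : ZMod 2) := by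
  rw [← bd_cut]; simp

lemma exists_edge {X : Finset E} {u : V} (h : bd s t X u ≠ 0) :
    ∃ e ∈ X, ∃ u', u' ≠ u ∧ Jn s t e u u' := by
  rw [bd_vertex] at h
  have : (X ∩ cutE s t {u}).Nonempty := by
    rw [Finset.nonempty_iff_ne_empty]
    intro h0
    rw [h0] at h
    simp at h
  obtain ⟨e, he⟩ := this
  rw [Finset.mem_inter] at he
  obtain ⟨c, hc, hj⟩ := exists_Jn s t he.2
  exact ⟨e, he.1, c, hc, hj⟩

lemma join_shift {X : Finset E} {e : E} {a a' b : V} (he : e ∈ X) (hj : Jn s t e a a')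
    (h : bd s t X = pt a + pt b) : bd s t (X.erase e) = pt a' + pt b := by
  rw [bd_erase s t he, h, hj.bd_eq]
  have := add_self_two (pt a)
  linear_combination this

lemma join_cons {Y : Finset E} {e : E} {a a' b : V} (he : e ∉ Y) (hj : Jn s t e a a')
    (h : bd s t Y = pt a' + pt b) : bd s t (insert e Y) = pt a + pt b := by
  rw [bd_insert s t he, h, hj.bd_eq]
  have := add_self_two (pt a')
  linear_combination this

lemma pt_add_ne {a b : V} (h : a ≠ b) : (pt a + pt b) a ≠ 0 := by
  simp [pt_self, pt_ne h.symm]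

/-- A sub-join using exactly one edge at its end. -/
lemma one_edge (b : V) : ∀ (n : ℕ) (X : Finset E) (a : V), X.card ≤ n → a ≠ b →
    bd s t X = pt a + pt b →
    ∃ Y ⊆ X, bd s t Y = pt a + pt b ∧ (Y ∩ cutE s t {b}).card = 1 := by
  intro n
  induction n with
  | zero =>
    intro X a hn hab h
    have : X = ∅ := by simpa using hn
    subst this
    have := congrFun h a
    rw [bd_empty] at this
    exact absurd this.symm (pt_add_ne hab)
  | succ n ih =>
    intro X a hn hab h
    obtain ⟨e, he, a', ha', hj⟩ := exists_edge s t (X := X) (u := a) (by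
      rw [h]; exact pt_add_ne hab)
    by_cases hb : a' = b
    · subst hb
      refine ⟨{e}, by simpa using he, by rw [bd_singleton, hj.bd_eq], ?_⟩
      rw [Finset.singleton_inter_of_mem (hj.symm.mem_cut hab.symm)]
      simp
    · have h' := join_shift s t he hj h
      obtain ⟨Y, hY, hY1, hY2⟩ := ih (X.erase e) a' (by
        rw [Finset.card_erase_of_mem he]; omega) hb h'
      have heY : e ∉ Y := fun h => by simpa using hY h
      refine ⟨insert e Y, ?_, join_cons s t heY hj hY1, ?_⟩
      · intro f hf
        rcases Finset.mem_insert.mp hf with rfl | hf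
        · exact he
        · exact Finset.mem_of_mem_erase (hY hf)
      · rw [Finset.insert_inter_of_notMem (hj.notMem_cut hab hb)]
        exact hY2

/-- From every odd vertex there is a sub-join to another odd vertex. -/
lemma sub_join : ∀ (n : ℕ) (X : Finset E) (b : V), X.card ≤ n → bd s t X b = 1 →
    ∃ u, u ≠ b ∧ bd s t X u = 1 ∧ ∃ Y ⊆ X, bd s t Y = pt b + pt u := by
  intro n
  induction n with
  | zero =>
    intro X b hn h
    have : X = ∅ := by simpa using hn
    subst this
    rw [bd_empty] at h
    simp at h
  | succ n ih =>
    intro X b hn h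
    obtain ⟨e, he, b', hb', hj⟩ := exists_edge s t (X := X) (u := b) (by rw [h]; simp)
    rcases zmod2_cases (bd s t X b') with h0 | h1
    · have hX : bd s t (X.erase e) = bd s t X + (pt b + pt b') := by
        rw [bd_erase s t he, hj.bd_eq]
      obtain ⟨u, hu, hu1, Y, hY, hYb⟩ := ih (X.erase e) b' (by
        rw [Finset.card_erase_of_mem he]; omega) (by
        rw [hX]; simp [h0, pt_self, pt_ne hb'.symm])
      have hub : u ≠ b := by
        rintro rfl
        rw [hX] at hu1
        simp only [Pi.add_apply, h, pt_self, pt_ne hb'] at hu1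
        revert hu1; decide
      refine ⟨u, hub, ?_, insert e Y, ?_, ?_⟩
      · rw [hX] at hu1
        simpa [pt_ne hub.symm, pt_ne hu.symm] using hu1
      · intro f hf
        rcases Finset.mem_insert.mp hf with rfl | hf
        · exact he
        · exact Finset.mem_of_mem_erase (hY hf)
      · exact join_cons s t (fun h => by simpa using hY h) hj hYb
    · exact ⟨b', hb', h1, {e}, by simpa using he, by rw [bd_singleton, hj.bd_eq]⟩

lemma via_join (b : V) : ∀ (n : ℕ) (X : Finset E) (u u' : V), X.card ≤ n → u ≠ u' → u' ≠ b →
    bd s t X = pt u + pt u' →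
    ∃ Y ⊆ X, bd s t Y = pt u + pt b ∨
      (bd s t Y = pt u + pt u' ∧ Y ∩ cutE s t {b} = ∅) := by
  intro n
  induction n with
  | zero =>
    intro X a b hn hab _ h
    have : X = ∅ := by simpa using hn
    subst this
    have := congrFun h a
    rw [bd_empty] at this
    exact absurd this.symm (pt_add_ne hab)
  | succ n ih =>
    intro X u u' hn huu hub h
    by_cases hb : u = b
    · subst hb
      exact ⟨∅, by simp, Or.inl (by rw [bd_empty, add_self_two])⟩
    obtain ⟨e, he, u1, hu1, hj⟩ := exists_edge s t (X := X) (u := u) (by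
      rw [h]; exact pt_add_ne huu)
    by_cases h1b : u1 = b
    · subst h1b
      exact ⟨{e}, by simpa using he, Or.inl (by rw [bd_singleton, hj.bd_eq])⟩
    by_cases h1u : u1 = u'
    · subst h1u
      refine ⟨{e}, by simpa using he, Or.inr ⟨by rw [bd_singleton, hj.bd_eq], ?_⟩⟩
      rw [Finset.singleton_inter_of_notMem (hj.notMem_cut hb h1b)]
    have h' := join_shift s t he hj h
    obtain ⟨Y, hY, hY1⟩ := ih (X.erase e) u1 u' (by
      rw [Finset.card_erase_of_mem he]; omega) h1u hub h'
    have heY : e ∉ Y := fun h => by simpa using hY h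
    refine ⟨insert e Y, ?_, ?_⟩
    · intro f hf
      rcases Finset.mem_insert.mp hf with rfl | hf
      · exact he
      · exact Finset.mem_of_mem_erase (hY hf)
    · rcases hY1 with h1 | ⟨h1, h2⟩
      · exact Or.inl (join_cons s t heY hj h1)
      · refine Or.inr ⟨join_cons s t heY hj h1, ?_⟩
        rw [Finset.insert_inter_of_notMem (hj.notMem_cut hb h1b)]
        exact h2

end Parity

section TJoin

set_option linter.unusedSectionVars false

variable {V E : Type*} [Fintype V] [DecidableEq V] [Fintype E] [DecidableEq E]

/-- Lemma of Sebo on conservative weightings. -/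
lemma conservative_step (s t : E → V) (c : E → ℤ) (hc0 : ∀ e, s e ≠ t e → c e ≠ 0)
    (hcons : ∀ Z, bd s t Z = 0 → 0 ≤ ∑ e ∈ Z, c e)
    (heven : ∀ Z, bd s t Z = 0 → Even (∑ e ∈ Z, c e))
    (hneg : ∃ e, s e ≠ t e ∧ c e < 0) :
    ∃ b, ((cutE s t {b}).filter (fun e => c e < 0)).card = 1 ∧
      ∀ Z, bd s t Z = 0 → 0 ≤ ∑ e ∈ Z, (c e - if e ∈ cutE s t {b} then
        (if c e < 0 then -1 else 1) else 0) := by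
  classical
  obtain ⟨e0, he0, hce0⟩ := hneg
  obtain ⟨⟨a, b, P⟩, hPm, hmin⟩ := Finset.exists_min_image
    (Finset.univ.filter (fun q : V × V × Finset E => bd s t q.2.2 = pt q.1 + pt q.2.1))
    (fun q => ((Fintype.card E : ℤ) + 1) * (∑ e ∈ q.2.2, c e) + q.2.2.card)
    ⟨(s e0, t e0, {e0}), by simp [bd_singleton]⟩
  simp only [Finset.mem_filter, Finset.mem_univ, true_and, Prod.forall] at hPm hmin
  have key : ∀ a' b' Q, bd s t Q = pt a' + pt b' → (∑ e ∈ P, c e) < (∑ e ∈ Q, c e) ∨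
      ((∑ e ∈ P, c e) = (∑ e ∈ Q, c e) ∧ P.card ≤ Q.card) := by
    intro a' b' Q hQ
    have h1 := hmin a' b' Q hQ
    have h2 : (Q.card : ℤ) ≤ Fintype.card E := by exact_mod_cast Finset.card_le_univ Q
    rcases lt_trichotomy (∑ e ∈ P, c e) (∑ e ∈ Q, c e) with h | h | h
    · exact Or.inl h
    · rw [h] at h1
      exact Or.inr ⟨h, by omega⟩
    · exfalso
      nlinarith [Int.natCast_nonneg (Fintype.card E), Int.natCast_nonneg P.card]
  have key' : ∀ a' b' Q, bd s t Q = pt a' + pt b' → (∑ e ∈ P, c e) ≤ (∑ e ∈ Q, c e) := by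
    intro a' b' Q hQ
    rcases key a' b' Q hQ with h | h
    · exact h.le
    · exact h.1.le
  have hm : (∑ e ∈ P, c e) < 0 := by
    have := key' (s e0) (t e0) {e0} (by simp [bd_singleton])
    simp at this
    omega
  have hab : a ≠ b := by
    rintro rfl
    rw [add_self_two] at hPm
    have := hcons P hPm
    omega
  -- a subset join equals P
  have subP : ∀ Y ⊆ P, bd s t Y = pt a + pt b → Y = P := by
    intro Y hY h
    have h1 := hcons (P \ Y) (by rw [bd_sdiff s t hY, hPm, h, add_self_two])
    have h2 := Finset.sum_sdiff (f := c) hY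
    rcases key a b Y h with h3 | h3
    · omega
    · exact Finset.eq_of_subset_of_card_le hY h3.2
  have hnegP : ∀ f ∈ cutE s t {b}, c f < 0 → f ∈ P := by
    intro f hf hcf
    by_contra hfP
    obtain ⟨b', hb', hj⟩ := exists_Jn s t hf
    have := key' a b' (insert f P) (by
      rw [bd_insert s t hfP, hPm, hj.bd_eq]
      have := add_self_two (pt b)
      linear_combination this)
    rw [Finset.sum_insert hfP] at this
    omega
  have hcD : ∀ f ∈ cutE s t {b}, c f ≠ 0 := by
    intro f hf
    apply hc0
    intro h
    simp [cutE, h] at hf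
  have hPneg : ∀ f ∈ cutE s t {b}, f ∈ P → c f < 0 := by
    intro f hf hfP
    obtain ⟨b', hb', hj⟩ := exists_Jn s t hf
    have := key' a b' (P.erase f) (by
      rw [bd_erase s t hfP, hPm, hj.bd_eq]
      have := add_self_two (pt b)
      linear_combination this)
    have h2 := Finset.add_sum_erase P c hfP
    have := hcD f hf
    omega
  have hPD : (P ∩ cutE s t {b}).card = 1 := by
    obtain ⟨Y, hY, hY1, hY2⟩ := one_edge s t b _ P a le_rfl hab hPm
    rwa [subP Y hY hY1] at hY2
  refine ⟨b, ?_, ?_⟩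
  · rw [← hPD]
    congr 1
    ext f
    simp only [Finset.mem_filter, Finset.mem_inter]
    exact ⟨fun h => ⟨hnegP f h.1 h.2, h.1⟩, fun h => ⟨h.2, hPneg f h.2 h.1⟩⟩
  set D := cutE s t {b} with hD
  set c' : E → ℤ := fun e => c e - if e ∈ D then (if c e < 0 then -1 else 1) else 0 with hc'
  by_contra hcon
  push Not at hcon
  obtain ⟨Z1, hZ1, hZ1'⟩ := hcon
  obtain ⟨Z, hZm, hZmin⟩ := Finset.exists_min_image
    (Finset.univ.filter (fun Z => bd s t Z = 0 ∧ ∑ e ∈ Z, c' e < 0)) Finset.card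
    ⟨Z1, by simp only [Finset.mem_filter, Finset.mem_univ, true_and]; exact ⟨hZ1, hZ1'⟩⟩
  simp only [Finset.mem_filter, Finset.mem_univ, true_and, and_imp] at hZm hZmin
  obtain ⟨hZ0, hZneg⟩ := hZm
  have hsubZ : ∀ Y ⊆ Z, Y.Nonempty → bd s t Y = 0 → Y = Z := by
    intro Y hY hne h0
    by_contra hYZ
    have hss : Y ⊂ Z := Finset.ssubset_iff_subset_ne.mpr ⟨hY, hYZ⟩
    have h1 := Finset.card_lt_card hss
    have h2 := Finset.card_sdiff_of_subset hY
    have h3 := Finset.card_pos.mpr hne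
    have h4 : 0 ≤ ∑ e ∈ Y, c' e := by
      by_contra h
      have := hZmin Y h0 (by omega)
      omega
    have h5 : 0 ≤ ∑ e ∈ Z \ Y, c' e := by
      by_contra h
      have := hZmin (Z \ Y) (by rw [bd_sdiff s t hY, h0, hZ0, add_zero]) (by omega)
      omega
    have h6 := Finset.sum_sdiff (f := c') hY
    omega
  have hsum : ∑ e ∈ Z, c' e = ∑ e ∈ Z, c e - ∑ e ∈ Z ∩ D, (if c e < 0 then (-1 : ℤ) else 1) := by
    rw [hc', Finset.sum_sub_distrib, ← Finset.filter_mem_eq_inter, Finset.sum_filter]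
  have hZc := hcons Z hZ0
  have hne : (Z ∩ D).Nonempty := by
    rw [Finset.nonempty_iff_ne_empty]
    intro h
    rw [h] at hsum
    simp at hsum
    omega
  obtain ⟨e, he⟩ := hne
  obtain ⟨heZ, heD⟩ := Finset.mem_inter.mp he
  obtain ⟨z0, hz0, hj⟩ := exists_Jn s t heD
  have hZe : bd s t (Z.erase e) = pt z0 + pt b := by
    rw [bd_erase s t heZ, hZ0, hj.bd_eq, zero_add, add_comm]
  obtain ⟨Y, hY, hY1, hY2⟩ := one_edge s t b _ (Z.erase e) z0 le_rfl hz0 hZe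
  have heY : e ∉ Y := fun h => by simpa using hY h
  have hYZ : insert e Y = Z := by
    apply hsubZ
    · intro f hf
      rcases Finset.mem_insert.mp hf with rfl | hf
      · exact heZ
      · exact Finset.mem_of_mem_erase (hY hf)
    · exact ⟨e, by simp⟩
    · rw [bd_insert s t heY, hY1, hj.bd_eq, add_comm (pt z0), add_self_two]
  have hZDY : Z ∩ D = insert e (Y ∩ D) := by
    rw [← hYZ, Finset.insert_inter_of_mem heD]
  obtain ⟨e', he'⟩ := Finset.card_eq_one.mp hY2
  have hee' : e ≠ e' := by
    rintro rfl
    have : e ∈ Y ∩ D := by rw [he']; simp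
    exact heY (Finset.mem_inter.mp this).1
  have hZD : Z ∩ D = {e, e'} := by rw [hZDY, he']
  have he'ZD : e' ∈ Z ∩ D := by rw [hZD]; simp
  rw [hZD, Finset.sum_pair hee'] at hsum
  have hboth : ¬ c e < 0 ∧ ¬ c e' < 0 ∧ ∑ e ∈ Z, c e = 0 := by
    have := heven Z hZ0
    obtain ⟨k, hk⟩ := this
    split_ifs at hsum with h1 h2 h2
    · omega
    · omega
    · omega
    · exact ⟨h1, h2, by omega⟩
  obtain ⟨hne1, hne2, hZc0⟩ := hboth
  have hPZD : ∀ f ∈ P, f ∈ Z → f ∉ D := by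
    intro f hfP hfZ hfD
    have h1 : f ∈ Z ∩ D := Finset.mem_inter.mpr ⟨hfZ, hfD⟩
    have h2 := hPneg f hfD hfP
    rw [hZD] at h1
    simp only [Finset.mem_insert, Finset.mem_singleton] at h1
    rcases h1 with rfl | rfl
    · exact hne1 h2
    · exact hne2 h2
  have hAD : (P \ Z) ∩ D = P ∩ D := by
    ext f
    simp only [Finset.mem_inter, Finset.mem_sdiff]
    constructor
    · exact fun h => ⟨h.1.1, h.2⟩
    · exact fun h => ⟨⟨h.1, fun hz => hPZD f h.1 hz h.2⟩, h.2⟩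
  have hAb : bd s t (P \ Z) b = 1 := by
    rw [bd_vertex, ← hD, hAD, hPD]; simp
  obtain ⟨u, hub, hu1, Y', hY', hY'b⟩ := sub_join s t _ (P \ Z) b le_rfl hAb
  have hY'P : Y' ⊆ P := hY'.trans Finset.sdiff_subset
  have hY'Z : Disjoint Y' Z := Finset.disjoint_of_subset_left hY' Finset.sdiff_disjoint
  by_cases hua : u = a
  · subst hua
    have h1 := subP Y' hY'P (by rw [hY'b, add_comm])
    rw [h1] at hY'Z
    have h2 := key' u z0 ((P ∪ Z).erase e) (by
      rw [bd_erase s t (by simp [heZ]), bd_union s t hY'Z, hPm, hZ0, hj.bd_eq]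
      have := add_self_two (pt b)
      linear_combination this)
    have h3 := Finset.add_sum_erase (P ∪ Z) c (a := e) (by simp [heZ])
    rw [Finset.sum_union hY'Z] at h3
    have := hcD e heD
    omega
  · have hne3 : Y'.Nonempty := by
      rw [Finset.nonempty_iff_ne_empty]
      rintro rfl
      rw [bd_empty] at hY'b
      exact pt_add_ne hub.symm (congrFun hY'b b).symm
    have h4 := key a u (P \ Y') (by
      rw [bd_sdiff s t hY'P, hPm, hY'b]
      have := add_self_two (pt b)
      linear_combination this)
    have h5 := Finset.sum_sdiff (f := c) hY'P
    have h6 := Finset.card_sdiff_of_subset hY'P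
    have h6' := Finset.card_le_card hY'P
    have h7 := Finset.card_pos.mpr hne3
    have h8 : ∑ e ∈ Y', c e < 0 := by
      rcases h4 with h4 | h4 <;> omega
    have hPu : bd s t P u = 0 := by
      rw [hPm]; simp [pt_ne (Ne.symm hua), pt_ne hub.symm]
    have hPZu : bd s t (P ∩ Z) u = 1 := by
      have : bd s t P = bd s t (P \ Z) + bd s t (P ∩ Z) := by
        rw [← bd_union _ _ (Finset.disjoint_sdiff_inter P Z), Finset.sdiff_union_inter]
      have := congrFun this u
      rw [Pi.add_apply, hPu, hu1] at this
      rcases zmod2_cases (bd s t (P ∩ Z) u) with h | h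
      · rw [h] at this; simp at this
      · exact h
    obtain ⟨h, hh, u', hu', hjh⟩ := exists_edge s t (X := P ∩ Z) (u := u) (by rw [hPZu]; simp)
    obtain ⟨hhP, hhZ⟩ := Finset.mem_inter.mp hh
    have hu'b : u' ≠ b := by
      rintro rfl
      exact hPZD h hhP hhZ (hjh.symm.mem_cut hu')
    have hZh : bd s t (Z.erase h) = pt u + pt u' := by
      rw [bd_erase s t hhZ, hZ0, hjh.bd_eq, zero_add]
    obtain ⟨C, hC, hC'⟩ := via_join s t b _ (Z.erase h) u u' le_rfl hu'.symm hu'b hZh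
    have hCZ : C ⊆ Z := hC.trans (Finset.erase_subset _ _)
    have hhC : h ∉ C := fun h => by simpa using hC h
    rcases hC' with hC' | ⟨hC1, hC2⟩
    · have g1 := hcons (Y' ∪ C) (by
        rw [bd_union s t (Finset.disjoint_of_subset_right hCZ hY'Z), hY'b, hC',
          add_comm (pt b), add_self_two])
      have hd2 : Disjoint Y' (Z \ C) := Finset.disjoint_of_subset_right Finset.sdiff_subset hY'Z
      have g2 := hcons (Y' ∪ (Z \ C)) (by
        rw [bd_union s t hd2, hY'b, bd_sdiff s t hCZ, hC', hZ0, zero_add,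
          add_comm (pt b), add_self_two])
      rw [Finset.sum_union (Finset.disjoint_of_subset_right hCZ hY'Z)] at g1
      rw [Finset.sum_union hd2] at g2
      have g3 := Finset.sum_sdiff (f := c) hCZ
      omega
    · have g := hsubZ (insert h C) (by
        intro f hf
        rcases Finset.mem_insert.mp hf with rfl | hf
        · exact hhZ
        · exact hCZ hf) ⟨h, by simp⟩ (by
        rw [bd_insert s t hhC, hjh.bd_eq, hC1, add_self_two])
      rw [← g] at heZ
      rcases Finset.mem_insert.mp heZ with rfl | h9
      · exact hPZD e hhP (by rw [← g]; simp) heD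
      · have : e ∈ C ∩ cutE s t {b} := Finset.mem_inter.mpr ⟨h9, heD⟩
        rw [hC2] at this
        simp at this

end TJoin

section TJoin2

set_option linter.unusedSectionVars false

variable {V E : Type*} [Fintype V] [DecidableEq V] [Fintype E] [DecidableEq E]

lemma sum_symm (J K : Finset E) (f : E → ℤ) :
    ∑ e ∈ symmDiff J K, (if e ∈ J then - f e else f e) = ∑ e ∈ K, f e - ∑ e ∈ J, f e := by
  have h3 : ∑ e ∈ symmDiff J K, (if e ∈ J then - f e else f e) =
      ∑ e ∈ J \ K, (if e ∈ J then - f e else f e) + ∑ e ∈ K \ J, (if e ∈ J then - f e else f e) := by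
    rw [← Finset.sum_union disjoint_sdiff_sdiff]; rfl
  have h4 : ∑ e ∈ J \ K, (if e ∈ J then - f e else f e) = - ∑ e ∈ J \ K, f e := by
    rw [← Finset.sum_neg_distrib]
    apply Finset.sum_congr rfl
    intro e he
    simp [(Finset.mem_sdiff.mp he).1]
  have h5 : ∑ e ∈ K \ J, (if e ∈ J then - f e else f e) = ∑ e ∈ K \ J, f e := by
    apply Finset.sum_congr rfl
    intro e he
    simp [(Finset.mem_sdiff.mp he).2]
  have h1 : ∑ e ∈ J, f e = ∑ e ∈ J \ K, f e + ∑ e ∈ J ∩ K, f e := by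
    rw [← Finset.sum_union (Finset.disjoint_sdiff_inter J K), Finset.sdiff_union_inter]
  have h2 : ∑ e ∈ K, f e = ∑ e ∈ K \ J, f e + ∑ e ∈ J ∩ K, f e := by
    rw [Finset.inter_comm, ← Finset.sum_union (Finset.disjoint_sdiff_inter K J),
      Finset.sdiff_union_inter]
  rw [h3, h4, h5, h1, h2]
  ring

lemma sum_symm_zero (X : Finset E) (f : E) (w : E → ℕ) (hw : w f = 0) :
    ∑ e ∈ symmDiff X {f}, w e = ∑ e ∈ X, w e := by
  have h := sum_symm X (symmDiff X {f}) (fun e => (w e : ℤ))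
  rw [symmDiff_symmDiff_cancel_left] at h
  simp [hw] at h
  have : (∑ e ∈ symmDiff X {f}, (w e : ℤ)) = ∑ e ∈ X, (w e : ℤ) := by linarith
  exact_mod_cast this

/-- Push-forward of parities along a map. -/
def push {W : Type*} [DecidableEq W] (φ : V → W) (D : V → ZMod 2) : W → ZMod 2 :=
  fun v => ∑ u ∈ Finset.univ.filter (fun u => φ u = v), D u

lemma push_add {W : Type*} [DecidableEq W] (φ : V → W) (D D' : V → ZMod 2) :
    push φ (D + D') = push φ D + push φ D' := by
  funext v
  simp [push, Finset.sum_add_distrib]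

lemma push_zero {W : Type*} [DecidableEq W] (φ : V → W) :
    push φ (0 : V → ZMod 2) = 0 := by
  funext v
  simp [push]

lemma push_sum {W ι : Type*} [DecidableEq W] (φ : V → W) (S : Finset ι) (D : ι → V → ZMod 2) :
    push φ (∑ i ∈ S, D i) = ∑ i ∈ S, push φ (D i) := by
  classical
  induction S using Finset.induction_on with
  | empty => simp [push_zero]
  | insert a S ha ih => rw [Finset.sum_insert ha, Finset.sum_insert ha, push_add, ih]

lemma push_pt {W : Type*} [DecidableEq W] (φ : V → W) (a : V) :
    push φ (pt a) = pt (φ a) := by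
  funext v
  simp only [push, pt, Finset.sum_ite_eq, Finset.mem_filter, Finset.mem_univ, true_and]

lemma push_bd {W : Type*} [DecidableEq W] (φ : V → W) (s t : E → V) (X : Finset E) :
    push φ (bd s t X) = bd (φ ∘ s) (φ ∘ t) X := by
  rw [bd, push_sum]
  simp only [push_add, push_pt]
  rfl

lemma push_cut {W : Type*} [DecidableEq W] (φ : V → W) (D : V → ZMod 2) (U : Finset W) :
    ∑ v ∈ U, push φ D v = ∑ u ∈ Finset.univ.filter (fun u => φ u ∈ U), D u := by
  unfold push
  rw [Finset.sum_sigma']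
  apply Finset.sum_nbij' (fun x => x.2) (fun u => ⟨φ u, u⟩)
  · rintro ⟨v, u⟩ h
    simp only [Finset.mem_sigma, Finset.mem_filter, Finset.mem_univ, true_and] at h ⊢
    rw [h.2]; exact h.1
  · intro u h
    simpa using h
  · rintro ⟨v, u⟩ h
    simp only [Finset.mem_sigma, Finset.mem_filter, Finset.mem_univ, true_and] at h ⊢
    obtain ⟨h1, rfl⟩ := h
    rfl
  · intro u h; rfl
  · intro x h; rfl

lemma push_merge {p q : V} (hpq : p ≠ q) (D : V → ZMod 2)
    (h : push (Function.update id q p) D = 0) : D = 0 ∨ D = pt p + pt q := by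
  have h1 : ∀ u, u ≠ p → u ≠ q → D u = 0 := by
    intro u hp hq
    have h2 := congrFun h u
    have : (Finset.univ.filter (fun u' => Function.update id q p u' = u)) = {u} := by
      ext x
      simp only [Finset.mem_filter, Finset.mem_univ, true_and, Finset.mem_singleton,
        Function.update_apply, id]
      split_ifs with hx
      · subst hx
        exact ⟨fun h => absurd h.symm hp, fun h => absurd h.symm hq⟩
      · rfl
    rw [push, this] at h2
    simpa using h2
  have h2 : D p + D q = 0 := by
    have h2 := congrFun h p
    have : (Finset.univ.filter (fun u' => Function.update id q p u' = p)) = {p, q} := by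
      ext x
      simp only [Finset.mem_filter, Finset.mem_univ, true_and, Finset.mem_singleton,
        Finset.mem_insert, Function.update_apply, id]
      split_ifs with hx <;> simp [hx]
    rw [push, this, Finset.sum_pair hpq] at h2
    exact h2
  rcases zmod2_cases (D p) with hp | hp
  · left
    rw [hp, zero_add] at h2
    funext u
    by_cases hup : u = p
    · rw [hup, hp]; rfl
    by_cases huq : u = q
    · rw [huq, h2]; rfl
    exact h1 u hup huq
  · right
    have hq : D q = 1 := by
      rcases zmod2_cases (D q) with hq | hq
      · rw [hp, hq] at h2; simp at h2
      · exact hq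
    funext u
    by_cases hup : u = p
    · rw [hup, hp]; simp [pt, hpq.symm]
    by_cases huq : u = q
    · rw [huq, hq]; simp [pt, hpq]
    rw [h1 u hup huq]
    simp [pt, Ne.symm hup, Ne.symm huq]

lemma cut_comp {W : Type*} [Fintype W] [DecidableEq W] (φ : V → W) (s t : E → V) (U : Finset W) :
    cutE (φ ∘ s) (φ ∘ t) U = cutE s t (Finset.univ.filter (fun u => φ u ∈ U)) := by
  ext e
  simp [cutE]

/-- Fractional domination of minimum T-joins. -/
lemma tjoin_aux : ∀ (n : ℕ) (s t : E → V) (w y : E → ℕ) (T : V → ZMod 2),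
    ∑ e, w e + (Finset.univ.filter (fun e => s e ≠ t e)).card ≤ n →
    (∃ J0, bd s t J0 = T) → (∀ Z, bd s t Z = 0 → Even (∑ e ∈ Z, w e)) →
    (∀ U : Finset V, ∑ v ∈ U, T v = 1 → 3 ≤ ∑ e ∈ cutE s t U, y e) →
    ∃ J, bd s t J = T ∧ 3 * ∑ e ∈ J, w e ≤ ∑ e, y e * w e := by
  classical
  intro n
  induction n with
  | zero =>
    intro s t w y T hn ⟨J, hJ⟩ _ _
    refine ⟨J, hJ, ?_⟩
    have h1 : ∑ e, w e = 0 := by omega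
    have h2 : ∑ e ∈ J, w e ≤ ∑ e, w e := Finset.sum_le_sum_of_subset (Finset.subset_univ _)
    have : ∑ e ∈ J, w e = 0 := by omega
    rw [this]; simp
  | succ n ih =>
    intro s t w y T hn hex heven hcut
    by_cases h0 : ∃ f, s f ≠ t f ∧ w f = 0
    · obtain ⟨f, hf, hwf⟩ := h0
      set φ : V → V := Function.update id (t f) (s f) with hφ
      have lift : ∀ (X : Finset E) (T : V → ZMod 2), bd (φ ∘ s) (φ ∘ t) X = push φ T →
          ∃ X', bd s t X' = T ∧ ∑ e ∈ X', w e = ∑ e ∈ X, w e := by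
        intro X T hX
        have h1 : push φ (bd s t X + T) = 0 := by
          rw [push_add, push_bd, hX, add_self_two]
        rcases push_merge hf _ h1 with h2 | h2
        · refine ⟨X, ?_, rfl⟩
          have := add_self_two T
          linear_combination h2 - this
        · refine ⟨symmDiff X {f}, ?_, sum_symm_zero X f w hwf⟩
          rw [bd_symmDiff, bd_singleton, ← h2]
          have := add_self_two (bd s t X)
          linear_combination this
      obtain ⟨J, hJ, hJw⟩ := ih (φ ∘ s) (φ ∘ t) w y (push φ T) (by
          have : (Finset.univ.filter (fun e => (φ ∘ s) e ≠ (φ ∘ t) e)).card <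
              (Finset.univ.filter (fun e => s e ≠ t e)).card := by
            apply Finset.card_lt_card
            rw [Finset.ssubset_iff_of_subset]
            · refine ⟨f, by simp [hf], ?_⟩
              simp [hφ, Function.update_apply]
            · intro e he
              simp only [Finset.mem_filter, Finset.mem_univ, true_and, Function.comp] at he ⊢
              intro h
              exact he (by rw [h])
          omega) (by
          obtain ⟨J0, hJ0⟩ := hex
          exact ⟨J0, by rw [← push_bd, hJ0]⟩) (by
          intro Z hZ
          obtain ⟨X', h1, h2⟩ := lift Z 0 (by rw [hZ, push_zero])
          rw [← h2]
          exact heven X' h1) (by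
          intro U hU
          rw [push_cut] at hU
          rw [cut_comp]
          exact hcut _ hU)
      obtain ⟨X', h1, h2⟩ := lift J T hJ
      exact ⟨X', h1, by rw [h2]; exact hJw⟩
    · push Not at h0
      obtain ⟨J0, hJ0⟩ := hex
      obtain ⟨J, hJm, hJmin⟩ := Finset.exists_min_image
        (Finset.univ.filter (fun J => bd s t J = T)) (fun J => ∑ e ∈ J, w e)
        ⟨J0, by simpa using hJ0⟩
      simp only [Finset.mem_filter, Finset.mem_univ, true_and] at hJm hJmin
      by_cases hl : ∃ e ∈ J, s e ≠ t e
      swap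
      · push Not at hl
        refine ⟨∅, ?_, by simp⟩
        rw [bd_empty, ← hJm, bd]
        symm
        apply Finset.sum_eq_zero
        intro e he
        rw [hl e he, add_self_two]
      obtain ⟨e1, he1, he1l⟩ := hl
      set c : E → ℤ := fun e => if e ∈ J then - (w e : ℤ) else w e with hc
      have hcsum : ∀ Z, ∑ e ∈ Z, c e = ∑ e ∈ symmDiff J Z, (w e : ℤ) - ∑ e ∈ J, (w e : ℤ) := by
        intro Z
        rw [← sum_symm, symmDiff_symmDiff_cancel_left]
      obtain ⟨b, hb1, hb2⟩ := conservative_step s t c (by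
          intro e he
          have := h0 e he
          simp only [hc]
          split_ifs <;> omega) (by
          intro Z hZ
          rw [hcsum]
          have := hJmin (symmDiff J Z) (by rw [bd_symmDiff, hJm, hZ, add_zero])
          have : (∑ e ∈ J, (w e : ℤ)) ≤ ∑ e ∈ symmDiff J Z, (w e : ℤ) := by exact_mod_cast this
          omega) (by
          intro Z hZ
          have h1 := heven Z hZ
          have h2 : ∑ e ∈ Z, c e = ((∑ e ∈ Z, w e : ℕ) : ℤ) -
              2 * ∑ e ∈ Z, (if e ∈ J then (w e : ℤ) else 0) := by
            push_cast
            rw [Finset.mul_sum, ← Finset.sum_sub_distrib]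
            apply Finset.sum_congr rfl
            intro e _
            simp only [hc]
            split_ifs <;> ring
          rw [h2]
          apply Even.sub
          · exact_mod_cast h1
          · simp) ⟨e1, he1l, by
          have := h0 e1 he1l
          simp only [hc, he1, if_true]
          omega⟩
      set D := cutE s t {b} with hD
      have hDl : ∀ e ∈ D, 1 ≤ w e := by
        intro e he
        have : s e ≠ t e := by
          intro h
          simp [hD, cutE, h] at he
        have := h0 e this
        omega
      have hcJ : ∀ e ∈ D, (c e < 0 ↔ e ∈ J) := by
        intro e he
        have := hDl e he
        simp only [hc]
        split_ifs with h
        · exact ⟨fun _ => h, fun _ => by omega⟩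
        · exact ⟨fun h => by omega, fun h' => absurd h' h⟩
      have hJD : (J ∩ D).card = 1 := by
        rw [← hb1]
        congr 1
        ext e
        simp only [Finset.mem_filter, Finset.mem_inter]
        exact ⟨fun h => ⟨h.2, (hcJ e h.2).mpr h.1⟩, fun h => ⟨(hcJ e h.1).mp h.2, h.1⟩⟩
      set w' : E → ℕ := fun e => if e ∈ D then w e - 1 else w e with hw'
      have hw'1 : ∀ e, w' e + (if e ∈ D then 1 else 0) = w e := by
        intro e
        simp only [hw']
        split_ifs with h
        · have := hDl e h; omega
        · rfl
      have hw's : ∀ X, ∑ e ∈ X, w' e + (X ∩ D).card = ∑ e ∈ X, w e := by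
        intro X
        rw [← Finset.sum_congr rfl (fun e _ => hw'1 e), Finset.sum_add_distrib,
          Finset.card_eq_sum_ones, ← Finset.filter_mem_eq_inter, Finset.sum_filter]
      have hTb : T b = 1 := by
        rw [← hJm, bd_vertex, ← hD, hJD]; simp
      obtain ⟨J', hJ', hJ'w⟩ := ih s t w' y T (by
          have h1 := hw's Finset.univ
          have h2 : (J ∩ D).card ≤ (Finset.univ ∩ D).card :=
            Finset.card_le_card (Finset.inter_subset_inter_right (Finset.subset_univ _))
          omega) ⟨J0, hJ0⟩ (by
          intro Z hZ
          have h1 := hw's Z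
          have h2 := heven Z hZ
          have h3 : Even (Z ∩ D).card := by
            rw [← ZMod.natCast_eq_zero_iff_even, ← bd_vertex, hZ]; rfl
          rw [← h1] at h2
          exact (Nat.even_add.mp h2).mpr h3) hcut
      refine ⟨J, hJm, ?_⟩
      have g1 := hb2 (symmDiff J J') (by rw [bd_symmDiff, hJm, hJ', add_self_two])
      have g2 : ∀ e, (c e - if e ∈ D then (if c e < 0 then -1 else 1) else 0) =
          if e ∈ J then - (w' e : ℤ) else w' e := by
        intro e
        have h1 := hw'1 e
        by_cases he : e ∈ D
        · have h2 := hcJ e he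
          by_cases heJ : e ∈ J
          · simp only [he, if_true, heJ] at h1 h2 ⊢
            rw [if_pos (h2.mpr trivial)]
            simp only [hc, heJ, if_true]
            omega
          · simp only [he, if_true, heJ, iff_false] at h1 h2 ⊢
            rw [if_neg h2]
            simp only [hc, heJ, if_false]
            omega
        · simp only [he, if_false, hc] at h1 ⊢
          rw [← h1]
          simp
      simp only [g2] at g1
      rw [sum_symm] at g1
      have g3 : ∑ e ∈ J, w' e ≤ ∑ e ∈ J', w' e := by
        have : (∑ e ∈ J, (w' e : ℤ)) ≤ ∑ e ∈ J', (w' e : ℤ) := by omega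
        exact_mod_cast this
      have g4 := hw's J
      have g5 := hcut {b} (by simpa using hTb)
      have g6 : ∑ e, y e * w' e + ∑ e ∈ D, y e = ∑ e, y e * w e := by
        rw [← Finset.filter_mem_eq_inter.trans (Finset.univ_inter D), Finset.sum_filter,
          ← Finset.sum_add_distrib]
        apply Finset.sum_congr rfl
        intro e _
        rw [← hw'1 e]
        split_ifs <;> ring
      rw [← hD] at g5
      omega

/-- Version without the parity condition. -/
lemma tjoin (s t : E → V) (w y : E → ℕ) (T : V → ZMod 2) (hex : ∃ J0, bd s t J0 = T)
    (hcut : ∀ U : Finset V, ∑ v ∈ U, T v = 1 → 3 ≤ ∑ e ∈ cutE s t U, y e) :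
    ∃ J, bd s t J = T ∧ 3 * ∑ e ∈ J, w e ≤ ∑ e, y e * w e := by
  obtain ⟨J, hJ, h⟩ := tjoin_aux _ s t (fun e => 2 * w e) y T le_rfl hex (by
    intro Z _
    rw [← Finset.mul_sum]
    simp) hcut
  refine ⟨J, hJ, ?_⟩
  rw [← Finset.mul_sum] at h
  have : ∑ e, y e * (2 * w e) = 2 * ∑ e, y e * w e := by
    rw [Finset.mul_sum]
    apply Finset.sum_congr rfl
    intro e _
    ring
  omega

end TJoin2

section Euler

set_option linter.unusedSectionVars false

variable {V E : Type*} [Fintype V] [DecidableEq V] [Fintype E] [DecidableEq E]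

lemma Jn.adj {s t : E → V} {e : E} {u v : V} {G : SimpleGraph V} (h : Jn s t e u v) (hne : u ≠ v)
    (hG : s e = t e ∨ G.Adj (s e) (t e)) : G.Adj u v := by
  rcases h with ⟨rfl, rfl⟩ | ⟨rfl, rfl⟩
  · exact hG.resolve_left hne
  · exact (hG.resolve_left (fun h => hne h.symm)).symm

lemma Jn.both {s t : E → V} {e : E} {u v : V} (h : Jn s t e u v) {p : V → Prop} (hu : p u)
    (hv : p v) : p (s e) ∧ p (t e) := by
  rcases h with ⟨rfl, rfl⟩ | ⟨rfl, rfl⟩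
  · exact ⟨hu, hv⟩
  · exact ⟨hv, hu⟩

lemma trail_walk (s t : E → V) (G : SimpleGraph V) (u : V) : ∀ (n : ℕ) (Y : Finset E) (c : V),
    Y.card ≤ n → (∀ e ∈ Y, s e = t e ∨ G.Adj (s e) (t e)) → bd s t Y = pt c + pt u →
    ∃ Y' ⊆ Y, bd s t Y' = pt c + pt u ∧ ∃ p : G.Walk c u, p.length = Y'.card ∧
      ∀ e ∈ Y', s e ∈ p.support ∧ t e ∈ p.support := by
  intro n
  induction n with
  | zero =>
    intro Y c hn hG h
    have : Y = ∅ := by simpa using hn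
    subst this
    by_cases hcu : c = u
    · subst hcu
      exact ⟨∅, le_rfl, h, SimpleGraph.Walk.nil, by simp, by simp⟩
    · rw [bd_empty] at h
      exact absurd (congrFun h c).symm (pt_add_ne hcu)
  | succ n ih =>
    intro Y c hn hG h
    by_cases hcu : c = u
    · subst hcu
      exact ⟨∅, by simp, by rw [bd_empty, add_self_two], SimpleGraph.Walk.nil, by simp, by simp⟩
    obtain ⟨e, he, c', hc', hj⟩ := exists_edge s t (X := Y) (u := c) (by
      rw [h]; exact pt_add_ne hcu)
    obtain ⟨Y', hY', hb, p, hp, hps⟩ := ih (Y.erase e) c' (by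
      rw [Finset.card_erase_of_mem he]; omega)
      (fun f hf => hG f (Finset.mem_of_mem_erase hf)) (join_shift s t he hj h)
    have heY : e ∉ Y' := fun h => by simpa using hY' h
    refine ⟨insert e Y', ?_, join_cons s t heY hj hb,
      SimpleGraph.Walk.cons (hj.adj hc'.symm (hG e he)) p, ?_, ?_⟩
    · intro f hf
      rcases Finset.mem_insert.mp hf with rfl | hf
      · exact he
      · exact Finset.mem_of_mem_erase (hY' hf)
    · rw [Finset.card_insert_of_notMem heY, SimpleGraph.Walk.length_cons, hp]
    · intro f hf
      rw [SimpleGraph.Walk.support_cons]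
      rcases Finset.mem_insert.mp hf with rfl | hf
      · exact hj.both (p := fun v => v ∈ c :: p.support) (by simp) (by simp)
      · have := hps f hf
        exact ⟨List.mem_cons_of_mem _ this.1, List.mem_cons_of_mem _ this.2⟩

lemma euler_aux (s t : E → V) (G : SimpleGraph V) (F : Finset E) (v0 : V)
    (hG : ∀ e ∈ F, s e = t e ∨ G.Adj (s e) (t e)) (hF : bd s t F = 0)
    (hcon : ∀ S : Set V, v0 ∈ S → (∀ e ∈ F, s e ∈ S ↔ t e ∈ S) → S = Set.univ) :
    ∀ (n : ℕ) (F' : Finset E) (W : G.Walk v0 v0), (F \ F').card ≤ n → F' ⊆ F → bd s t F' = 0 →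
      W.length = F'.card → (∀ e ∈ F', s e ∈ W.support ∧ t e ∈ W.support) →
      ∃ w : G.Walk v0 v0, (∀ u, u ∈ w.support) ∧ w.length ≤ F.card := by
  intro n
  induction n with
  | zero =>
    intro F' W hn hF' hb hW hs
    have h1 : F ⊆ F' := Finset.sdiff_eq_empty_iff_subset.mp (by simpa using hn)
    refine ⟨W, ?_, by rw [hW]; exact Finset.card_le_card hF'⟩
    have := hcon {v | v ∈ W.support} (by simp) (by
      intro e he
      have := hs e (h1 he)
      simp [this.1, this.2])
    intro u
    have : u ∈ {v | v ∈ W.support} := by rw [this]; trivial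
    exact this
  | succ n ih =>
    intro F' W hn hF' hb hW hs
    by_cases hall : ∀ u, u ∈ W.support
    · exact ⟨W, hall, by rw [hW]; exact Finset.card_le_card hF'⟩
    have h1 : ∃ e ∈ F, ¬ (s e ∈ W.support ↔ t e ∈ W.support) := by
      by_contra hc
      push Not at hc
      apply hall
      have := hcon {v | v ∈ W.support} (by simp) (by
        intro e he
        have := hc e he
        simp only [Set.mem_setOf_eq]
        tauto)
      intro u
      have : u ∈ {v | v ∈ W.support} := by rw [this]; trivial
      exact this
    obtain ⟨e, he, hne⟩ := h1
    have heF' : e ∉ F' := by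
      intro h
      have := hs e h
      tauto
    obtain ⟨u, c, hu, hc, hj⟩ : ∃ u c, u ∈ W.support ∧ c ∉ W.support ∧ Jn s t e u c := by
      by_cases h : s e ∈ W.support
      · exact ⟨s e, t e, h, by tauto, Or.inl ⟨rfl, rfl⟩⟩
      · exact ⟨t e, s e, by tauto, h, Or.inr ⟨rfl, rfl⟩⟩
    have huc : u ≠ c := fun h => hc (h ▸ hu)
    have hadj : G.Adj u c := hj.adj huc (hG e he)
    have heX : e ∈ F \ F' := Finset.mem_sdiff.mpr ⟨he, heF'⟩
    obtain ⟨Y', hY', hYb, p, hp, hps⟩ := trail_walk s t G u _ ((F \ F').erase e) c le_rfl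
      (fun f hf => hG f (Finset.mem_sdiff.mp (Finset.mem_of_mem_erase hf)).1)
      (by rw [bd_erase s t heX, bd_sdiff s t hF', hF, hb, hj.bd_eq, zero_add, zero_add, add_comm])
    have heY : e ∉ Y' := fun h => by simpa using hY' h
    have hins : insert e Y' ⊆ F \ F' := by
      intro f hf
      rcases Finset.mem_insert.mp hf with rfl | hf
      · exact heX
      · exact Finset.mem_of_mem_erase (hY' hf)
    have hdis : Disjoint F' (insert e Y') :=
      Finset.disjoint_of_subset_right hins Finset.disjoint_sdiff
    have hsup : ∀ v, v ∈ ((W.takeUntil u hu).append ((SimpleGraph.Walk.cons hadj p).append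
        (W.dropUntil u hu))).support ↔ v ∈ W.support ∨ v ∈ p.support := by
      intro v
      have h1 : v ∈ W.support ↔ v ∈ (W.takeUntil u hu).support ∨ v ∈ (W.dropUntil u hu).support := by
        rw [← SimpleGraph.Walk.mem_support_append_iff, SimpleGraph.Walk.take_spec]
      rw [SimpleGraph.Walk.mem_support_append_iff, SimpleGraph.Walk.mem_support_append_iff, h1,
        SimpleGraph.Walk.support_cons, List.mem_cons]
      have : u ∈ p.support := p.end_mem_support
      constructor
      · rintro (h | (rfl | h) | h) <;> tauto
      · tauto
    refine ih (F' ∪ insert e Y') ((W.takeUntil u hu).append ((SimpleGraph.Walk.cons hadj p).append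
        (W.dropUntil u hu))) ?_ ?_ ?_ ?_ ?_
    · have : F \ (F' ∪ insert e Y') ⊂ F \ F' := by
        rw [Finset.ssubset_iff_of_subset (Finset.sdiff_subset_sdiff le_rfl Finset.subset_union_left)]
        exact ⟨e, heX, by simp⟩
      have := Finset.card_lt_card this
      omega
    · exact Finset.union_subset hF' (hins.trans Finset.sdiff_subset)
    · rw [bd_union s t hdis, hb, bd_insert s t heY, hYb, hj.bd_eq, add_comm (pt c), add_self_two,
        add_zero]
    · rw [Finset.card_union_of_disjoint hdis, Finset.card_insert_of_notMem heY, ← hp, ← hW]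
      have h1 : (W.takeUntil u hu).length + (W.dropUntil u hu).length = W.length := by
        rw [← SimpleGraph.Walk.length_append, SimpleGraph.Walk.take_spec]
      simp only [SimpleGraph.Walk.length_append, SimpleGraph.Walk.length_cons]
      omega
    · intro f hf
      rw [hsup, hsup]
      rcases Finset.mem_union.mp hf with hf | hf
      · have := hs f hf; tauto
      · rcases Finset.mem_insert.mp hf with rfl | hf
        · exact hj.both (p := fun v => v ∈ W.support ∨ v ∈ p.support) (Or.inl hu)
            (Or.inr p.start_mem_support)
        · have := hps f hf; tauto

/-- A connected even multigraph has a spanning closed walk. -/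
lemma euler_walk (s t : E → V) (G : SimpleGraph V) (F : Finset E) (v0 : V)
    (hG : ∀ e ∈ F, s e = t e ∨ G.Adj (s e) (t e)) (hF : bd s t F = 0)
    (hcon : ∀ S : Set V, v0 ∈ S → (∀ e ∈ F, s e ∈ S ↔ t e ∈ S) → S = Set.univ) :
    ∃ w : G.Walk v0 v0, (∀ u, u ∈ w.support) ∧ w.length ≤ F.card :=
  euler_aux s t G F v0 hG hF hcon _ ∅ SimpleGraph.Walk.nil le_rfl (by simp) (by rw [bd_empty])
    (by simp) (by simp)

end Euler

section DFS

variable {V : Type*} [Fintype V] [DecidableEq V]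

/-- A depth first search tree on the vertex set `S`. -/
structure DFSOn (x : V → V → ℝ) (S : Finset V) (r : V) (le : V → V → Prop) (par : V → V) : Prop where
  refl : ∀ u ∈ S, le u u
  trans : ∀ u ∈ S, ∀ v ∈ S, ∀ w ∈ S, le u v → le v w → le u w
  antisymm : ∀ u ∈ S, ∀ v ∈ S, le u v → le v u → u = v
  root : ∀ v ∈ S, le r v
  chain : ∀ a ∈ S, ∀ b ∈ S, ∀ u ∈ S, le a u → le b u → le a b ∨ le b a
  par_mem : ∀ w ∈ S, w ≠ r → par w ∈ S
  par_le : ∀ w ∈ S, w ≠ r → le (par w) w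
  par_ne : ∀ w ∈ S, w ≠ r → par w ≠ w
  le_par : ∀ w ∈ S, w ≠ r → ∀ a ∈ S, le a w → a ≠ w → le a (par w)
  par_adj : ∀ w ∈ S, w ≠ r → 0 < x (par w) w
  comp : ∀ u ∈ S, ∀ v ∈ S, 0 < x u v → le u v ∨ le v u
  greedy : ∀ w ∈ S, w ≠ r → ∀ u ∈ S, le w u → x u (par w) ≤ x w (par w)

lemma dfs_exists (x : V → V → ℝ) (hx0 : ∀ u v, 0 ≤ x u v) (hxs : ∀ u v, x u v = x v u) :
    ∀ (n : ℕ) (S : Finset V) (r : V), S.card ≤ n → r ∈ S →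
      (∀ U ⊆ S, r ∈ U → (∀ u ∈ U, ∀ v ∈ S, 0 < x u v → v ∈ U) → U = S) →
      ∃ le par, DFSOn x S r le par := by
  classical
  intro n
  induction n with
  | zero =>
    intro S r hn hr _
    have : S = ∅ := by simpa using hn
    subst this
    simp at hr
  | succ n ih =>
    intro S r hn hr hcon
    by_cases hS : S = {r}
    · subst hS
      refine ⟨Eq, id, ?_⟩
      constructor <;> simp
    have hex : ∃ v ∈ S.erase r, 0 < x r v := by
      by_contra hc
      push Not at hc
      apply hS
      symm
      apply hcon {r} (by simpa using hr) (by simp)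
      intro u hu v hv h
      simp only [Finset.mem_singleton] at hu ⊢
      subst hu
      by_contra hvr
      have := hc v (Finset.mem_erase.mpr ⟨hvr, hv⟩)
      linarith
    obtain ⟨v1, hv1, hxv1⟩ := hex
    obtain ⟨w, hw, hmax⟩ := Finset.exists_max_image (S.erase r) (x r) ⟨v1, hv1⟩
    have hxw : 0 < x r w := lt_of_lt_of_le hxv1 (hmax v1 hv1)
    obtain ⟨hwr, hwS⟩ := Finset.mem_erase.mp hw
    set R : V → V → Prop := fun a b => 0 < x a b ∧ b ∈ S.erase r with hR
    set C := (S.erase r).filter (Relation.ReflTransGen R w) with hC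
    have hCS : C ⊆ S.erase r := Finset.filter_subset _ _
    have hCS' : C ⊆ S := hCS.trans (Finset.erase_subset _ _)
    have hrC : r ∉ C := fun h => by simpa using hCS h
    have hwC : w ∈ C := Finset.mem_filter.mpr ⟨hw, Relation.ReflTransGen.refl⟩
    have hclosed : ∀ u ∈ C, ∀ v ∈ S, 0 < x u v → v ≠ r → v ∈ C := by
      intro u hu v hv h hvr
      refine Finset.mem_filter.mpr ⟨Finset.mem_erase.mpr ⟨hvr, hv⟩, ?_⟩
      exact (Finset.mem_filter.mp hu).2.tail ⟨h, Finset.mem_erase.mpr ⟨hvr, hv⟩⟩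
    have hCcard : C.card < S.card := by
      apply Finset.card_lt_card
      rw [Finset.ssubset_iff_of_subset hCS']
      exact ⟨r, hr, hrC⟩
    obtain ⟨le1, par1, h1⟩ := ih C w (by omega) hwC (by
      intro U hU hwU hUc
      apply Finset.Subset.antisymm hU
      intro v hv
      obtain ⟨hv1, hv2⟩ := Finset.mem_filter.mp hv
      have : ∀ b, Relation.ReflTransGen R w b → b ∈ U := by
        intro b hb
        induction hb with
        | refl => exact hwU
        | tail hab hbc ihb =>
          refine hUc _ ihb _ ?_ hbc.1
          exact Finset.mem_filter.mpr ⟨hbc.2, hab.tail hbc⟩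
      exact this v hv2)
    have hrS' : r ∈ S \ C := Finset.mem_sdiff.mpr ⟨hr, hrC⟩
    obtain ⟨le2, par2, h2⟩ := ih (S \ C) r (by
      have : S \ C ⊂ S := by
        rw [Finset.ssubset_iff_of_subset Finset.sdiff_subset]
        exact ⟨w, hwS, by simp [hwC]⟩
      have := Finset.card_lt_card this
      omega) hrS' (by
      intro U hU hrU hUc
      have := hcon (U ∪ C) (Finset.union_subset (hU.trans Finset.sdiff_subset) hCS')
        (by simp [hrU]) (by
        intro u hu v hv h
        rw [Finset.mem_union]
        by_cases hvC : v ∈ C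
        · exact Or.inr hvC
        · left
          rcases Finset.mem_union.mp hu with hu | hu
          · exact hUc u hu v (Finset.mem_sdiff.mpr ⟨hv, hvC⟩) h
          · by_cases hvr : v = r
            · rw [hvr]; exact hrU
            · exact absurd (hclosed u hu v hv h hvr) hvC)
      apply Finset.Subset.antisymm hU
      intro v hv
      obtain ⟨hv1, hv2⟩ := Finset.mem_sdiff.mp hv
      rw [← this] at hv1
      exact (Finset.mem_union.mp hv1).resolve_right hv2)
    have mem2 : ∀ v ∈ S, v ∉ C → v ∈ S \ C := fun v h h' => Finset.mem_sdiff.mpr ⟨h, h'⟩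
    refine ⟨fun a b => (a ∈ C ∧ b ∈ C ∧ le1 a b) ∨ (a ∉ C ∧ b ∉ C ∧ le2 a b) ∨ (a = r ∧ b ∈ C),
      fun v => if v = w then r else if v ∈ C then par1 v else par2 v, ?_⟩
    have hp1 : ∀ v ∈ C, v ≠ w → (if v = w then r else if v ∈ C then par1 v else par2 v) = par1 v := by
      intro v hv hvw
      rw [if_neg hvw, if_pos hv]
    have hp2 : ∀ v ∉ C, (if v = w then r else if v ∈ C then par1 v else par2 v) = par2 v := by
      intro v hv
      rw [if_neg (by rintro rfl; exact hv hwC), if_neg hv]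
    have hpw : (if w = w then r else if w ∈ C then par1 w else par2 w) = r := if_pos rfl
    constructor
    · intro u hu
      by_cases huC : u ∈ C
      · exact Or.inl ⟨huC, huC, h1.refl u huC⟩
      · exact Or.inr (Or.inl ⟨huC, huC, h2.refl u (mem2 u hu huC)⟩)
    · rintro u hu v hv z hz (⟨a, b, c⟩ | ⟨a, b, c⟩ | ⟨a, b⟩) (⟨a', b', c'⟩ | ⟨a', b', c'⟩ | ⟨a', b'⟩)
      · exact Or.inl ⟨a, b', h1.trans _ a _ b _ b' c c'⟩
      · exact absurd b a'
      · exact absurd (a' ▸ b) hrC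
      · exact absurd a' b
      · exact Or.inr (Or.inl ⟨a, b', h2.trans _ (mem2 _ hu a) _ (mem2 _ hv b) _ (mem2 _ hz b') c c'⟩)
      · subst a'
        exact Or.inr (Or.inr ⟨h2.antisymm _ (mem2 _ hu a) _ hrS' c (h2.root _ (mem2 _ hu a)), b'⟩)
      · exact Or.inr (Or.inr ⟨a, b'⟩)
      · exact absurd b a'
      · exact Or.inr (Or.inr ⟨a, b'⟩)
    · rintro u hu v hv (⟨a, b, c⟩ | ⟨a, b, c⟩ | ⟨a, b⟩) (⟨a', b', c'⟩ | ⟨a', b', c'⟩ | ⟨a', b'⟩)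
      · exact h1.antisymm _ a _ b c c'
      · exact absurd a b'
      · exact absurd (a' ▸ b) hrC
      · exact absurd a' b
      · exact h2.antisymm _ (mem2 _ hu a) _ (mem2 _ hv b) c c'
      · exact absurd b' a
      · exact absurd (a ▸ b') hrC
      · exact absurd b a'
      · rw [a, a']
    · intro v hv
      by_cases hvC : v ∈ C
      · exact Or.inr (Or.inr ⟨rfl, hvC⟩)
      · exact Or.inr (Or.inl ⟨hrC, hvC, h2.root _ (mem2 _ hv hvC)⟩)
    · rintro u hu v hv z hz (⟨a, b, c⟩ | ⟨a, b, c⟩ | ⟨a, b⟩) (⟨a', b', c'⟩ | ⟨a', b', c'⟩ | ⟨a', b'⟩)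
      · rcases h1.chain _ a _ a' _ b c c' with h | h
        · exact Or.inl (Or.inl ⟨a, a', h⟩)
        · exact Or.inr (Or.inl ⟨a', a, h⟩)
      · exact absurd b b'
      · subst a'
        exact Or.inr (Or.inr (Or.inr ⟨rfl, a⟩))
      · exact absurd b' b
      · rcases h2.chain _ (mem2 _ hu a) _ (mem2 _ hv a') _ (mem2 _ hz b) c c' with h | h
        · exact Or.inl (Or.inr (Or.inl ⟨a, a', h⟩))
        · exact Or.inr (Or.inr (Or.inl ⟨a', a, h⟩))
      · exact absurd b' b
      · subst a
        exact Or.inl (Or.inr (Or.inr ⟨rfl, a'⟩))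
      · exact absurd b b'
      · subst a a'
        exact Or.inl (Or.inr (Or.inl ⟨hrC, hrC, h2.refl _ hrS'⟩))
    · intro v hv hvr
      by_cases hvw : v = w
      · subst hvw; rw [hpw]; exact hr
      by_cases hvC : v ∈ C
      · rw [hp1 v hvC hvw]
        exact hCS' (h1.par_mem v hvC hvw)
      · rw [hp2 v hvC]
        exact (Finset.mem_sdiff.mp (h2.par_mem v (mem2 v hv hvC) hvr)).1
    · intro v hv hvr
      by_cases hvw : v = w
      · subst hvw; rw [hpw]; exact Or.inr (Or.inr ⟨rfl, hwC⟩)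
      by_cases hvC : v ∈ C
      · rw [hp1 v hvC hvw]
        exact Or.inl ⟨h1.par_mem v hvC hvw, hvC, h1.par_le v hvC hvw⟩
      · rw [hp2 v hvC]
        exact Or.inr (Or.inl ⟨(Finset.mem_sdiff.mp (h2.par_mem v (mem2 v hv hvC) hvr)).2, hvC,
          h2.par_le v (mem2 v hv hvC) hvr⟩)
    · intro v hv hvr
      by_cases hvw : v = w
      · subst hvw; rw [hpw]; exact hvr.symm
      by_cases hvC : v ∈ C
      · rw [hp1 v hvC hvw]
        exact h1.par_ne v hvC hvw
      · rw [hp2 v hvC]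
        exact h2.par_ne v (mem2 v hv hvC) hvr
    · intro v hv hvr a ha hav hne
      by_cases hvw : v = w
      · subst hvw
        rw [hpw]
        rcases hav with ⟨a1, a2, a3⟩ | ⟨a1, a2, a3⟩ | ⟨a1, a2⟩
        · exact absurd (h1.antisymm _ a1 _ a2 a3 (h1.root _ a1)) hne
        · exact absurd hwC a2
        · subst a1
          exact Or.inr (Or.inl ⟨hrC, hrC, h2.refl _ hrS'⟩)
      rcases hav with ⟨a1, a2, a3⟩ | ⟨a1, a2, a3⟩ | ⟨a1, a2⟩
      · rw [hp1 v a2 hvw]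
        exact Or.inl ⟨a1, h1.par_mem v a2 hvw, h1.le_par v a2 hvw a a1 a3 hne⟩
      · rw [hp2 v a2]
        have hm := h2.par_mem v (mem2 v hv a2) hvr
        exact Or.inr (Or.inl ⟨a1, (Finset.mem_sdiff.mp hm).2,
          h2.le_par v (mem2 v hv a2) hvr a (mem2 a ha a1) a3 hne⟩)
      · rw [hp1 v a2 hvw]
        exact Or.inr (Or.inr ⟨a1, h1.par_mem v a2 hvw⟩)
    · intro v hv hvr
      by_cases hvw : v = w
      · subst hvw; rw [hpw]; exact hxw
      by_cases hvC : v ∈ C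
      · rw [hp1 v hvC hvw]
        exact h1.par_adj v hvC hvw
      · rw [hp2 v hvC]
        exact h2.par_adj v (mem2 v hv hvC) hvr
    · intro u hu v hv h
      by_cases huC : u ∈ C
      · by_cases hvC : v ∈ C
        · rcases h1.comp u huC v hvC h with h | h
          · exact Or.inl (Or.inl ⟨huC, hvC, h⟩)
          · exact Or.inr (Or.inl ⟨hvC, huC, h⟩)
        · by_cases hvr : v = r
          · exact Or.inr (Or.inr (Or.inr ⟨hvr, huC⟩))
          · exact absurd (hclosed u huC v hv h hvr) hvC
      · by_cases hvC : v ∈ C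
        · by_cases hur : u = r
          · exact Or.inl (Or.inr (Or.inr ⟨hur, hvC⟩))
          · exact absurd (hclosed v hvC u hu (by rwa [hxs]) hur) huC
        · rcases h2.comp u (mem2 u hu huC) v (mem2 v hv hvC) h with h | h
          · exact Or.inl (Or.inr (Or.inl ⟨huC, hvC, h⟩))
          · exact Or.inr (Or.inr (Or.inl ⟨hvC, huC, h⟩))
    · intro v hv hvr u hu hvu
      by_cases hvw : v = w
      · subst hvw
        rw [hpw, hxs u r, hxs v r]
        apply hmax
        apply hCS
        rcases hvu with ⟨a1, a2, a3⟩ | ⟨a1, a2, a3⟩ | ⟨a1, a2⟩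
        · exact a2
        · exact absurd hwC a1
        · exact a2
      rcases hvu with ⟨a1, a2, a3⟩ | ⟨a1, a2, a3⟩ | ⟨a1, a2⟩
      · rw [hp1 v a1 hvw]
        exact h1.greedy v a1 hvw u a2 a3
      · rw [hp2 v a1]
        exact h2.greedy v (mem2 v hv a1) hvr u (mem2 u hu a2) a3
      · exact absurd a1 hvr

/-- The combinatorial part of a rooted tree order. -/
structure RTree (r : V) (le : V → V → Prop) (par : V → V) : Prop where
  refl : ∀ u, le u u
  trans : ∀ {u v w}, le u v → le v w → le u w
  antisymm : ∀ {u v}, le u v → le v u → u = v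
  root : ∀ v, le r v
  chain : ∀ {a b u}, le a u → le b u → le a b ∨ le b a
  par_le : ∀ w, w ≠ r → le (par w) w
  par_ne : ∀ w, w ≠ r → par w ≠ w
  le_par : ∀ w, w ≠ r → ∀ a, le a w → a ≠ w → le a (par w)

lemma DFSOn.toRTree {x : V → V → ℝ} {r : V} {le : V → V → Prop} {par : V → V}
    (h : DFSOn x Finset.univ r le par) : RTree r le par where
  refl u := h.refl u (Finset.mem_univ _)
  trans := fun {u v w} h1 h2 => h.trans u (Finset.mem_univ _) v (Finset.mem_univ _) w
    (Finset.mem_univ _) h1 h2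
  antisymm := fun {u v} h1 h2 => h.antisymm u (Finset.mem_univ _) v (Finset.mem_univ _) h1 h2
  root v := h.root v (Finset.mem_univ _)
  chain := fun {a b u} h1 h2 => h.chain a (Finset.mem_univ _) b (Finset.mem_univ _) u
    (Finset.mem_univ _) h1 h2
  par_le w := h.par_le w (Finset.mem_univ _)
  par_ne w := h.par_ne w (Finset.mem_univ _)
  le_par w hw a := h.le_par w (Finset.mem_univ _) hw a (Finset.mem_univ _)

end DFS

section Gadget

set_option linter.unusedSectionVars false

variable {V : Type*} [Fintype V] [DecidableEq V]

lemma RTree.path {r : V} {le : V → V → Prop} {par : V → V} (ht : RTree r le par) (φ : V → Prop)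
    (a : V) : ∀ (n : ℕ) (y : V), (∀ [DecidablePred (fun z => le z y)],
      (Finset.univ.filter (fun z => le z y)).card ≤ n) → le a y →
      (∀ w, le a w → le w y → w ≠ a → (φ w ↔ φ (par w))) → (φ y ↔ φ a) := by
  classical
  intro n
  induction n with
  | zero =>
    intro y hn hay _
    have h1 := hn
    have : y ∈ Finset.univ.filter (fun z => le z y) := by simp [ht.refl y]
    have := Finset.card_pos.mpr ⟨y, this⟩
    omega
  | succ n ih =>
    intro y hn hay h
    by_cases hya : y = a
    · rw [hya]
    have hyr : y ≠ r := by
      rintro rfl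
      exact hya (ht.antisymm (ht.root a) hay)
    rw [h y hay (ht.refl y) hya]
    apply ih
    · intro _
      have h1 := hn
      have : (Finset.univ.filter (fun z => le z (par y))).card <
          (Finset.univ.filter (fun z => le z y)).card := by
        apply Finset.card_lt_card
        rw [Finset.ssubset_iff_of_subset]
        · refine ⟨y, by simp [ht.refl y], ?_⟩
          simp only [Finset.mem_filter, Finset.mem_univ, true_and]
          intro h'
          exact ht.par_ne y hyr (ht.antisymm (ht.par_le y hyr) h')
        · intro z hz
          simp only [Finset.mem_filter, Finset.mem_univ, true_and] at hz ⊢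
          exact ht.trans hz (ht.par_le y hyr)
      convert Nat.lt_succ_iff.mp (lt_of_lt_of_le this h1)
    · exact ht.le_par y hyr a hay (Ne.symm hya)
    · intro w h1 h2 h3
      exact h w h1 (ht.trans h2 (ht.par_le y hyr)) h3

lemma RTree.path' {r : V} {le : V → V → Prop} {par : V → V} (ht : RTree r le par) (φ : V → Prop)
    {a y : V} (hay : le a y) (h : ∀ w, le a w → le w y → w ≠ a → (φ w ↔ φ (par w))) :
    φ y ↔ φ a := by
  classical
  exact ht.path φ a (Fintype.card V) y (fun {_} => Finset.card_le_univ _) hay h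

variable (par : V → V) (Pd : V → Prop) [DecidablePred Pd] (b1 : V → V) (B : Finset (V × V))

/-- Edge type of the gadget multigraph. -/
abbrev GE (B : Finset (V × V)) := V ⊕ (V ⊕ (V ⊕ {q // q ∈ B}))

/-- First endpoints. -/
def gs : GE B → V ⊕ V :=
  Sum.elim (fun w => if Pd w then Sum.inr w else Sum.inl (par w))
    (Sum.elim (fun w => Sum.inl (par w))
      (Sum.elim (fun w => Sum.inl (if Pd w then b1 w else w)) (fun q => Sum.inl q.1.1)))

/-- Second endpoints. -/
def gt : GE B → V ⊕ V :=
  Sum.elim (fun w => Sum.inl w)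
    (Sum.elim (fun w => if Pd w then Sum.inr w else Sum.inl (par w))
      (Sum.elim (fun w => if Pd w then Sum.inr w else Sum.inl w)
        (fun q => Sum.inl (if Pd q.1.2 ∧ q.1.1 = b1 q.1.2 then q.1.1 else par q.1.2))))

/-- Fractional values. -/
def gy : GE B → ℕ := Sum.elim (fun _ => 1) (Sum.elim (fun _ => 1) (Sum.elim (fun _ => 1) (fun _ => 2)))

/-- Weights. -/
def gw (r : V) (K : ℕ) : GE B → ℕ :=
  Sum.elim (fun w => if w = r then 0 else if Pd w then K else 1)
    (Sum.elim (fun w => if Pd w then K + 1 else 0)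
      (Sum.elim (fun w => if Pd w then K else 0)
        (fun q => if Pd q.1.2 ∧ q.1.1 = b1 q.1.2 then 0 else 1)))

lemma cut_big {V E : Type*} [Fintype V] [DecidableEq V] [Fintype E] [DecidableEq E]
    (s t : E → V) (y : E → ℕ) (hy : ∀ e, y e = 1 ∨ y e = 2) (U : Finset V)
    (hU : ∑ v ∈ U, bd s t (Finset.univ.filter (fun e => y e = 1)) v = 1)
    (hbr : ∀ f, (∀ e, e ≠ f → (s e ∈ U ↔ t e ∈ U)) → (s f ∈ U ↔ t f ∈ U)) :
    3 ≤ ∑ e ∈ cutE s t U, y e := by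
  rw [bd_cut] at hU
  set M := (Finset.univ.filter (fun e => y e = 1)) ∩ cutE s t U with hM
  have hodd : Odd M.card := by
    rw [← ZMod.natCast_eq_one_iff_odd]; exact hU
  have hne : M.Nonempty := by
    rw [← Finset.card_pos]; exact hodd.pos
  obtain ⟨f, hf⟩ := hne
  have hfD : f ∈ cutE s t U := (Finset.mem_inter.mp hf).2
  have hex : ∃ e, e ≠ f ∧ e ∈ cutE s t U := by
    by_contra hc
    push Not at hc
    have := hbr f (by
      intro e he
      have := hc e he
      simpa [cutE] using this)
    simp [cutE, this] at hfD
  obtain ⟨e, hef, heD⟩ := hex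
  rcases hy e with h1 | h2
  · have heM : e ∈ M := by simp [hM, h1, heD]
    have h2 : 2 ≤ M.card := by
      rw [← Finset.card_pair hef]
      apply Finset.card_le_card
      intro z hz
      simp only [Finset.mem_insert, Finset.mem_singleton] at hz
      rcases hz with rfl | rfl
      · exact heM
      · exact hf
    have h3 : 3 ≤ M.card := by
      obtain ⟨k, hk⟩ := hodd
      omega
    calc 3 ≤ M.card := h3
      _ = ∑ e ∈ M, y e := by
        rw [Finset.card_eq_sum_ones]
        apply Finset.sum_congr rfl
        intro z hz
        simp [hM] at hz
        rw [hz.1]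
      _ ≤ _ := Finset.sum_le_sum_of_subset Finset.inter_subset_right
  · have hyf : y f = 1 := by simpa using (Finset.mem_filter.mp (Finset.mem_inter.mp hf).1).2
    calc 3 = ∑ z ∈ {e, f}, y z := by rw [Finset.sum_pair hef, h2, hyf]
      _ ≤ _ := by
        apply Finset.sum_le_sum_of_subset
        intro z hz
        simp only [Finset.mem_insert, Finset.mem_singleton] at hz
        rcases hz with rfl | rfl
        · exact heD
        · exact hfD

variable {par Pd b1 B}

lemma gadget_bridgeless {r : V} {le : V → V → Prop} (ht : RTree r le par) (hr : par r = r)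
    (N : V → Prop) (hPd : ∀ w, Pd w → w ≠ r ∧ N w ∧ (b1 w, w) ∈ B)
    (hB : ∀ y w, (y, w) ∈ B → w ≠ r ∧ le w y)
    (hN : ∀ w, w ≠ r → N w → ∃ y w', (y, w') ∈ B ∧ le w' w ∧ w' ≠ w ∧ le w y)
    (hK : ∀ w, w ≠ r → ¬ N w → ∃ y, (y, w) ∈ B) (φ : V ⊕ V → Prop) (f : GE B)
    (hf : ∀ e, e ≠ f → (φ (gs par Pd b1 B e) ↔ φ (gt par Pd b1 B e))) :
    φ (gs par Pd b1 B f) ↔ φ (gt par Pd b1 B f) := by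
  classical
  -- consequences of uncut edges
  have tree : ∀ w, (Sum.inl w : GE B) ≠ f → (Sum.inr (Sum.inl w) : GE B) ≠ f →
      (φ (Sum.inl w) ↔ φ (Sum.inl (par w))) := by
    intro w h1 h2
    have g1 := hf _ h1
    have g2 := hf _ h2
    simp only [gs, gt, Sum.elim_inl, Sum.elim_inr] at g1 g2
    split_ifs at g1 g2 with h
    · rw [g2, g1]
    · exact g1.symm
  have gedge : ∀ w, Pd w → (Sum.inr (Sum.inl w) : GE B) ≠ f →
      (φ (Sum.inr w) ↔ φ (Sum.inl (par w))) := by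
    intro w h1 h2
    have g2 := hf _ h2
    simp only [gs, gt, Sum.elim_inl, Sum.elim_inr, h1, if_true] at g2
    exact g2.symm
  have arc : ∀ y w (hq : (y, w) ∈ B), (∀ z, f ≠ Sum.inr (Sum.inr z)) →
      (Sum.inr (Sum.inl w) : GE B) ≠ f →
      (φ (Sum.inl y) ↔ φ (Sum.inl (par w))) := by
    intro y w hq hz hg
    by_cases hb : Pd w ∧ y = b1 w
    · have g1 := hf (Sum.inr (Sum.inr (Sum.inl w))) (hz _).symm
      simp only [gs, gt, Sum.elim_inl, Sum.elim_inr, hb.1, if_true] at g1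
      rw [hb.2, g1]
      exact gedge w hb.1 hg
    · have g1 := hf (Sum.inr (Sum.inr (Sum.inr ⟨(y, w), hq⟩))) (hz _).symm
      simp only [gs, gt, Sum.elim_inr, hb, if_false] at g1
      exact g1
  have main : ∀ c, (f = Sum.inl c ∨ (f = Sum.inr (Sum.inl c) ∧ Pd c)) →
      (φ (gs par Pd b1 B f) ↔ φ (gt par Pd b1 B f)) := by
    intro c hfc
    by_cases hcr : c = r
    · have hnP : ¬ Pd r := fun h => (hPd r h).1 rfl
      subst hcr
      rcases hfc with rfl | ⟨rfl, h⟩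
      · simp [gs, gt, hnP, hr]
      · exact absurd h hnP
    have hz : ∀ z, f ≠ Sum.inr (Sum.inr z) := by
      intro z
      rcases hfc with rfl | ⟨rfl, _⟩ <;> simp
    have tr : ∀ w, w ≠ c → (φ (Sum.inl w) ↔ φ (Sum.inl (par w))) := by
      intro w hw
      apply tree
      · rcases hfc with rfl | ⟨rfl, _⟩ <;> simp [hw]
      · rcases hfc with rfl | ⟨rfl, _⟩ <;> simp [hw]
    have down : ∀ y, le c y → (φ (Sum.inl y) ↔ φ (Sum.inl c)) := by
      intro y hy
      exact ht.path' (fun v => φ (Sum.inl v)) hy (fun w _ _ h => tr w h)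
    have key : φ (Sum.inl c) ↔ φ (Sum.inl (par c)) := by
      by_cases hNc : N c
      · obtain ⟨y, w', hq, h1, h2, h3⟩ := hN c hcr hNc
        have a1 := arc y w' hq hz (by
          rcases hfc with rfl | ⟨rfl, _⟩ <;> simp [h2])
        have h4 := ht.le_par c hcr w' h1 h2
        have hw'r := (hB y w' hq).1
        have a2 : φ (Sum.inl (par c)) ↔ φ (Sum.inl (par w')) := by
          apply ht.path' (fun v => φ (Sum.inl v)) (ht.trans (ht.par_le w' hw'r) h4)
          intro w _ hw _
          apply tr
          rintro rfl
          exact ht.par_ne w hcr (ht.antisymm (ht.par_le w hcr) hw)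
        rw [← down y h3, a1, a2]
      · obtain ⟨y, hq⟩ := hK c hcr hNc
        have hnP : ¬ Pd c := fun h => hNc (hPd c h).2.1
        have g1 := hf (Sum.inr (Sum.inr (Sum.inr ⟨(y, c), hq⟩))) (hz _).symm
        simp only [gs, gt, Sum.elim_inr, hnP, false_and, if_false] at g1
        rw [← g1, down y (hB y c hq).2]
    rcases hfc with rfl | ⟨rfl, hP⟩
    · simp only [gs, gt, Sum.elim_inl]
      split_ifs with h
      · rw [gedge c h (by simp), key]
      · exact key.symm
    · have g1 := hf (Sum.inl c) (by simp)
      simp only [gs, gt, Sum.elim_inl, Sum.elim_inr, hP, if_true] at g1 ⊢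
      rw [g1, key]
  rcases f with c | c | c
  · exact main c (Or.inl rfl)
  · by_cases hP : Pd c
    · exact main c (Or.inr ⟨rfl, hP⟩)
    · simp [gs, gt, hP]
  · have all : ∀ v, φ (Sum.inl v) ↔ φ (Sum.inl r) := by
      intro v
      apply ht.path' (fun v => φ (Sum.inl v)) (ht.root v)
      intro w _ _ _
      exact tree w (by simp) (by simp)
    have allI : ∀ w, Pd w → (φ (Sum.inr w) ↔ φ (Sum.inl r)) := by
      intro w hw
      rw [gedge w hw (by simp), all]
    rcases c with c | q
    · simp only [gs, gt, Sum.elim_inl, Sum.elim_inr]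
      split_ifs with h
      · rw [all, allI c h]
      · rfl
    · simp only [gs, gt, Sum.elim_inl, Sum.elim_inr]
      split_ifs with h
      · rfl
      · rw [all, all (par _)]

end Gadget

section GadgetTour

set_option linter.unusedSectionVars false

lemma bd_eq_sum {V E : Type*} [Fintype V] [DecidableEq V] [Fintype E] [DecidableEq E]
    (s t : E → V) (X : Finset E) :
    bd s t X = ∑ e, if e ∈ X then pt (s e) + pt (t e) else 0 := by
  rw [bd, ← Finset.sum_filter, Finset.filter_mem_eq_inter, Finset.univ_inter]

lemma bd_eq_sum' {V E : Type*} [Fintype V] [DecidableEq V] [Fintype E] [DecidableEq E]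
    (s t : E → V) (X : Finset E) (v : V) :
    bd s t X v = ∑ e, if e ∈ X then pt (s e) v + pt (t e) v else 0 := by
  rw [bd_eq_sum, Finset.sum_apply]
  apply Finset.sum_congr rfl
  intro e _
  split_ifs <;> rfl

lemma card_eq_ind {E : Type*} [Fintype E] [DecidableEq E] (X : Finset E) :
    X.card = ∑ e, if e ∈ X then 1 else 0 := by
  rw [Finset.card_eq_sum_ones, ← Finset.sum_filter, Finset.filter_mem_eq_inter, Finset.univ_inter]

variable {V : Type*} [Fintype V] [DecidableEq V]
variable {par : V → V} {Pd : V → Prop} [DecidablePred Pd] {b1 : V → V} {B : Finset (V × V)}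

lemma gadget_deg (X : Finset (GE B)) (w : V) (hw : Pd w) :
    bd (gs par Pd b1 B) (gt par Pd b1 B) X (Sum.inr w) =
      (((if Sum.inl w ∈ X then 1 else 0) + (if Sum.inr (Sum.inl w) ∈ X then 1 else 0) +
        (if Sum.inr (Sum.inr (Sum.inl w)) ∈ X then 1 else 0) : ℕ) : ZMod 2) := by
  have h1 : ∀ w', (pt (if Pd w' then Sum.inr w' else Sum.inl (par w')) : V ⊕ V → ZMod 2)
      (Sum.inr w) = if w' = w then 1 else 0 := by
    intro w'
    by_cases h : w' = w
    · subst h; simp [hw, pt]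
    · by_cases h2 : Pd w' <;> simp [h2, pt, h]
  have h2 : ∀ w', (pt (if Pd w' then Sum.inr w' else Sum.inl w') : V ⊕ V → ZMod 2)
      (Sum.inr w) = if w' = w then 1 else 0 := by
    intro w'
    by_cases h : w' = w
    · subst h; simp [hw, pt]
    · by_cases h2 : Pd w' <;> simp [h2, pt, h]
  have h3 : ∀ w', (pt (Sum.inl w') : V ⊕ V → ZMod 2) (Sum.inr w) = 0 := by
    intro w'; simp [pt]
  rw [bd_eq_sum', Fintype.sum_sum_type, Fintype.sum_sum_type, Fintype.sum_sum_type]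
  simp only [gs, gt, Sum.elim_inl, Sum.elim_inr, h1, h2, h3]
  have aux : ∀ (p : V → Prop) [DecidablePred p], (∑ x, if p x then (if x = w then (1 : ZMod 2) else 0) else 0)
      = if p w then 1 else 0 := by
    intro p _
    rw [Finset.sum_eq_single w]
    · simp
    · intro b _ hb; simp [hb]
    · simp
  simp only [add_zero, zero_add, ite_self, Finset.sum_const_zero, aux]
  push_cast
  ring

lemma gadget_tour (G : SimpleGraph V) {r : V} {le : V → V → Prop} (ht : RTree r le par)
    (hr : par r = r) (hadj : ∀ w, w ≠ r → G.Adj (par w) w)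
    (N : V → Prop) (hPd : ∀ w, Pd w → w ≠ r ∧ N w ∧ (b1 w, w) ∈ B)
    (hB : ∀ y w, (y, w) ∈ B → w ≠ r ∧ le w y ∧ G.Adj y (par w))
    (hN : ∀ w, w ≠ r → N w → ∃ y w', (y, w') ∈ B ∧ le w' w ∧ w' ≠ w ∧ le w y)
    (hK : ∀ w, w ≠ r → ¬ N w → ∃ y, (y, w) ∈ B) :
    ∃ W : G.Walk r r, (∀ u, u ∈ W.support) ∧
      3 * W.length + 2 * (Finset.univ.filter Pd).card + 4 ≤ 4 * Fintype.card V + 2 * B.card := by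
  classical
  set s := gs par Pd b1 B with hs
  set t := gt par Pd b1 B with htt
  set K : ℕ := B.card + 2 * Fintype.card V with hKdef
  set wt := gw Pd b1 B r K with hwt
  set Nset : Finset (GE B) := Finset.univ.filter (fun e => gy B e = 1) with hNset
  have hnP : ¬ Pd r := fun h => (hPd r h).1 rfl
  have nt : ∀ w, (Sum.inl w : GE B) ∈ Nset := fun w => Finset.mem_filter.mpr ⟨Finset.mem_univ _, rfl⟩
  have ng : ∀ w, (Sum.inr (Sum.inl w) : GE B) ∈ Nset :=
    fun w => Finset.mem_filter.mpr ⟨Finset.mem_univ _, rfl⟩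
  have nb : ∀ w, (Sum.inr (Sum.inr (Sum.inl w)) : GE B) ∈ Nset :=
    fun w => Finset.mem_filter.mpr ⟨Finset.mem_univ _, rfl⟩
  have nu : ∀ q, (Sum.inr (Sum.inr (Sum.inr q)) : GE B) ∉ Nset := by
    intro q h
    have h2 := (Finset.mem_filter.mp h).2
    change 2 = 1 at h2
    omega
  obtain ⟨J, hJ, hJw⟩ := tjoin s t wt (gy B) (bd s t Nset) ⟨Nset, rfl⟩ (by
    intro U hU
    apply cut_big s t (gy B) _ U hU
    · intro f hf
      exact gadget_bridgeless ht hr N hPd (fun y w h => ⟨(hB y w h).1, (hB y w h).2.1⟩) hN hK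
        (fun v => v ∈ U) f hf
    · rintro (e | e | e | e) <;> simp [gy])
  set j : GE B → ℕ := fun e => if e ∈ J then 1 else 0 with hj
  have hj01 : ∀ e, j e = 0 ∨ j e = 1 := by
    intro e; simp only [hj]; split_ifs <;> simp
  have hjm : ∀ e, e ∈ J ↔ j e = 1 := by
    intro e; simp only [hj]; split_ifs with h <;> simp [h]
  -- odd degree at gadget vertices
  have hodd : ∀ w, Pd w → Odd (j (Sum.inl w) + j (Sum.inr (Sum.inl w)) +
      j (Sum.inr (Sum.inr (Sum.inl w)))) := by
    intro w hw
    have h1 := congrFun hJ (Sum.inr w)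
    rw [hs, htt, gadget_deg J w hw, gadget_deg Nset w hw] at h1
    rw [← ZMod.natCast_eq_one_iff_odd, h1]
    rw [if_pos (nt w), if_pos (ng w), if_pos (nb w)]
    decide
  -- the tour
  set X1 : Finset (GE B) := Finset.univ.filter (fun e => Sum.elim
    (fun w => w ≠ r ∧ (Pd w → j (Sum.inl w) = 0))
    (Sum.elim (fun _ => False)
      (Sum.elim (fun w => Pd w ∧ j (Sum.inr (Sum.inr (Sum.inl w))) = 0)
        (fun q => ¬ (Pd q.1.2 ∧ q.1.1 = b1 q.1.2) ∧ j (Sum.inr (Sum.inr (Sum.inr q))) = 1))) e)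
    with hX1
  set X2 : Finset (GE B) := Finset.univ.filter (fun e => Sum.elim
    (fun w => w ≠ r ∧ ¬ Pd w ∧ j (Sum.inl w) = 1) (fun _ => False) e) with hX2
  set m : GE B → ℕ := fun e => (if e ∈ X1 then 1 else 0) + (if e ∈ X2 then 1 else 0) with hm
  have hcard : X1.card + X2.card = ∑ e, m e := by
    rw [card_eq_ind X1, card_eq_ind X2, ← Finset.sum_add_distrib]
  set base : GE B → ℕ := Sum.elim (fun w => if w = r then 0 else 1) (Sum.elim (fun _ => 0)
    (Sum.elim (fun w => if Pd w then 1 else 0) (fun _ => 0))) with hbase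
  set kap : GE B → ℕ := Sum.elim (fun w => if Pd w then (K + 1) * j (Sum.inl w) else 0)
    (Sum.elim (fun w => if Pd w then (K + 1) * j (Sum.inr (Sum.inl w)) else 0)
    (Sum.elim (fun w => if Pd w then (K + 1) * j (Sum.inr (Sum.inr (Sum.inl w))) else 0)
      (fun _ => 0))) with hkap
  have term : ∀ e, m e + kap e ≤ j e * wt e + base e := by
    rintro (w | w | w | q)
    · simp only [hm, hkap, hX1, hX2, hwt, gw, hbase, Finset.mem_filter, Finset.mem_univ, true_and,
        Sum.elim_inl, Sum.elim_inr]
      by_cases hwr : w = r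
      · simp [hwr, hnP]
      · by_cases hp : Pd w
        · rcases hj01 (Sum.inl w) with h | h <;> simp [hwr, hp, h]
        · rcases hj01 (Sum.inl w) with h | h <;> simp [hwr, hp, h]
    · simp only [hm, hkap, hX1, hX2, hwt, gw, hbase, Finset.mem_filter, Finset.mem_univ, true_and,
        Sum.elim_inl, Sum.elim_inr]
      by_cases hp : Pd w
      · simp [hp, Nat.mul_comm]
      · simp [hp]
    · simp only [hm, hkap, hX1, hX2, hwt, gw, hbase, Finset.mem_filter, Finset.mem_univ, true_and,
        Sum.elim_inl, Sum.elim_inr]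
      by_cases hp : Pd w
      · rcases hj01 (Sum.inr (Sum.inr (Sum.inl w))) with h | h <;> simp [hp, h]
      · simp [hp]
    · simp only [hm, hkap, hX1, hX2, hwt, gw, hbase, Finset.mem_filter, Finset.mem_univ, true_and,
        Sum.elim_inl, Sum.elim_inr]
      by_cases hp : Pd q.1.2 ∧ q.1.1 = b1 q.1.2
      · simp [hp]
      · rcases hj01 (Sum.inr (Sum.inr (Sum.inr q))) with h | h <;> simp [hp, h]
  set nw : V → ℕ := fun w => j (Sum.inl w) + j (Sum.inr (Sum.inl w)) +
      j (Sum.inr (Sum.inr (Sum.inl w))) with hnw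
  set p := (Finset.univ.filter Pd).card with hp
  have skap : ∑ e, kap e = (K + 1) * ∑ w ∈ Finset.univ.filter Pd, nw w := by
    rw [Fintype.sum_sum_type, Fintype.sum_sum_type, Fintype.sum_sum_type, Finset.mul_sum,
      Finset.sum_filter]
    simp only [hkap, Sum.elim_inl, Sum.elim_inr, Finset.sum_const_zero, add_zero]
    rw [← Finset.sum_add_distrib, ← Finset.sum_add_distrib]
    apply Finset.sum_congr rfl
    intro w _
    split_ifs
    · simp only [hnw]; ring
    · rfl
  have scard : ∑ w : V, (if w = r then 0 else 1) + 1 = Fintype.card V := by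
    have : ∀ w : V, (if w = r then 0 else 1) + (if w = r then 1 else 0) = 1 := by
      intro w; split_ifs <;> rfl
    have h2 := Finset.sum_congr (rfl : (Finset.univ : Finset V) = Finset.univ) (fun w _ => this w)
    rw [Finset.sum_add_distrib] at h2
    simpa using h2
  have sPd : ∑ w : V, (if Pd w then 1 else 0) = p := by
    rw [hp, Finset.card_eq_sum_ones, Finset.sum_filter]
  have sbase : ∑ e, base e + 1 = Fintype.card V + p := by
    rw [Fintype.sum_sum_type, Fintype.sum_sum_type, Fintype.sum_sum_type]
    simp only [hbase, Sum.elim_inl, Sum.elim_inr, Finset.sum_const_zero, add_zero, sPd]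
    omega
  have sU : ∑ q : {q // q ∈ B}, (if Pd q.1.2 ∧ q.1.1 = b1 q.1.2 then 0 else 1) + p = B.card := by
    have h1 : ∑ q : {q // q ∈ B}, (if Pd q.1.2 ∧ q.1.1 = b1 q.1.2 then 0 else 1) =
        ∑ q ∈ B, (if Pd q.2 ∧ q.1 = b1 q.2 then 0 else 1) :=
      Finset.sum_coe_sort B (fun q : V × V => if Pd q.2 ∧ q.1 = b1 q.2 then 0 else 1)
    have h2 : p = ∑ q ∈ B, (if Pd q.2 ∧ q.1 = b1 q.2 then 1 else 0) := by
      rw [← Finset.sum_filter, ← Finset.card_eq_sum_ones, hp]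
      apply Finset.card_bij (fun w _ => (b1 w, w))
      · intro w hw
        have hw := (Finset.mem_filter.mp hw).2
        simp [hw, (hPd w hw).2.2]
      · intro a _ b _ h
        exact (Prod.mk.inj h).2
      · rintro ⟨y, w⟩ h
        simp only [Finset.mem_filter] at h
        refine ⟨w, by simp [h.2.1], ?_⟩
        rw [← h.2.2]
    rw [h1, h2, ← Finset.sum_add_distrib, Finset.card_eq_sum_ones]
    apply Finset.sum_congr rfl
    intro q _
    split_ifs <;> rfl
  have syw : ∑ e, gy B e * wt e + 3 * p + 1 = 2 * (B.card - p) + Fintype.card V + 3 * p * (K + 1) := by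
    rw [Fintype.sum_sum_type, Fintype.sum_sum_type, Fintype.sum_sum_type]
    simp only [hwt, gw, gy, Sum.elim_inl, Sum.elim_inr, one_mul]
    have h1 : ∑ w : V, (if w = r then 0 else if Pd w then K else 1) + p + 1 =
        Fintype.card V + p * K := by
      rw [← scard, ← sPd, Finset.sum_mul]
      have : ∑ w : V, (if w = r then 0 else if Pd w then K else 1) + ∑ w : V, (if Pd w then 1 else 0)
          = ∑ w : V, (if w = r then 0 else 1) + ∑ w : V, (if Pd w then 1 else 0) * K := by
        rw [← Finset.sum_add_distrib, ← Finset.sum_add_distrib]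
        apply Finset.sum_congr rfl
        intro w _
        by_cases hwr : w = r
        · simp [hwr, hnP]
        · by_cases hw : Pd w <;> simp [hwr, hw, Nat.add_comm]
      omega
    have h2 : ∀ c : ℕ, ∑ w : V, (if Pd w then c else 0) = p * c := by
      intro c
      rw [← sPd, Finset.sum_mul]
      apply Finset.sum_congr rfl
      intro w _
      split_ifs <;> simp
    rw [h2, h2, ← Finset.mul_sum]
    have h3 : ∑ q : {q // q ∈ B}, (if Pd q.1.2 ∧ q.1.1 = b1 q.1.2 then 0 else 1) = B.card - p := by
      omega
    rw [h3]
    have e1 : p * (K + 1) = p * K + p := by ring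
    have e2 : 3 * p * (K + 1) = 3 * (p * K) + 3 * p := by ring
    rw [e1, e2]
    omega
  have sJ : ∑ e, j e * wt e = ∑ e ∈ J, wt e := by
    rw [← Finset.sum_filter_add_sum_filter_not Finset.univ (fun e => e ∈ J),
      Finset.filter_mem_eq_inter, Finset.univ_inter]
    rw [Finset.sum_congr rfl (g := wt) (fun e he => by simp [hj, he])]
    rw [Finset.sum_eq_zero (s := Finset.univ.filter (fun e => e ∉ J))]
    · rfl
    · intro e he
      simp [hj, (Finset.mem_filter.mp he).2]
  have sterm : ∑ e, m e + ∑ e, kap e ≤ ∑ e ∈ J, wt e + ∑ e, base e := by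
    rw [← sJ, ← Finset.sum_add_distrib, ← Finset.sum_add_distrib]
    exact Finset.sum_le_sum (fun e _ => term e)
  have hpB : p ≤ B.card := by omega
  have hnw1 : ∀ w ∈ Finset.univ.filter Pd, 1 ≤ nw w := by
    intro w hw
    exact (hodd w (Finset.mem_filter.mp hw).2).pos
  have hpn : p ≤ ∑ w ∈ Finset.univ.filter Pd, nw w := by
    rw [hp, Finset.card_eq_sum_ones]
    exact Finset.sum_le_sum hnw1
  -- exactly one join edge at each gadget vertex
  have hone : ∀ w, Pd w → nw w = 1 := by
    intro w hw
    by_contra hne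
    have hw' : w ∈ Finset.univ.filter Pd := by simp [hw]
    have h1 : p + 1 ≤ ∑ w ∈ Finset.univ.filter Pd, nw w := by
      have h2 : (Finset.univ.filter Pd).card < ∑ w ∈ Finset.univ.filter Pd, nw w := by
        rw [Finset.card_eq_sum_ones]
        apply Finset.sum_lt_sum hnw1
        refine ⟨w, hw', ?_⟩
        have := hnw1 w hw'
        omega
      omega
    have h2 : (K + 1) * (p + 1) ≤ ∑ e, kap e := by
      rw [skap]; exact Nat.mul_le_mul_left _ h1
    have e1 : (K + 1) * (p + 1) = p * K + p + K + 1 := by ring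
    have e2 : 3 * p * (K + 1) = 3 * (p * K) + 3 * p := by ring
    rw [e2] at syw
    rw [e1] at h2
    omega
  have hlen : 3 * (X1.card + X2.card) + 2 * p + 4 ≤ 4 * Fintype.card V + 2 * B.card := by
    have h2 : (K + 1) * p ≤ ∑ e, kap e := by
      rw [skap]; exact Nat.mul_le_mul_left _ hpn
    have e1 : (K + 1) * p = p * K + p := by ring
    have e2 : 3 * p * (K + 1) = 3 * (p * K) + 3 * p := by ring
    rw [e2] at syw
    rw [e1] at h2
    omega
  -- projection to the graph
  set π : V ⊕ V → V := Sum.elim id par with hπ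
  have hπs : ∀ w, π (s (Sum.inl w)) = par w := by
    intro w
    simp only [hπ, hs, gs, Sum.elim_inl]
    split_ifs <;> rfl
  have hπt : ∀ w, π (t (Sum.inl w)) = w := by
    intro w
    simp [hπ, htt, gt]
  have hgs : ∀ w, π (s (Sum.inr (Sum.inl w))) = par w := by
    intro w
    simp [hπ, hs, gs]
  have hgt : ∀ w, π (t (Sum.inr (Sum.inl w))) = par w := by
    intro w
    simp only [hπ, htt, gt, Sum.elim_inl, Sum.elim_inr]
    split_ifs <;> rfl
  have hbs : ∀ w, Pd w → π (s (Sum.inr (Sum.inr (Sum.inl w)))) = b1 w := by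
    intro w hw
    simp [hπ, hs, gs, hw]
  have hbt : ∀ w, Pd w → π (t (Sum.inr (Sum.inr (Sum.inl w)))) = par w := by
    intro w hw
    simp [hπ, htt, gt, hw]
  have hbl : ∀ w, ¬ Pd w → s (Sum.inr (Sum.inr (Sum.inl w))) = t (Sum.inr (Sum.inr (Sum.inl w))) := by
    intro w hw
    simp [hs, htt, gs, gt, hw]
  have hus : ∀ q, π (s (Sum.inr (Sum.inr (Sum.inr q)))) = q.1.1 := by
    intro q
    simp [hπ, hs, gs]
  have hut : ∀ q, ¬ (Pd q.1.2 ∧ q.1.1 = b1 q.1.2) →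
      π (t (Sum.inr (Sum.inr (Sum.inr q)))) = par q.1.2 := by
    intro q hq
    simp only [hπ, htt, gt, Sum.elim_inl, Sum.elim_inr, if_neg hq]
    rfl
  have hul : ∀ q, (Pd q.1.2 ∧ q.1.1 = b1 q.1.2) →
      s (Sum.inr (Sum.inr (Sum.inr q))) = t (Sum.inr (Sum.inr (Sum.inr q))) := by
    intro q hq
    simp only [hs, htt, gs, gt, Sum.elim_inl, Sum.elim_inr, if_pos hq]
  have hbd : bd (π ∘ s) (π ∘ t) X1 + bd (π ∘ s) (π ∘ t) X2 = 0 := by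
    have h1 : bd (π ∘ s) (π ∘ t) Nset + bd (π ∘ s) (π ∘ t) J = 0 := by
      rw [← push_bd, ← push_bd, hJ, add_self_two]
    rw [← h1, bd_eq_sum, bd_eq_sum, bd_eq_sum, bd_eq_sum, ← Finset.sum_add_distrib,
      ← Finset.sum_add_distrib]
    apply Finset.sum_congr rfl
    rintro (w | w | w | q) _
    · simp only [Function.comp, hπs, hπt, nt, nb, nu, hX1, hX2, hjm, Finset.mem_filter,
        Finset.mem_univ, true_and, Sum.elim_inl, Sum.elim_inr]
      by_cases hwr : w = r
      · simp [hwr, hr, add_self_two]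
      · by_cases hp : Pd w
        · rcases hj01 (Sum.inl w) with h | h <;> simp [hwr, hp, h, add_self_two]
        · rcases hj01 (Sum.inl w) with h | h <;> simp [hwr, hp, h]
    · simp only [Function.comp, hgs, hgt, add_self_two, ite_self]
    · by_cases hw : Pd w
      · simp only [Function.comp, hbs w hw, hbt w hw, nt, nb, nu, hX1, hX2, hjm, Finset.mem_filter,
          Finset.mem_univ, true_and, Sum.elim_inl, Sum.elim_inr, hw]
        rcases hj01 (Sum.inr (Sum.inr (Sum.inl w))) with h | h <;> simp [h, add_self_two]
      · simp only [Function.comp, hbl w hw, add_self_two, ite_self]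
    · by_cases hq : Pd q.1.2 ∧ q.1.1 = b1 q.1.2
      · simp only [Function.comp, hul q hq, add_self_two, ite_self]
      · simp only [Function.comp, hus, hut q hq, nt, nb, nu, hX1, hX2, hjm, Finset.mem_filter,
          Finset.mem_univ, true_and, Sum.elim_inl, Sum.elim_inr, hq]
        simp
  have mX1t : ∀ w, w ≠ r → (Pd w → j (Sum.inl w) = 0) → Sum.inl w ∈ X1 := by
    intro w h1 h2
    simp only [hX1, Finset.mem_filter, Finset.mem_univ, true_and, Sum.elim_inl]
    exact ⟨h1, h2⟩
  have mX1b : ∀ w, Pd w → j (Sum.inr (Sum.inr (Sum.inl w))) = 0 →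
      Sum.inr (Sum.inr (Sum.inl w)) ∈ X1 := by
    intro w h1 h2
    simp only [hX1, Finset.mem_filter, Finset.mem_univ, true_and, Sum.elim_inl, Sum.elim_inr]
    exact ⟨h1, h2⟩
  obtain ⟨W, hW1, hW2⟩ := euler_walk (Sum.elim (π ∘ s) (π ∘ s)) (Sum.elim (π ∘ t) (π ∘ t)) G
    (X1.disjSum X2) r (by
      intro e he
      rw [Finset.mem_disjSum] at he
      rcases he with ⟨e, he, rfl⟩ | ⟨e, he, rfl⟩
      · simp only [Sum.elim_inl, Function.comp]
        rcases e with w | w | w | q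
        · simp only [hX1, Finset.mem_filter, Finset.mem_univ, true_and, Sum.elim_inl] at he
          rw [hπs, hπt]
          exact Or.inr (hadj w he.1)
        · simp [hX1] at he
        · simp only [hX1, Finset.mem_filter, Finset.mem_univ, true_and, Sum.elim_inl,
            Sum.elim_inr] at he
          rw [hbs w he.1, hbt w he.1]
          exact Or.inr (hB _ _ (hPd w he.1).2.2).2.2
        · simp only [hX1, Finset.mem_filter, Finset.mem_univ, true_and, Sum.elim_inr] at he
          rw [hus, hut q he.1]
          exact Or.inr (hB _ _ q.2).2.2
      · simp only [Sum.elim_inr, Function.comp]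
        rcases e with w | e
        · simp only [hX2, Finset.mem_filter, Finset.mem_univ, true_and, Sum.elim_inl] at he
          rw [hπs, hπt]
          exact Or.inr (hadj w he.1)
        · simp [hX2] at he) (by
      rw [bd, Finset.sum_disjSum]
      exact hbd) (by
      intro S hrS hS
      have hS1 : ∀ e ∈ X1, (π (s e) ∈ S ↔ π (t e) ∈ S) := by
        intro e he
        exact hS (Sum.inl e) (by simp [he])
      have key : ∀ (n : ℕ) (c : V), c ≠ r → (Finset.univ.filter (fun z => le c z)).card ≤ n →
          (c ∈ S ↔ par c ∈ S) := by
        intro n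
        induction n with
        | zero =>
          intro c _ hn
          have : c ∈ Finset.univ.filter (fun z => le c z) := by simp [ht.refl c]
          have := Finset.card_pos.mpr ⟨c, this⟩
          omega
        | succ n ih =>
          intro c hcr hn
          by_cases ht1 : Pd c → j (Sum.inl c) = 0
          · have := hS1 _ (mX1t c hcr ht1)
            rw [hπs, hπt] at this
            exact this.symm
          · push Not at ht1
            obtain ⟨hPc, hjc⟩ := ht1
            have hb0 : j (Sum.inr (Sum.inr (Sum.inl c))) = 0 := by
              have := hone c hPc
              simp only [hnw] at this
              omega
            have h1 := hS1 _ (mX1b c hPc hb0)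
            rw [hbs c hPc, hbt c hPc] at h1
            rw [← h1]
            symm
            apply ht.path' (fun v => v ∈ S) (hB _ _ (hPd c hPc).2.2).2.1
            intro w hw _ hwc
            apply ih
            · rintro rfl
              exact hwc (ht.antisymm (ht.root c) hw)
            · have : (Finset.univ.filter (fun z => le w z)).card <
                  (Finset.univ.filter (fun z => le c z)).card := by
                apply Finset.card_lt_card
                rw [Finset.ssubset_iff_of_subset]
                · refine ⟨c, by simp [ht.refl c], ?_⟩
                  simp only [Finset.mem_filter, Finset.mem_univ, true_and]
                  intro h'
                  exact hwc (ht.antisymm h' hw)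
                · intro z hz
                  simp only [Finset.mem_filter, Finset.mem_univ, true_and] at hz ⊢
                  exact ht.trans hw hz
              omega
      ext v
      simp only [Set.mem_univ, iff_true]
      have := ht.path' (fun v => v ∈ S) (ht.root v) (by
        intro w _ _ hwr
        exact key _ w hwr le_rfl)
      exact this.mpr hrS)
  refine ⟨W, hW1, ?_⟩
  rw [Finset.card_disjSum] at hW2
  omega

end GadgetTour

section Rounding

variable {V : Type*} [Fintype V] [DecidableEq V]

lemma RTree.child {r : V} {le : V → V → Prop} {par : V → V} (ht : RTree r le par) {n y : V}
    (h : le n y) (hne : y ≠ n) : ∃ c, par c = n ∧ c ≠ r ∧ le c y := by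
  by_contra hcon
  push Not at hcon
  have := ht.path' (fun w => w = n) h (by
    intro w h1 h2 h3
    have hwr : w ≠ r := by
      rintro rfl
      exact h3 (ht.antisymm (ht.root _) h1)
    constructor
    · intro h; exact absurd h h3
    · intro h; exact absurd h2 (hcon w h hwr))
  exact hne (this.2 rfl)

lemma RTree.not_le_par {r : V} {le : V → V → Prop} {par : V → V} (ht : RTree r le par) {w : V}
    (hw : w ≠ r) : ¬ le w (par w) := fun h => ht.par_ne w hw (ht.antisymm (ht.par_le w hw) h)

lemma RTree.child_unique {r : V} {le : V → V → Prop} {par : V → V} (ht : RTree r le par) {c d y : V}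
    (hc : c ≠ r) (hd : d ≠ r) (hp : par c = par d) (h1 : le c y) (h2 : le d y) : c = d := by
  by_contra hne
  rcases ht.chain h1 h2 with h | h
  · have := ht.le_par d hd c h hne
    rw [← hp] at this
    exact ht.not_le_par hc this
  · have := ht.le_par c hc d h (Ne.symm hne)
    rw [hp] at this
    exact ht.not_le_par hd this

open Classical in
lemma RTree.interval {r : V} {le : V → V → Prop} {par : V → V} (ht : RTree r le par) {w y : V}
    (hwr : w ≠ r) (hwy : le w y) (n : V) :
    (if le w n ∧ le n y then (1:ℝ) else 0) = (if y = n then 1 else 0) +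
      ∑ c, (if par c = n then (if le w c ∧ w ≠ c ∧ le c y then (1:ℝ) else 0) else 0) := by
  have key : ∀ c, par c = n → le w c → w ≠ c → le c y → c ≠ r ∧ le w n ∧ le n y ∧ y ≠ n := by
    intro c h1 h2 h3 h4
    have hc : c ≠ r := by
      rintro rfl
      exact h3 (ht.antisymm h2 (ht.root _))
    have h5 := ht.le_par c hc w h2 h3
    have h6 := ht.par_le c hc
    have h7 := ht.not_le_par hc
    rw [h1] at h5 h6 h7
    refine ⟨hc, h5, ht.trans h6 h4, ?_⟩
    rintro rfl
    exact h7 h4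
  by_cases hA : le w n ∧ le n y ∧ y ≠ n
  · obtain ⟨h1, h2, h3⟩ := hA
    obtain ⟨c, hc1, hc2, hc3⟩ := ht.child h2 h3
    rw [Finset.sum_eq_single c]
    · have h4 : le w c := ht.trans h1 (hc1 ▸ ht.par_le c hc2)
      have h5 : w ≠ c := by
        rintro rfl
        exact ht.not_le_par hc2 (hc1 ▸ h1)
      simp [h1, h2, h3, hc1, h4, h5, hc3]
    · intro d _ hd
      split_ifs with h4 h5
      · exact absurd (ht.child_unique (key d h4 h5.1 h5.2.1 h5.2.2).1 hc2 (h4.trans hc1.symm) h5.2.2 hc3) hd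
      · rfl
      · rfl
    · simp
  · rw [Finset.sum_eq_zero, add_zero]
    · by_cases hy : y = n
      · subst hy
        simp [hwy, ht.refl]
      · rw [if_neg, if_neg hy]
        rintro ⟨h1, h2⟩
        exact hA ⟨h1, h2, hy⟩
    · intro c _
      split_ifs with h4 h5
      · have := key c h4 h5.1 h5.2.1 h5.2.2
        exact absurd this.2 hA
      · rfl
      · rfl

open Classical in
lemma round_back {r : V} {le : V → V → Prop} {par : V → V} (ht : RTree r le par) (hr : par r = r)
    (f : V × V → ℝ) (hf0 : ∀ p, 0 ≤ f p) (hfs : ∀ p, f p ≠ 0 → p.2 ≠ r ∧ le p.2 p.1) (N : V → Prop)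
    (hN : ∀ w, w ≠ r → N w → 1 ≤ ∑ p : V × V, if le p.2 w ∧ p.2 ≠ w ∧ le w p.1 then f p else 0)
    (hK : ∀ w, w ≠ r → ¬ N w → 1 ≤ ∑ y, f (y, w)) :
    ∃ B : Finset (V × V), (∀ p ∈ B, 0 < f p) ∧
      (∀ w, w ≠ r → N w → ∃ y w', (y, w') ∈ B ∧ le w' w ∧ w' ≠ w ∧ le w y) ∧
      (∀ w, w ≠ r → ¬ N w → ∃ y, (y, w) ∈ B) ∧
      ∑ w, (if N w then max 0 (((B.filter (fun p => p.2 = w)).card : ℝ) - 1)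
          else ((B.filter (fun p => p.2 = w)).card : ℝ)) ≤
        ∑ w, (if N w then max 0 (∑ y, f (y, w) - 1) else ∑ y, f (y, w)) := by
  set u : V → ℝ := fun w => ∑ y, f (y, w) with hu
  have hu0 : ∀ w, 0 ≤ u w := fun w => Finset.sum_nonneg (fun y _ => hf0 _)
  set g : V → ℝ := fun w => ∑ p : V × V, if le p.2 w ∧ p.2 ≠ w ∧ le w p.1 then f p else 0 with hg
  have hu' : ∀ w, u w = ∑ p : V × V, (if p.2 = w then 1 else 0) * f p := by
    intro w
    rw [Fintype.sum_prod_type]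
    simp [hu]
  let s : V ⊕ (V × V) ⊕ V ⊕ V → V ⊕ V :=
    Sum.elim (fun w => Sum.inl (par w)) (Sum.elim (fun p => Sum.inl p.1)
      (Sum.elim (fun w => Sum.inr w) (fun w => Sum.inr w)))
  let t : V ⊕ (V × V) ⊕ V ⊕ V → V ⊕ V :=
    Sum.elim (fun w => Sum.inl w) (Sum.elim (fun p => Sum.inr p.2)
      (Sum.elim (fun w => Sum.inl w) (fun w => Sum.inl w)))
  let F : V ⊕ (V × V) ⊕ V ⊕ V → ℝ :=
    Sum.elim g (Sum.elim f (Sum.elim (fun w => min 1 (u w)) (fun w => max 0 (u w - 1))))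
  let c : V ⊕ (V × V) ⊕ V ⊕ V → ℝ :=
    Sum.elim 0 (Sum.elim 0 (Sum.elim (fun w => if N w then 0 else 1) (fun w => 1)))
  have hmm : ∀ w, min 1 (u w) + max 0 (u w - 1) = u w := by
    intro w
    rcases le_total 1 (u w) with h | h
    · rw [min_eq_left h, max_eq_right (by linarith)]; ring
    · rw [min_eq_right h, max_eq_left (by linarith)]; ring
  have hcons : ∀ n, divg s t n F = 0 := by
    intro n
    rw [divg_apply]
    simp only [Fintype.sum_sum_type, s, t, F, Sum.elim_inl, Sum.elim_inr]
    rcases n with n | n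
    · simp only [Sum.inl.injEq, reduceCtorEq, if_false, sub_zero, zero_sub]
      simp only [sub_mul, Finset.sum_sub_distrib, ite_mul, one_mul, zero_mul, Finset.sum_ite_eq',
        Finset.mem_univ, if_true, neg_mul, Finset.sum_neg_distrib]
      have h1 : (∑ w, if par w = n then g w else 0) = ∑ p : V × V,
          (∑ c, (if par c = n then (if le p.2 c ∧ p.2 ≠ c ∧ le c p.1 then (1:ℝ) else 0) else 0)) * f p := by
        simp only [Finset.sum_mul]
        rw [Finset.sum_comm]
        apply Finset.sum_congr rfl
        intro w _
        split_ifs with h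
        · simp only [hg, ite_mul, one_mul, zero_mul]
        · simp
      have h2 : g n + u n = (∑ w, if par w = n then g w else 0) + ∑ p : V × V, if p.1 = n then f p else 0 := by
        rw [h1, hu', hg, ← Finset.sum_add_distrib, ← Finset.sum_add_distrib]
        apply Finset.sum_congr rfl
        intro p _
        by_cases hp : f p = 0
        · simp [hp]
        obtain ⟨hp1, hp2⟩ := hfs p hp
        have h3 := ht.interval hp1 hp2 n
        have h4 : (if p.1 = n then f p else 0) = (if p.1 = n then 1 else 0) * f p := by
          split_ifs <;> simp
        rw [h4, ← add_mul, add_comm (∑ c, _), ← h3]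
        by_cases h5 : p.2 = n
        · subst h5
          simp [ht.refl, hp2]
        · simp [h5]
      have := hmm n
      linarith
    · simp only [Sum.inr.injEq, reduceCtorEq, if_false, sub_zero, zero_sub]
      simp only [zero_mul, ite_mul, one_mul, Finset.sum_ite_eq',
        Finset.mem_univ, if_true, neg_mul, Finset.sum_neg_distrib, Finset.sum_const_zero]
      have h1 := hu' n
      simp only [ite_mul, one_mul, zero_mul] at h1
      rw [← h1]
      have := hmm n
      linarith
  obtain ⟨gi, hgi1, hgi2, hgi3⟩ := flow_round s t F c hcons
  have hpos : ∀ p, 0 ≤ gi (Sum.inr (Sum.inl p)) := fun p =>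
    le_trans (Int.floor_nonneg.2 (hf0 p)) (hgi2 (Sum.inr (Sum.inl p))).1
  have hq0 : ∀ w, 0 ≤ gi (Sum.inr (Sum.inr (Sum.inr w))) := fun w =>
    le_trans (Int.floor_nonneg.2 (le_max_left _ _)) (hgi2 (Sum.inr (Sum.inr (Sum.inr w)))).1
  have hp0 : ∀ w, 0 ≤ gi (Sum.inr (Sum.inr (Sum.inl w))) := fun w =>
    le_trans (Int.floor_nonneg.2 (le_min zero_le_one (hu0 w))) (hgi2 (Sum.inr (Sum.inr (Sum.inl w)))).1
  have hp1 : ∀ w, gi (Sum.inr (Sum.inr (Sum.inl w))) ≤ 1 := fun w =>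
    le_trans (hgi2 (Sum.inr (Sum.inr (Sum.inl w)))).2 (Int.ceil_le.2 (by simp [F]))
  have hzero : ∀ p, f p = 0 → gi (Sum.inr (Sum.inl p)) = 0 := by
    intro p hp
    have := hgi2 (Sum.inr (Sum.inl p))
    simp only [F, Sum.elim_inl, Sum.elim_inr, hp, Int.floor_zero, Int.ceil_zero] at this
    omega
  set B : Finset (V × V) := Finset.univ.filter (fun p => 1 ≤ gi (Sum.inr (Sum.inl p))) with hB
  have hKn : ∀ w, ∑ y, gi (Sum.inr (Sum.inl (y, w))) =
      gi (Sum.inr (Sum.inr (Sum.inl w))) + gi (Sum.inr (Sum.inr (Sum.inr w))) := by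
    intro n
    have := hgi1 (Sum.inr n)
    rw [divg_apply] at this
    simp only [Fintype.sum_sum_type, s, t, Sum.elim_inl, Sum.elim_inr] at this
    simp only [Sum.inr.injEq, reduceCtorEq, if_false, sub_zero, zero_sub] at this
    simp only [zero_mul, ite_mul, one_mul, Finset.sum_ite_eq',
        Finset.mem_univ, if_true, neg_mul, Finset.sum_neg_distrib, Finset.sum_const_zero] at this
    rw [Fintype.sum_prod_type] at this
    simp only [Finset.sum_ite_eq', Finset.mem_univ, if_true] at this
    have h : ((∑ y, gi (Sum.inr (Sum.inl (y, n))) : ℤ) : ℝ) =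
      ((gi (Sum.inr (Sum.inr (Sum.inl n))) + gi (Sum.inr (Sum.inr (Sum.inr n))) : ℤ) : ℝ) := by
      push_cast
      linarith
    exact_mod_cast h
  have hBw : ∀ w, ((B.filter (fun p => p.2 = w)).card : ℤ) ≤
      gi (Sum.inr (Sum.inr (Sum.inl w))) + gi (Sum.inr (Sum.inr (Sum.inr w))) := by
    intro w
    rw [← hKn, hB, Finset.filter_filter, Finset.card_filter]
    push_cast
    rw [Fintype.sum_prod_type]
    apply Finset.sum_le_sum
    intro y _
    rw [Finset.sum_eq_single w]
    · split_ifs with h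
      · exact h.1
      · exact hpos _
    · intro b _ hb
      simp [hb]
    · simp
  refine ⟨B, ?_, ?_, ?_, ?_⟩
  · intro p hp
    rcases (hf0 p).eq_or_lt with h | h
    · have := hzero p h.symm
      have h2 := (Finset.mem_filter.1 hp).2
      omega
    · exact h
  · intro w hwr hNw
    have h1 : 1 ≤ gi (Sum.inl w) := by
      refine le_trans ?_ (hgi2 (Sum.inl w)).1
      rw [Int.le_floor]
      simpa [F] using hN w hwr hNw
    by_contra hcon
    push Not at hcon
    have hS := Finset.sum_eq_zero (s := Finset.univ.filter (fun n : V ⊕ V => le w (Sum.elim id id n)))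
      (fun n _ => hgi1 n)
    simp only [divg_apply] at hS
    rw [Finset.sum_comm] at hS
    have hterm : ∀ a, ∑ n ∈ Finset.univ.filter (fun n : V ⊕ V => le w (Sum.elim id id n)),
        ((if t a = n then (1:ℝ) else 0) - (if s a = n then 1 else 0)) * (gi a : ℝ) =
        if a = Sum.inl w then (gi (Sum.inl w) : ℝ) else 0 := by
      intro a
      rw [← Finset.sum_mul, Finset.sum_sub_distrib]
      simp only [Finset.sum_ite_eq, Finset.mem_filter, Finset.mem_univ, true_and]
      rcases a with v | p | v | v
      · simp only [s, t, Sum.elim_inl, Sum.inl.injEq, id]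
        by_cases hv : v = w
        · subst hv
          simp [ht.refl, ht.not_le_par hwr]
        · have : le w v ↔ le w (par v) := by
            by_cases hvr : v = r
            · subst hvr; rw [hr]
            · exact ⟨fun h => ht.le_par v hvr w h (Ne.symm hv), fun h => ht.trans h (ht.par_le v hvr)⟩
          by_cases h9 : le w (par v) <;> simp [hv, this, h9]
      · simp only [s, t, Sum.elim_inl, Sum.elim_inr, id, reduceCtorEq, if_false]
        by_cases hp : f p = 0
        · simp [hzero p hp]
        obtain ⟨hp1, hp2⟩ := hfs p hp
        by_cases h3 : le w p.2
        · simp [h3, ht.trans h3 hp2]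
        · by_cases h4 : le w p.1
          · have h5 : le p.2 w := (ht.chain hp2 h4).resolve_right h3
            have h6 : p.2 ≠ w := by rintro h; exact h3 (h ▸ ht.refl _)
            have h7 : p ∉ B := fun h => hcon p.1 p.2 h h5 h6 h4
            have h8 : gi (Sum.inr (Sum.inl p)) = 0 := by
              have := hpos p
              simp only [hB, Finset.mem_filter, Finset.mem_univ, true_and] at h7
              omega
            simp [h8]
          · simp [h3, h4]
      · by_cases h9 : le w v <;> simp [s, t, h9]
      · by_cases h9 : le w v <;> simp [s, t, h9]
    rw [Finset.sum_congr rfl (fun a _ => hterm a)] at hS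
    simp only [Finset.sum_ite_eq', Finset.mem_univ, if_true] at hS
    have : gi (Sum.inl w) = 0 := by exact_mod_cast hS
    omega
  · intro w hwr hNw
    have h1 : 1 ≤ gi (Sum.inr (Sum.inr (Sum.inl w))) := by
      refine le_trans ?_ (hgi2 (Sum.inr (Sum.inr (Sum.inl w)))).1
      rw [Int.le_floor]
      simpa [F] using hK w hwr hNw
    by_contra hcon
    push Not at hcon
    have h2 : ∑ y, gi (Sum.inr (Sum.inl (y, w))) = 0 := by
      apply Finset.sum_eq_zero
      intro y _
      have h7 := hcon y
      have := hpos (y, w)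
      simp only [hB, Finset.mem_filter, Finset.mem_univ, true_and] at h7
      omega
    have := hKn w
    have := hq0 w
    omega
  · refine le_trans ?_ (le_trans hgi3 ?_)
    · simp only [Fintype.sum_sum_type, c, Sum.elim_inl, Sum.elim_inr, Pi.zero_apply, zero_mul,
        Finset.sum_const_zero, zero_add, one_mul]
      rw [← Finset.sum_add_distrib]
      apply Finset.sum_le_sum
      intro w _
      have h1 : (((B.filter (fun p => p.2 = w)).card : ℤ) : ℝ) ≤
        ((gi (Sum.inr (Sum.inr (Sum.inl w))) + gi (Sum.inr (Sum.inr (Sum.inr w))) : ℤ) : ℝ) := by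
        exact_mod_cast hBw w
      push_cast at h1
      have h2 : ((gi (Sum.inr (Sum.inr (Sum.inl w))) : ℤ) : ℝ) ≤ 1 := by exact_mod_cast hp1 w
      have h3 : 0 ≤ ((gi (Sum.inr (Sum.inr (Sum.inr w))) : ℤ) : ℝ) := by exact_mod_cast hq0 w
      split_ifs
      · rw [zero_mul, zero_add]
        apply max_le h3
        linarith
      · linarith
    · simp only [Fintype.sum_sum_type, c, F, Sum.elim_inl, Sum.elim_inr, Pi.zero_apply, zero_mul,
        Finset.sum_const_zero, zero_add, one_mul]
      rw [← Finset.sum_add_distrib]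
      apply Finset.sum_le_sum
      intro w _
      have := hmm w
      split_ifs
      · simp [hu]
      · linarith

end Rounding

section TourOfFrac

variable {V : Type*} [Fintype V] [DecidableEq V]

open Classical in
lemma tour_of_frac (G : SimpleGraph V) {r : V} {le : V → V → Prop} {par : V → V}
    (ht : RTree r le par) (hr : par r = r) (hadj : ∀ w, w ≠ r → G.Adj (par w) w)
    (f : V × V → ℝ) (hf0 : ∀ p, 0 ≤ f p)
    (hfs : ∀ p, f p ≠ 0 → p.2 ≠ r ∧ le p.2 p.1 ∧ G.Adj p.1 (par p.2)) (N : V → Prop)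
    (hN : ∀ w, w ≠ r → N w → 1 ≤ ∑ p : V × V, if le p.2 w ∧ p.2 ≠ w ∧ le w p.1 then f p else 0)
    (hK : ∀ w, w ≠ r → ¬ N w → 1 ≤ ∑ y, f (y, w)) :
    ∃ W : G.Walk r r, (∀ u, u ∈ W.support) ∧
      3 * (W.length : ℝ) + 4 ≤ 4 * Fintype.card V +
        2 * ∑ w, (if N w then max 0 (∑ y, f (y, w) - 1) else ∑ y, f (y, w)) := by
  obtain ⟨B, hB1, hB2, hB3, hB4⟩ := round_back ht hr f hf0
    (fun p hp => ⟨(hfs p hp).1, (hfs p hp).2.1⟩) N hN hK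
  let Pd : V → Prop := fun w => w ≠ r ∧ N w ∧ ∃ y, (y, w) ∈ B
  have hex : ∀ w, ∃ y, Pd w → (y, w) ∈ B := by
    intro w
    by_cases h : Pd w
    · obtain ⟨y, hy⟩ := h.2.2
      exact ⟨y, fun _ => hy⟩
    · exact ⟨w, fun h' => absurd h' h⟩
  choose b1 hb1 using hex
  obtain ⟨W, hW1, hW2⟩ := gadget_tour (Pd := Pd) (b1 := b1) (B := B) G ht hr hadj N
    (fun w hw => ⟨hw.1, hw.2.1, hb1 w hw⟩)
    (fun y w hyw => hfs (y, w) (hB1 _ hyw).ne') hB2 hB3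
  refine ⟨W, hW1, ?_⟩
  have h1 : (3 * (W.length : ℝ) + 2 * ((Finset.univ.filter Pd).card : ℝ) + 4) ≤
      4 * Fintype.card V + 2 * (B.card : ℝ) := by exact_mod_cast hW2
  have h2 : (B.card : ℝ) = ∑ w, ((B.filter (fun p => p.2 = w)).card : ℝ) := by
    rw [Finset.card_eq_sum_card_fiberwise (f := fun p : V × V => p.2) (t := Finset.univ) (by simp)]
    push_cast
    rfl
  have h3 : ((Finset.univ.filter Pd).card : ℝ) = ∑ w, if Pd w then (1:ℝ) else 0 := by
    rw [Finset.sum_boole]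
  have h4 : (B.card : ℝ) - ((Finset.univ.filter Pd).card : ℝ) ≤
      ∑ w, (if N w then max 0 (((B.filter (fun p => p.2 = w)).card : ℝ) - 1)
          else ((B.filter (fun p => p.2 = w)).card : ℝ)) := by
    rw [h2, h3, ← Finset.sum_sub_distrib]
    apply Finset.sum_le_sum
    intro w _
    by_cases hNw : N w
    · rw [if_pos hNw]
      by_cases hP : Pd w
      · rw [if_pos hP]
        exact le_max_right _ _
      · rw [if_neg hP]
        have : B.filter (fun p => p.2 = w) = ∅ := by
          rw [Finset.filter_eq_empty_iff]
          rintro ⟨y, w'⟩ hp rfl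
          exact hP ⟨(hfs _ (hB1 _ hp).ne').1, hNw, y, hp⟩
        rw [this]
        simp
    · rw [if_neg hNw, if_neg (fun h : Pd w => hNw h.2.1)]
      simp
  linarith

end TourOfFrac

section FracFlow

variable {V : Type*} [Fintype V] [DecidableEq V]

open Classical in
/-- weight of proper back edges into the parent of `w` from the subtree at `w` -/
noncomputable def bet (x : V → V → ℝ) (r : V) (le : V → V → Prop) (par : V → V) (w : V) : ℝ :=
  ∑ y, if w ≠ r ∧ le w y ∧ y ≠ w then x y (par w) else 0

open Classical in
/-- weight of edges from the subtree at `w` to strict ancestors of the parent of `w` -/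
noncomputable def upw (x : V → V → ℝ) (le : V → V → Prop) (par : V → V) (w : V) : ℝ :=
  ∑ y, ∑ a, if le w y ∧ le a (par w) ∧ a ≠ par w then x y a else 0

/-- some edge jumps over the parent of `w` -/
def NN (x : V → V → ℝ) (r : V) (le : V → V → Prop) (par : V → V) (w : V) : Prop :=
  w ≠ r ∧ ∃ y a, le w y ∧ le a (par w) ∧ a ≠ par w ∧ 0 < x y a

open Classical in
/-- extra flow needed for `w` -/
noncomputable def dd (x : V → V → ℝ) (r : V) (le : V → V → Prop) (par : V → V) (w : V) : ℝ :=
  if w = r then 0 else if NN x r le par w then max 0 (1 - upw x le par w)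
    else max 0 (1 - bet x r le par w)

open Classical in
/-- cost charged to `w` -/
noncomputable def psi (x : V → V → ℝ) (r : V) (le : V → V → Prop) (par : V → V) (w : V) : ℝ :=
  (if NN x r le par w then max 0 (bet x r le par w - 1) else bet x r le par w) + dd x r le par w

lemma dd_nonneg (x : V → V → ℝ) (r : V) (le : V → V → Prop) (par : V → V) (w : V) :
    0 ≤ dd x r le par w := by
  unfold dd
  split_ifs
  · exact le_rfl
  · exact le_max_left _ _
  · exact le_max_left _ _

open Classical in
lemma tour_psi (G : SimpleGraph V) {r : V} {le : V → V → Prop} {par : V → V}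
    (ht : RTree r le par) (hr : par r = r) (x : V → V → ℝ) (hx0 : ∀ u v, 0 ≤ x u v)
    (hxs : ∀ u v, x u v = x v u)
    (hxG : ∀ u v, 0 < x u v → G.Adj u v) (hpar : ∀ w, w ≠ r → 0 < x (par w) w) :
    ∃ W : G.Walk r r, (∀ u, u ∈ W.support) ∧
      3 * (W.length : ℝ) + 4 ≤ 4 * Fintype.card V + 2 * ∑ w, psi x r le par w := by
  set β := bet x r le par with hβ
  set d := dd x r le par with hd
  set N := NN x r le par with hNdef
  have hd0 : ∀ w, 0 ≤ d w := dd_nonneg x r le par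
  have hex : ∀ c, ∃ p : V × V, c ≠ r → (p.2 ≠ r ∧ le p.2 p.1 ∧ 0 < x p.1 (par p.2) ∧
      (N c → le p.2 c ∧ p.2 ≠ c ∧ le c p.1) ∧ (¬ N c → p = (c, c))) := by
    intro c
    by_cases hc : c = r
    · exact ⟨(c, c), fun h => absurd hc h⟩
    by_cases hNc : N c
    · obtain ⟨-, y, a, h1, h2, h3, h4⟩ := hNc
      obtain ⟨e, he1, he2, he3⟩ := ht.child h2 (Ne.symm h3)
      have h5 : le e c := ht.trans he3 (ht.par_le c hc)
      have h6 : e ≠ c := by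
        rintro rfl
        exact ht.not_le_par hc he3
      refine ⟨(y, e), fun _ => ⟨he2, ht.trans h5 h1, ?_, fun _ => ⟨h5, h6, h1⟩, fun h => ?_⟩⟩
      · simpa [he1] using h4
      · exact absurd ⟨hc, y, a, h1, h2, h3, h4⟩ h
    · refine ⟨(c, c), fun _ => ⟨hc, ht.refl c, ?_, fun h => absurd h hNc, fun _ => rfl⟩⟩
      rw [hxs]
      exact hpar c hc
  choose b hb using hex
  let f : V × V → ℝ := fun p => (if p.2 ≠ r ∧ le p.2 p.1 ∧ p.1 ≠ p.2 then x p.1 (par p.2) else 0) +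
    ∑ c, if b c = p then d c else 0
  have hdr : d r = 0 := by simp [hd, dd]
  have hB : ∀ w, ∑ y, f (y, w) = β w + ∑ c, if (b c).2 = w then d c else 0 := by
    intro w
    simp only [f, Finset.sum_add_distrib]
    congr 1
    rw [Finset.sum_comm]
    apply Finset.sum_congr rfl
    intro c _
    rw [Finset.sum_eq_single (b c).1]
    · congr 1
      simp [Prod.ext_iff]
    · intro y _ hy
      rw [if_neg]
      rintro h
      exact hy (by rw [h])
    · simp
  have hdsum0 : ∀ p, 0 ≤ ∑ c, if b c = p then d c else 0 := by
    intro p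
    apply Finset.sum_nonneg
    intro c _
    split_ifs
    · exact hd0 c
    · exact le_rfl
  have hdsum1 : ∀ w, 0 ≤ ∑ c, if (b c).2 = w then d c else 0 := by
    intro p
    apply Finset.sum_nonneg
    intro c _
    split_ifs
    · exact hd0 c
    · exact le_rfl
  have hfirst : ∀ p : V × V, 0 ≤ (if p.2 ≠ r ∧ le p.2 p.1 ∧ p.1 ≠ p.2 then x p.1 (par p.2) else 0) := by
    intro p
    split_ifs
    · exact hx0 _ _
    · exact le_rfl
  have hf0 : ∀ p, 0 ≤ f p := fun p => add_nonneg (hfirst p) (hdsum0 p)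
  obtain ⟨W, hW1, hW2⟩ := tour_of_frac G ht hr (fun w hw => hxG _ _ (hpar w hw)) f hf0 (by
    intro p hp
    by_cases h1 : p.2 ≠ r ∧ le p.2 p.1 ∧ p.1 ≠ p.2 ∧ 0 < x p.1 (par p.2)
    · exact ⟨h1.1, h1.2.1, hxG _ _ h1.2.2.2⟩
    · have h2 : (if p.2 ≠ r ∧ le p.2 p.1 ∧ p.1 ≠ p.2 then x p.1 (par p.2) else 0) = 0 := by
        split_ifs with h
        · by_contra h3
          exact h1 ⟨h.1, h.2.1, h.2.2, lt_of_le_of_ne (hx0 _ _) (Ne.symm h3)⟩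
        · rfl
      have h3 : ∑ c, (if b c = p then d c else 0) ≠ 0 := by
        intro h
        apply hp
        simp only [f, h2, h, add_zero]
      obtain ⟨c, -, hc⟩ := Finset.exists_ne_zero_of_sum_ne_zero h3
      have hbc : b c = p := by
        by_contra h
        exact hc (if_neg h)
      have hcr : c ≠ r := by
        rintro rfl
        rw [hdr] at hc
        simp at hc
      have := hb c hcr
      rw [hbc] at this
      exact ⟨this.1, this.2.1, hxG _ _ this.2.2.1⟩) N (by
    intro w hw hNw
    have h1 : (∑ p : V × V, if le p.2 w ∧ p.2 ≠ w ∧ le w p.1 then f p else 0) =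
        (∑ p : V × V, if le p.2 w ∧ p.2 ≠ w ∧ le w p.1 then
          (if p.2 ≠ r ∧ le p.2 p.1 ∧ p.1 ≠ p.2 then x p.1 (par p.2) else 0) else 0) +
        ∑ p : V × V, if le p.2 w ∧ p.2 ≠ w ∧ le w p.1 then
          ∑ c, (if b c = p then d c else 0) else 0 := by
      rw [← Finset.sum_add_distrib]
      apply Finset.sum_congr rfl
      intro p _
      split_ifs <;> simp_all [f]
    have h2 : d w ≤ ∑ p : V × V, if le p.2 w ∧ p.2 ≠ w ∧ le w p.1 then
          ∑ c, (if b c = p then d c else 0) else 0 := by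
      have h3 : d w ≤ ∑ c, (if b c = b w then d c else 0) := by
        have := Finset.single_le_sum (f := fun c => if b c = b w then d c else 0) (s := Finset.univ)
          (fun c _ => by
            split_ifs
            · exact hd0 c
            · exact le_rfl) (Finset.mem_univ w)
        simpa using this
      refine h3.trans ?_
      have := Finset.single_le_sum (f := fun p : V × V => if le p.2 w ∧ p.2 ≠ w ∧ le w p.1 then
          ∑ c, (if b c = p then d c else 0) else 0) (s := Finset.univ)
          (fun p _ => by
            split_ifs
            · exact hdsum0 p
            · exact le_rfl) (Finset.mem_univ (b w))
      rw [if_pos ((hb w hw).2.2.2.1 hNw)] at this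
      exact this
    have h3 : upw x le par w ≤ ∑ p : V × V, if le p.2 w ∧ p.2 ≠ w ∧ le w p.1 then
          (if p.2 ≠ r ∧ le p.2 p.1 ∧ p.1 ≠ p.2 then x p.1 (par p.2) else 0) else 0 := by
      rw [Fintype.sum_prod_type]
      unfold upw
      apply Finset.sum_le_sum
      intro y _
      by_cases hwy : le w y
      swap
      · simp [hwy]
      refine le_trans ?_ (le_of_eq (Finset.sum_fiberwise Finset.univ par _))
      dsimp only
      apply Finset.sum_le_sum
      intro a _
      have hnn : ∀ e, 0 ≤ (if le e w ∧ e ≠ w ∧ le w y then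
          (if e ≠ r ∧ le e y ∧ y ≠ e then x y (par e) else 0) else 0) := by
        intro e
        split_ifs
        · exact hx0 _ _
        · exact le_rfl
        · exact le_rfl
      split_ifs with h4
      · obtain ⟨-, h5, h6⟩ := h4
        obtain ⟨e, he1, he2, he3⟩ := ht.child h5 (Ne.symm h6)
        have h7 : le e w := ht.trans he3 (ht.par_le w hw)
        have h8 : e ≠ w := by
          rintro rfl
          exact ht.not_le_par hw he3
        have h9 : y ≠ e := by
          rintro rfl
          exact h8 (ht.antisymm h7 hwy)
        have := Finset.single_le_sum (f := fun e => if le e w ∧ e ≠ w ∧ le w y then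
          (if e ≠ r ∧ le e y ∧ y ≠ e then x y (par e) else 0) else 0)
          (s := Finset.univ.filter (fun e => par e = a)) (fun e _ => hnn e)
          (a := e) (by simp [he1])
        rw [if_pos ⟨h7, h8, hwy⟩, if_pos ⟨he2, ht.trans h7 hwy, h9⟩, he1] at this
        exact this
      · exact Finset.sum_nonneg (fun e _ => hnn e)
    have h4 : d w = max 0 (1 - upw x le par w) := by
      simp only [hd, dd, if_neg hw]
      rw [if_pos hNw]
    have h5 := le_max_right 0 (1 - upw x le par w)
    linarith) (by
    intro w hw hNw
    rw [hB]
    have h2 : d w ≤ ∑ c, if (b c).2 = w then d c else 0 := by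
      have := Finset.single_le_sum (f := fun c => if (b c).2 = w then d c else 0) (s := Finset.univ)
          (fun c _ => by
            split_ifs
            · exact hd0 c
            · exact le_rfl) (Finset.mem_univ w)
      rw [if_pos (by rw [(hb w hw).2.2.2.2 hNw])] at this
      exact this
    have h4 : d w = max 0 (1 - β w) := by
      simp only [hd, dd, if_neg hw]
      rw [if_neg hNw]
    have h5 := le_max_right 0 (1 - β w)
    linarith)
  refine ⟨W, hW1, hW2.trans ?_⟩
  have h1 : ∑ w, (if N w then max 0 (∑ y, f (y, w) - 1) else ∑ y, f (y, w)) ≤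
      ∑ w, ((if N w then max 0 (β w - 1) else β w) + ∑ c, if (b c).2 = w then d c else 0) := by
    apply Finset.sum_le_sum
    intro w _
    rw [hB]
    have := hdsum1 w
    split_ifs
    · apply max_le
      · have := le_max_left 0 (β w - 1)
        linarith
      · have := le_max_right 0 (β w - 1)
        linarith
    · exact le_rfl
  have h2 : ∑ w, ∑ c, (if (b c).2 = w then d c else 0) = ∑ c, d c := by
    rw [Finset.sum_comm]
    simp
  rw [Finset.sum_add_distrib, h2, ← Finset.sum_add_distrib] at h1
  have h3 : ∑ w, ((if N w then max 0 (β w - 1) else β w) + d w) = ∑ w, psi x r le par w := rfl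
  rw [h3] at h1
  linarith

end FracFlow

section CostBound

lemma k_ineq (k : ℕ) : 6 * ((k : ℝ) - 1) ≤ k * (k + 1) := by
  have h : (6 * ((k : ℤ) - 1)) ≤ k * (k + 1) := by
    rcases le_or_gt (k : ℤ) 2 with h | h
    · nlinarith [Int.natCast_nonneg k, mul_nonneg (sub_nonneg.2 h) (by omega : (0:ℤ) ≤ 3 - k)]
    · nlinarith [mul_nonneg (by omega : (0:ℤ) ≤ (k:ℤ) - 3) (by omega : (0:ℤ) ≤ (k:ℤ) - 2)]
  exact_mod_cast h

lemma active1 (k : ℕ) (β s d X : ℝ) (hβs : β ≤ s) (hβ : β * (k + 1) ≤ k * s) (hs : 1 < s)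
    (hd : d ≤ max 0 (X - s - 1)) (hsX : s ≤ X) (hX : 2 ≤ X) :
    max 0 (β - 1) + d ≤ (k : ℝ) / 6 + X - 2 := by
  have hk0 : (0:ℝ) ≤ k := Nat.cast_nonneg k
  have hk := k_ineq k
  rcases le_total β 1 with h1 | h1
  · rw [max_eq_left (by linarith)]
    rcases le_total 0 (X - s - 1) with h2 | h2
    · rw [max_eq_right h2] at hd
      linarith
    · rw [max_eq_left h2] at hd
      linarith
  · rw [max_eq_right (by linarith)]
    rcases le_total 0 (X - s - 1) with h2 | h2
    · rw [max_eq_right h2] at hd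
      linarith
    · rw [max_eq_left h2] at hd
      have : (β + 1) * (k + 1) ≤ ((k : ℝ) / 6 + X) * (k + 1) := by nlinarith
      have := le_of_mul_le_mul_right this (by linarith)
      linarith

lemma active2 (k : ℕ) (β s d : ℝ) (hβs : β ≤ s) (hβ : β * (k + 1) ≤ k * s) (hs : 1 < s)
    (hd1 : d ≤ 1) (hd : d ≤ s - 1) :
    max 0 (β - 1) + d ≤ (k : ℝ) / 6 + s - 1 := by
  have hk0 : (0:ℝ) ≤ k := Nat.cast_nonneg k
  have hk := k_ineq k
  rcases le_total β 1 with h1 | h1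
  · rw [max_eq_left (by linarith)]
    linarith
  · rw [max_eq_right (by linarith)]
    rcases le_total s 2 with h2 | h2
    · have : β * (k + 1) ≤ ((k : ℝ) / 6 + 1) * (k + 1) := by nlinarith
      have := le_of_mul_le_mul_right this (by linarith)
      linarith
    · have : (β + 1) * (k + 1) ≤ ((k : ℝ) / 6 + s) * (k + 1) := by nlinarith
      have := le_of_mul_le_mul_right this (by linarith)
      linarith

lemma children_cost {ι : Type*} (C : Finset ι) (k : ι → ℕ) (β s d : ι → ℝ) (X : ℝ)
    (hβs : ∀ i ∈ C, β i ≤ s i)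
    (hβ : ∀ i ∈ C, β i * (k i + 1) ≤ k i * s i) (hd1 : ∀ i ∈ C, d i ≤ 1)
    (hd2 : ∀ i ∈ C, d i ≤ max 0 (s i - 1)) (hd3 : ∀ i ∈ C, d i ≤ max 0 (X - s i - 1))
    (hs0 : ∀ i ∈ C, 0 ≤ s i) (hX : 2 ≤ X) (hsum : ∑ i ∈ C, s i ≤ X) :
    ∑ i ∈ C, (max 0 (β i - 1) + d i) ≤ ∑ i ∈ C, (k i : ℝ) / 6 + X - 2 := by
  classical
  set A := C.filter (fun i => 1 < s i) with hA
  have hAC : A ⊆ C := Finset.filter_subset _ _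
  have h1 : ∑ i ∈ C, (max 0 (β i - 1) + d i) ≤ ∑ i ∈ A, (max 0 (β i - 1) + d i) := by
    rw [← Finset.sum_filter_add_sum_filter_not C (fun i => 1 < s i)]
    have : ∑ i ∈ C.filter (fun i => ¬ 1 < s i), (max 0 (β i - 1) + d i) ≤ 0 := by
      apply Finset.sum_nonpos
      intro i hi
      obtain ⟨hi1, hi2⟩ := Finset.mem_filter.1 hi
      have h2 := hd2 i hi1
      have h3 := hβs i hi1
      rw [max_eq_left (by linarith)] at h2
      rw [max_eq_left (by linarith)]
      linarith
    linarith
  have h2 : ∑ i ∈ A, (k i : ℝ) / 6 ≤ ∑ i ∈ C, (k i : ℝ) / 6 :=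
    Finset.sum_le_sum_of_subset_of_nonneg hAC (fun i _ _ => by positivity)
  have h3 : ∑ i ∈ A, s i ≤ ∑ i ∈ C, s i :=
    Finset.sum_le_sum_of_subset_of_nonneg hAC (fun i hi _ => hs0 i hi)
  have h4 : ∀ i ∈ A, 1 < s i := fun i hi => (Finset.mem_filter.1 hi).2
  rcases le_or_gt A.card 1 with hc | hc
  · rcases Nat.lt_or_ge A.card 1 with h0 | h0
    · have h : A = ∅ := Finset.card_eq_zero.1 (by omega)
      rw [h] at h1 h2
      simp only [Finset.sum_empty] at h1 h2
      linarith
    · obtain ⟨i, h⟩ := Finset.card_eq_one.1 (le_antisymm hc h0)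
      rw [h] at h1 h2 h3
      simp only [Finset.sum_singleton] at h1 h2 h3
      have hiA : i ∈ A := by rw [h]; simp
      have hiC := hAC hiA
      have := active1 (k i) (β i) (s i) (d i) X (hβs i hiC) (hβ i hiC) (h4 i hiA) (hd3 i hiC)
        (by linarith) hX
      linarith
  · have h5 : ∑ i ∈ A, (max 0 (β i - 1) + d i) ≤ ∑ i ∈ A, ((k i : ℝ) / 6 + s i - 1) := by
      apply Finset.sum_le_sum
      intro i hi
      have hiC := hAC hi
      have h6 := h4 i hi
      have h7 := hd2 i hiC
      rw [max_eq_right (by linarith)] at h7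
      exact active2 _ _ _ _ (hβs i hiC) (hβ i hiC) h6 (hd1 i hiC) h7
    rw [Finset.sum_sub_distrib, Finset.sum_add_distrib (f := fun i => (k i : ℝ) / 6)] at h5
    have h6 : (2:ℝ) ≤ A.card := by exact_mod_cast hc
    simp only [Finset.sum_const, nsmul_eq_mul, mul_one] at h5
    linarith

end CostBound

section Cuts

variable {V : Type*} [Fintype V] [DecidableEq V]

open Classical in
/-- weight between the subtree at `w` and its parent -/
noncomputable def sw (x : V → V → ℝ) (le : V → V → Prop) (par : V → V) (w : V) : ℝ :=
  ∑ y ∈ Finset.univ.filter (fun y => le w y), x y (par w)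

open Classical in
/-- number of proper back edges -/
noncomputable def kk (x : V → V → ℝ) (le : V → V → Prop) (par : V → V) (w : V) : ℕ :=
  (Finset.univ.filter (fun y => le w y ∧ y ≠ w ∧ 0 < x y (par w))).card

open Classical in
/-- children of `v` -/
noncomputable def chd (r : V) (par : V → V) (v : V) : Finset V :=
  Finset.univ.filter (fun c => c ≠ r ∧ par c = v)

variable {r : V} {le : V → V → Prop} {par : V → V} {x : V → V → ℝ}

open Classical in
lemma upw_eq (w : V) : upw x le par w = ∑ y ∈ Finset.univ.filter (fun y => le w y),
    ∑ a, if le a (par w) ∧ a ≠ par w then x y a else 0 := by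
  unfold upw
  rw [Finset.sum_filter]
  apply Finset.sum_congr rfl
  intro y _
  by_cases h : le w y <;> simp [h]

lemma upw_nonneg (hx0 : ∀ u v, 0 ≤ x u v) (w : V) : 0 ≤ upw x le par w := by
  unfold upw
  refine Finset.sum_nonneg (fun y _ => Finset.sum_nonneg (fun a _ => ?_))
  split_ifs
  · exact hx0 _ _
  · exact le_rfl

lemma upw_zero (hx0 : ∀ u v, 0 ≤ x u v) {w : V} (hw : w ≠ r) (hN : ¬ NN x r le par w) :
    upw x le par w = 0 := by
  unfold upw
  refine Finset.sum_eq_zero (fun y _ => Finset.sum_eq_zero (fun a _ => ?_))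
  split_ifs with h
  · by_contra h2
    exact hN ⟨hw, y, a, h.1, h.2.1, h.2.2, lt_of_le_of_ne (hx0 _ _) (Ne.symm h2)⟩
  · rfl

/-- an edge leaving a subtree goes to an ancestor -/
lemma leave (ht : RTree r le par) (hcomp : ∀ u v, 0 < x u v → le u v ∨ le v u) {w u z : V} (hw : w ≠ r)
    (hu : le w u) (hz : ¬ le w z) (hx : 0 < x u z) : le z (par w) := by
  have h1 : le z u := by
    rcases hcomp _ _ hx with h | h
    · exact absurd (ht.trans hu h) hz
    · exact h
  have h2 : le z w := (ht.chain h1 hu).resolve_right hz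
  refine ht.le_par w hw z h2 ?_
  rintro rfl
  exact hz (ht.refl _)

open Classical in
lemma cut_down (ht : RTree r le par) (hx0 : ∀ u v, 0 ≤ x u v)
    (hcomp : ∀ u v, 0 < x u v → le u v ∨ le v u)
    (hcut : ∀ S : Finset V, S.Nonempty → r ∉ S → 2 ≤ ∑ u ∈ S, ∑ v ∈ Sᶜ, x u v) {w : V} (hw : w ≠ r) :
    2 ≤ sw x le par w + upw x le par w := by
  have h1 := hcut (Finset.univ.filter (fun y => le w y)) ⟨w, by simp [ht.refl]⟩ (by
    simp only [Finset.mem_filter, Finset.mem_univ, true_and]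
    intro h
    exact hw (ht.antisymm h (ht.root w)))
  refine h1.trans ?_
  rw [upw_eq, sw, ← Finset.sum_add_distrib]
  apply Finset.sum_le_sum
  intro y hy
  simp only [Finset.mem_filter, Finset.mem_univ, true_and] at hy
  have h2 : x y (par w) = ∑ a, if a = par w then x y a else 0 := by simp
  rw [h2, ← Finset.sum_add_distrib, Finset.compl_filter, Finset.sum_filter]
  apply Finset.sum_le_sum
  intro z _
  have h0 := hx0 y z
  rcases h0.eq_or_lt with h | h
  · simp [← h]
  by_cases hz : le w z
  · rw [if_neg (by simpa using hz)]
    split_ifs <;> linarith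
  · rw [if_pos hz]
    have := leave ht hcomp hw hy hz h
    by_cases h3 : z = par w
    · simp [h3]
    · simp [h3, this]

open Classical in
lemma kids_sum (ht : RTree r le par) {v : V} (C : Finset V) (hC : ∀ c ∈ C, c ≠ r ∧ par c = v) (h : V → ℝ) :
    ∑ u ∈ C.biUnion (fun c => Finset.univ.filter (fun y => le c y)), h u =
      ∑ c ∈ C, ∑ y ∈ Finset.univ.filter (fun y => le c y), h y := by
  apply Finset.sum_biUnion
  intro c hc d hd hcd
  rw [Function.onFun, Finset.disjoint_left]
  intro y h1 h2
  simp only [Finset.mem_filter, Finset.mem_univ, true_and] at h1 h2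
  exact hcd (ht.child_unique (hC c hc).1 (hC d hd).1 ((hC c hc).2.trans (hC d hd).2.symm) h1 h2)

open Classical in
lemma sw_sum_le (ht : RTree r le par) (hx0 : ∀ u v, 0 ≤ x u v) (hxs : ∀ u v, x u v = x v u)
    {v : V} (C : Finset V) (hC : ∀ c ∈ C, c ≠ r ∧ par c = v) :
    ∑ c ∈ C, sw x le par c ≤ ∑ u, x v u := by
  have h1 := kids_sum ht C hC (fun u => x v u)
  have h2 : ∑ c ∈ C, sw x le par c = ∑ c ∈ C, ∑ y ∈ Finset.univ.filter (fun y => le c y), x v y := by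
    apply Finset.sum_congr rfl
    intro c hc
    unfold sw
    rw [(hC c hc).2]
    exact Finset.sum_congr rfl (fun y _ => hxs _ _)
  rw [h2, ← h1]
  exact Finset.sum_le_sum_of_subset_of_nonneg (Finset.subset_univ _) (fun _ _ _ => hx0 _ _)

open Classical in
lemma cut_star (ht : RTree r le par) (hx0 : ∀ u v, 0 ≤ x u v) (hxs : ∀ u v, x u v = x v u)
    (hxd : ∀ v, x v v = 0)
    (hcomp : ∀ u v, 0 < x u v → le u v ∨ le v u)
    (hcut : ∀ S : Finset V, S.Nonempty → r ∉ S → 2 ≤ ∑ u ∈ S, ∑ v ∈ Sᶜ, x u v) {v : V} (hv : v ≠ r)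
    (C : Finset V) (hC : ∀ c ∈ C, c ≠ r ∧ par c = v) :
    2 ≤ ∑ u, x v u - ∑ c ∈ C, sw x le par c + ∑ c ∈ C, upw x le par c := by
  set D := C.biUnion (fun c => Finset.univ.filter (fun y => le c y)) with hD
  have hmem : ∀ u, u ∈ D ↔ ∃ c ∈ C, le c u := by
    intro u
    simp [hD]
  have hvD : v ∉ D := by
    rw [hmem]
    rintro ⟨c, hc, h⟩
    rw [← (hC c hc).2] at h
    exact ht.not_le_par (hC c hc).1 h
  have h1 := hcut (insert v D) ⟨v, by simp⟩ (by
    rw [Finset.mem_insert, hmem]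
    rintro (h | ⟨c, hc, h⟩)
    · exact hv h.symm
    · exact (hC c hc).1 (ht.antisymm h (ht.root c)))
  rw [Finset.sum_insert hvD, hD, kids_sum ht C hC, ← hD] at h1
  have h2 : ∑ z ∈ (insert v D)ᶜ, x v z = ∑ u, x v u - ∑ c ∈ C, sw x le par c := by
    have h3 := Finset.sum_add_sum_compl (insert v D) (fun z => x v z)
    rw [Finset.sum_insert hvD, hxd, hD, kids_sum ht C hC, ← hD] at h3
    have h4 : ∑ c ∈ C, sw x le par c = ∑ c ∈ C, ∑ y ∈ Finset.univ.filter (fun y => le c y), x v y := by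
      apply Finset.sum_congr rfl
      intro c hc
      unfold sw
      rw [(hC c hc).2]
      exact Finset.sum_congr rfl (fun y _ => hxs _ _)
    linarith
  have h5 : ∑ c ∈ C, ∑ y ∈ Finset.univ.filter (fun y => le c y), ∑ z ∈ (insert v D)ᶜ, x y z ≤
      ∑ c ∈ C, upw x le par c := by
    apply Finset.sum_le_sum
    intro c hc
    rw [upw_eq]
    apply Finset.sum_le_sum
    intro y hy
    simp only [Finset.mem_filter, Finset.mem_univ, true_and] at hy
    rw [← Finset.sum_filter_add_sum_filter_not Finset.univ (fun z => z ∈ (insert v D)ᶜ)]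
    have h6 : (Finset.univ.filter (fun z => z ∈ (insert v D)ᶜ)) = (insert v D)ᶜ := by
      ext z; simp
    rw [h6]
    have h7 : 0 ≤ ∑ z ∈ Finset.univ.filter (fun z => ¬ z ∈ (insert v D)ᶜ),
        (if le z (par c) ∧ z ≠ par c then x y z else 0) := by
      apply Finset.sum_nonneg
      intro z _
      split_ifs
      · exact hx0 _ _
      · exact le_rfl
    have h8 : ∑ z ∈ (insert v D)ᶜ, x y z ≤ ∑ z ∈ (insert v D)ᶜ,
        (if le z (par c) ∧ z ≠ par c then x y z else 0) := by
      apply Finset.sum_le_sum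
      intro z hz
      rw [Finset.mem_compl, Finset.mem_insert, hmem] at hz
      push Not at hz
      rcases (hx0 y z).eq_or_lt with h | h
      · simp [← h]
      · rw [if_pos ⟨leave ht hcomp (hC c hc).1 hy (hz.2 c hc) h, by rw [(hC c hc).2]; exact hz.1⟩]
    linarith
  linarith

open Classical in
lemma sw_eq (ht : RTree r le par) {w : V} (hw : w ≠ r) :
    sw x le par w = x w (par w) + bet x r le par w := by
  unfold sw bet
  rw [Finset.sum_filter]
  have h2 : x w (par w) = ∑ a, if a = w then x a (par w) else 0 := by simp
  rw [h2, ← Finset.sum_add_distrib]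
  apply Finset.sum_congr rfl
  intro y _
  by_cases h : y = w
  · subst h
    simp [ht.refl]
  · simp [h, hw]

lemma bet_nonneg (hx0 : ∀ u v, 0 ≤ x u v) (w : V) : 0 ≤ bet x r le par w := by
  unfold bet
  refine Finset.sum_nonneg (fun y _ => ?_)
  split_ifs
  · exact hx0 _ _
  · exact le_rfl

open Classical in
lemma bet_le (hx0 : ∀ u v, 0 ≤ x u v)
    (hgr : ∀ w u, w ≠ r → le w u → x u (par w) ≤ x w (par w)) {w : V} (hw : w ≠ r) :
    bet x r le par w ≤ kk x le par w * x w (par w) := by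
  have h1 : (kk x le par w : ℝ) * x w (par w) =
      ∑ y, if le w y ∧ y ≠ w ∧ 0 < x y (par w) then x w (par w) else 0 := by
    rw [← Finset.sum_filter, Finset.sum_const, nsmul_eq_mul]
    rfl
  rw [h1]
  unfold bet
  apply Finset.sum_le_sum
  intro y _
  by_cases h2 : 0 < x y (par w)
  · split_ifs with h3 h4 h5
    · exact hgr w y hw h3.2.1
    · exact absurd ⟨h3.2.1, h3.2.2, h2⟩ h4
    · exact hx0 _ _
    · exact le_rfl
  · have h3 : x y (par w) = 0 := le_antisymm (not_lt.1 h2) (hx0 _ _)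
    rw [h3]
    simp

lemma bet_kk (ht : RTree r le par) (hx0 : ∀ u v, 0 ≤ x u v)
    (hgr : ∀ w u, w ≠ r → le w u → x u (par w) ≤ x w (par w)) {w : V} (hw : w ≠ r) :
    bet x r le par w * (kk x le par w + 1) ≤ kk x le par w * sw x le par w := by
  have h1 := bet_le hx0 hgr hw
  rw [sw_eq ht hw]
  nlinarith

end Cuts

section PsiSum

variable {V : Type*} [Fintype V] [DecidableEq V]
variable {r : V} {le : V → V → Prop} {par : V → V} {x : V → V → ℝ}

lemma psi_root : psi x r le par r = 0 := by
  unfold psi dd bet NN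
  simp

lemma psi_K (ht : RTree r le par) (hx0 : ∀ u v, 0 ≤ x u v)
    (hcomp : ∀ u v, 0 < x u v → le u v ∨ le v u)
    (hcut : ∀ S : Finset V, S.Nonempty → r ∉ S → 2 ≤ ∑ u ∈ S, ∑ v ∈ Sᶜ, x u v) {w : V} (hw : w ≠ r)
    (hN : ¬ NN x r le par w) : psi x r le par w ≤ sw x le par w := by
  have h1 := cut_down ht hx0 hcomp hcut hw
  rw [upw_zero hx0 hw hN] at h1
  have h2 := sw_eq (x := x) ht hw
  have h3 := hx0 w (par w)
  unfold psi dd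
  rw [if_neg hN, if_neg hw, if_neg hN]
  rcases le_total 0 (1 - bet x r le par w) with h | h
  · rw [max_eq_right h]; linarith
  · rw [max_eq_left h]; linarith

lemma psi_N {w : V} (hN : NN x r le par w) : psi x r le par w =
    max 0 (bet x r le par w - 1) + max 0 (1 - upw x le par w) := by
  unfold psi dd
  rw [if_pos hN, if_neg hN.1, if_pos hN]

open Classical in
lemma psi_children (ht : RTree r le par) (hx0 : ∀ u v, 0 ≤ x u v) (hxs : ∀ u v, x u v = x v u)
    (hxd : ∀ v, x v v = 0)
    (hcomp : ∀ u v, 0 < x u v → le u v ∨ le v u)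
    (hgr : ∀ w u, w ≠ r → le w u → x u (par w) ≤ x w (par w))
    (hcut : ∀ S : Finset V, S.Nonempty → r ∉ S → 2 ≤ ∑ u ∈ S, ∑ v ∈ Sᶜ, x u v) {v : V} (hv : v ≠ r) :
    ∑ w ∈ chd r par v, psi x r le par w ≤
      ∑ w ∈ chd r par v, (kk x le par w : ℝ) / 6 + ∑ u, x v u - 2 := by
  set C := chd r par v with hCdef
  have hC : ∀ c ∈ C, c ≠ r ∧ par c = v := by
    intro c hc
    simpa [hCdef, chd] using hc
  set CN := C.filter (fun c => NN x r le par c) with hCN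
  set CK := C.filter (fun c => ¬ NN x r le par c) with hCK
  have hCN' : ∀ c ∈ CN, c ∈ C ∧ NN x r le par c := fun c hc => Finset.mem_filter.1 hc
  have hCK' : ∀ c ∈ CK, c ∈ C ∧ ¬ NN x r le par c := fun c hc => Finset.mem_filter.1 hc
  have hsw0 : ∀ c, 0 ≤ sw x le par c := fun c => Finset.sum_nonneg (fun y _ => hx0 _ _)
  have hupK : ∑ c ∈ CK, upw x le par c = 0 := Finset.sum_eq_zero (fun c hc =>
    upw_zero hx0 (hC c (hCK' c hc).1).1 (hCK' c hc).2)
  have hK : ∑ c ∈ CK, psi x r le par c ≤ ∑ c ∈ CK, sw x le par c :=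
    Finset.sum_le_sum (fun c hc => psi_K ht hx0 hcomp hcut (hC c (hCK' c hc).1).1 (hCK' c hc).2)
  have hX2 := cut_star ht hx0 hxs hxd hcomp hcut hv CK (fun c hc => hC c (hCK' c hc).1)
  have hsum := sw_sum_le ht hx0 hxs C hC
  rw [← Finset.sum_filter_add_sum_filter_not C (fun c => NN x r le par c)] at hsum
  rw [hupK] at hX2
  have hmain := children_cost CN (kk x le par) (bet x r le par) (sw x le par)
    (fun w => max 0 (1 - upw x le par w)) (∑ u, x v u - ∑ c ∈ CK, sw x le par c)
    (fun c hc => by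
      have h2 := sw_eq (x := x) ht (hC c (hCN' c hc).1).1
      have h3 := hx0 c (par c)
      linarith)
    (fun c hc => bet_kk ht hx0 hgr (hC c (hCN' c hc).1).1)
    (fun c hc => max_le zero_le_one (by linarith [upw_nonneg (le := le) (par := par) hx0 c]))
    (fun c hc => max_le_max le_rfl (by
      linarith [cut_down ht hx0 hcomp hcut (hC c (hCN' c hc).1).1]))
    (fun c hc => max_le_max le_rfl (by
      have hcK : c ∉ CK := fun h => (hCK' c h).2 (hCN' c hc).2
      have h1 := cut_star ht hx0 hxs hxd hcomp hcut hv (insert c CK) (by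
        intro c' hc'
        rcases Finset.mem_insert.1 hc' with rfl | h
        · exact hC _ (hCN' _ hc).1
        · exact hC _ (hCK' _ h).1)
      rw [Finset.sum_insert hcK, Finset.sum_insert hcK, hupK] at h1
      linarith))
    (fun c _ => hsw0 c) (by linarith) (by linarith)
  have hN : ∑ c ∈ CN, psi x r le par c =
      ∑ c ∈ CN, (max 0 (bet x r le par c - 1) + max 0 (1 - upw x le par c)) :=
    Finset.sum_congr rfl (fun c hc => psi_N (hCN' c hc).2)
  have hk : ∑ w ∈ CN, (kk x le par w : ℝ) / 6 ≤ ∑ w ∈ C, (kk x le par w : ℝ) / 6 :=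
    Finset.sum_le_sum_of_subset_of_nonneg (Finset.filter_subset _ _) (fun i _ _ => by positivity)
  rw [← Finset.sum_filter_add_sum_filter_not C (fun c => NN x r le par c)]
  linarith

open Classical in
lemma psi_children_root (ht : RTree r le par) (hx0 : ∀ u v, 0 ≤ x u v) (hxs : ∀ u v, x u v = x v u)
    (hcomp : ∀ u v, 0 < x u v → le u v ∨ le v u)
    (hcut : ∀ S : Finset V, S.Nonempty → r ∉ S → 2 ≤ ∑ u ∈ S, ∑ v ∈ Sᶜ, x u v) :
    ∑ w ∈ chd r par r, psi x r le par w ≤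
      ∑ w ∈ chd r par r, (kk x le par w : ℝ) / 6 + ∑ u, x r u := by
  set C := chd r par r with hCdef
  have hC : ∀ c ∈ C, c ≠ r ∧ par c = r := by
    intro c hc
    simpa [hCdef, chd] using hc
  have hsum := sw_sum_le ht hx0 hxs C hC
  have h1 : ∑ c ∈ C, psi x r le par c ≤ ∑ c ∈ C, sw x le par c :=
    Finset.sum_le_sum (fun c hc => psi_K ht hx0 hcomp hcut (hC c hc).1 (by
      rintro ⟨-, y, a, -, h2, h3, -⟩
      rw [(hC c hc).2] at h2 h3
      exact h3 (ht.antisymm h2 (ht.root a))))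
  have h2 : 0 ≤ ∑ w ∈ C, (kk x le par w : ℝ) / 6 := Finset.sum_nonneg (fun i _ => by positivity)
  linarith

open Classical in
lemma sum_chd (h : V → ℝ) (hr0 : h r = 0) : ∑ w, h w = ∑ v, ∑ w ∈ chd r par v, h w := by
  have h1 : ∀ v, ∑ w ∈ chd r par v, h w = ∑ w ∈ Finset.univ.filter (fun w => par w = v), h w := by
    intro v
    apply Finset.sum_subset
    · intro w hw
      simp only [chd, Finset.mem_filter, Finset.mem_univ, true_and] at hw ⊢
      exact hw.2
    · intro w hw hw2
      simp only [chd, Finset.mem_filter, Finset.mem_univ, true_and] at hw hw2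
      have : w = r := by
        by_contra h
        exact hw2 ⟨h, hw⟩
      rw [this, hr0]
  simp only [h1]
  exact (Finset.sum_fiberwise Finset.univ par h).symm

open Classical in
lemma kk_sum (ht : RTree r le par) (hxs : ∀ u v, x u v = x v u) (hpar : ∀ w, w ≠ r → 0 < x (par w) w)
    (M : Finset (Sym2 V)) (hM : ∀ u v, 0 < x u v → s(u, v) ∈ M) :
    ∑ w ∈ Finset.univ.erase r, (kk x le par w + 1) ≤ M.card := by
  let P : Finset (V × V) := Finset.univ.filter (fun p => p.1 ≠ r ∧ le p.1 p.2 ∧ 0 < x p.2 (par p.1))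
  have h1 : ∀ w, w ≠ r → kk x le par w + 1 =
      (Finset.univ.filter (fun y => le w y ∧ 0 < x y (par w))).card := by
    intro w hw
    have : (Finset.univ.filter (fun y => le w y ∧ 0 < x y (par w))) =
        insert w (Finset.univ.filter (fun y => le w y ∧ y ≠ w ∧ 0 < x y (par w))) := by
      ext y
      simp only [Finset.mem_filter, Finset.mem_univ, true_and, Finset.mem_insert]
      by_cases h : y = w
      · subst h
        simp [ht.refl, hxs y, hpar y hw]
      · simp [h]
    rw [this, Finset.card_insert_of_notMem (by simp)]
    rfl
  have h2 : ∑ w ∈ Finset.univ.erase r, (kk x le par w + 1) = P.card := by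
    rw [Finset.sum_congr rfl (fun w hw => h1 w (Finset.ne_of_mem_erase hw)), ← Finset.card_sigma]
    apply Finset.card_bij (fun p _ => (p.1, p.2))
    · rintro ⟨w, y⟩ h
      simpa [P] using h
    · rintro ⟨w, y⟩ _ ⟨w', y'⟩ _ h
      simp only [Prod.mk.injEq] at h
      obtain ⟨rfl, rfl⟩ := h
      rfl
    · rintro ⟨w, y⟩ h
      refine ⟨⟨w, y⟩, ?_, rfl⟩
      simpa [P] using h
  rw [h2]
  apply Finset.card_le_card_of_injOn (fun p => s(p.2, par p.1))
  · intro p hp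
    simp only [P, Finset.coe_filter, Set.mem_setOf_eq, Finset.mem_univ, true_and] at hp
    exact hM _ _ hp.2.2
  · rintro ⟨w, y⟩ hp ⟨w', y'⟩ hp' h
    simp only [P, Finset.coe_filter, Set.mem_setOf_eq, Finset.mem_univ, true_and] at hp hp'
    simp only [Sym2.eq_iff] at h
    rcases h with ⟨rfl, h⟩ | ⟨h3, h4⟩
    · rw [ht.child_unique hp.1 hp'.1 h hp.2.1 hp'.2.1]
    · exfalso
      have a1 : le w (par w') := h3 ▸ hp.2.1
      have a2 : le w' (par w) := by rw [h4]; exact hp'.2.1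
      have a3 : le w w' := ht.trans a1 (ht.par_le w' hp'.1)
      exact ht.not_le_par hp.1 (ht.trans a3 a2)

open Classical in
lemma psi_total (ht : RTree r le par) (hx0 : ∀ u v, 0 ≤ x u v) (hxs : ∀ u v, x u v = x v u)
    (hxd : ∀ v, x v v = 0)
    (hcomp : ∀ u v, 0 < x u v → le u v ∨ le v u)
    (hgr : ∀ w u, w ≠ r → le w u → x u (par w) ≤ x w (par w))
    (hpar : ∀ w, w ≠ r → 0 < x (par w) w)
    (hcut : ∀ S : Finset V, S.Nonempty → r ∉ S → 2 ≤ ∑ u ∈ S, ∑ v ∈ Sᶜ, x u v)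
    (M : Finset (Sym2 V)) (hM : ∀ u v, 0 < x u v → s(u, v) ∈ M)
    (hMc : M.card ≤ 2 * (Fintype.card V - 1)) :
    ∑ w, psi x r le par w ≤ ((Fintype.card V : ℝ) - 1) / 6 + ∑ v, ∑ u, x v u
      - 2 * ((Fintype.card V : ℝ) - 1) := by
  have hc1 : 1 ≤ Fintype.card V := Fintype.card_pos_iff.2 ⟨r⟩
  have hcard : ((Finset.univ.erase r).card : ℝ) = (Fintype.card V : ℝ) - 1 := by
    rw [Finset.card_erase_of_mem (Finset.mem_univ r), Finset.card_univ, Nat.cast_sub hc1, Nat.cast_one]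
  rw [sum_chd (par := par) (r := r) _ psi_root, ← Finset.add_sum_erase Finset.univ _ (Finset.mem_univ r)]
  have h1 := psi_children_root (x := x) ht hx0 hxs hcomp hcut
  have h2 : ∑ v ∈ Finset.univ.erase r, ∑ w ∈ chd r par v, psi x r le par w ≤
      ∑ v ∈ Finset.univ.erase r, (∑ w ∈ chd r par v, (kk x le par w : ℝ) / 6 + ∑ u, x v u - 2) :=
    Finset.sum_le_sum (fun v hv => psi_children ht hx0 hxs hxd hcomp hgr hcut (Finset.ne_of_mem_erase hv))
  rw [Finset.sum_sub_distrib, Finset.sum_add_distrib, Finset.sum_const, nsmul_eq_mul, hcard] at h2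
  have h3 := Finset.add_sum_erase Finset.univ (fun v => ∑ u, x v u) (Finset.mem_univ r)
  have h4 := Finset.add_sum_erase Finset.univ (fun v => ∑ w ∈ chd r par v, (kk x le par w : ℝ) / 6)
    (Finset.mem_univ r)
  have h5 : ∑ v, ∑ w ∈ chd r par v, (kk x le par w : ℝ) / 6 ≤
      ((Fintype.card V : ℝ) - 1) / 6 := by
    have h6 : ∑ v, ∑ w ∈ chd r par v, (kk x le par w : ℝ) / 6 =
        ∑ w ∈ Finset.univ.erase r, (kk x le par w : ℝ) / 6 := by
      have := sum_chd (par := par) (r := r) (fun w => if w = r then 0 else (kk x le par w : ℝ) / 6) (by simp)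
      have h7 : ∀ v, ∑ w ∈ chd r par v, (kk x le par w : ℝ) / 6 =
          ∑ w ∈ chd r par v, (if w = r then 0 else (kk x le par w : ℝ) / 6) := by
        intro v
        apply Finset.sum_congr rfl
        intro w hw
        rw [if_neg]
        simp only [chd, Finset.mem_filter, Finset.mem_univ, true_and] at hw
        exact hw.1
      simp only [h7]
      rw [← this, ← Finset.add_sum_erase Finset.univ _ (Finset.mem_univ r)]
      rw [if_pos rfl, zero_add]
      apply Finset.sum_congr rfl
      intro w hw
      rw [if_neg (Finset.ne_of_mem_erase hw)]
    rw [h6, ← Finset.sum_div]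
    have h8 := (kk_sum ht hxs hpar M hM).trans hMc
    rw [Finset.sum_add_distrib, Finset.sum_const, Finset.card_erase_of_mem (Finset.mem_univ r),
      Finset.card_univ] at h8
    have h9 : ∑ w ∈ Finset.univ.erase r, kk x le par w ≤ Fintype.card V - 1 := by
      simp only [smul_eq_mul] at h8
      omega
    have h10 : ∑ w ∈ Finset.univ.erase r, (kk x le par w : ℝ) ≤ (Fintype.card V : ℝ) - 1 := by
      have : ((∑ w ∈ Finset.univ.erase r, kk x le par w : ℕ) : ℝ) ≤ ((Fintype.card V - 1 : ℕ) : ℝ) := by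
        exact_mod_cast h9
      rw [Nat.cast_sub hc1] at this
      push_cast at this
      exact this
    linarith
  linarith

end PsiSum

section Assemble

variable {V : Type*} [Fintype V] [DecidableEq V]

open Classical in
lemma sum_pairs (y : Sym2 V → ℝ) (P : Finset (V × V)) :
    ∑ p ∈ P, y s(p.1, p.2) = ∑ e, ((P.filter (fun p => s(p.1, p.2) = e)).card : ℝ) * y e := by
  rw [← Finset.sum_fiberwise P (fun p => s(p.1, p.2))]
  apply Finset.sum_congr rfl
  intro e _
  rw [← nsmul_eq_mul, ← Finset.sum_const]
  apply Finset.sum_congr rfl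
  intro p hp
  rw [(Finset.mem_filter.1 hp).2]

open Classical in
lemma total_le (y : Sym2 V → ℝ) (hy0 : ∀ e, 0 ≤ y e) (hd : ∀ v, y s(v, v) = 0) :
    ∑ v, ∑ u, y s(v, u) ≤ 2 * ∑ e, y e := by
  have h := sum_pairs y Finset.univ
  rw [Fintype.sum_prod_type] at h
  rw [h, Finset.mul_sum]
  apply Finset.sum_le_sum
  intro e _
  apply mul_le_mul_of_nonneg_right _ (hy0 e)
  induction e using Sym2.ind with
  | _ a b =>
    have : (Finset.univ.filter (fun p : V × V => s(p.1, p.2) = s(a, b))) ⊆ {(a, b), (b, a)} := by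
      rintro ⟨u, v⟩ h
      simp only [Finset.mem_filter, Finset.mem_univ, true_and, Sym2.eq_iff] at h
      simp only [Finset.mem_insert, Finset.mem_singleton, Prod.mk.injEq]
      exact h
    have h2 := (Finset.card_le_card this).trans Finset.card_le_two
    exact_mod_cast h2

open Classical in
lemma cut_le (y : Sym2 V → ℝ) (hy0 : ∀ e, 0 ≤ y e) (S : Finset V) :
    cutL S y ≤ ∑ u ∈ S, ∑ v ∈ Sᶜ, y s(u, v) := by
  rw [← Finset.sum_product', sum_pairs, cutL_apply]
  apply Finset.sum_le_sum
  intro e _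
  apply mul_le_mul_of_nonneg_right _ (hy0 e)
  unfold crI
  split_ifs with h
  · obtain ⟨a, b, rfl, ha, hb⟩ := h
    have : 0 < ((S ×ˢ Sᶜ).filter (fun p : V × V => s(p.1, p.2) = s(a, b))).card :=
      Finset.card_pos.2 ⟨(a, b), by simp [ha, hb]⟩
    exact_mod_cast this
  · positivity

open Classical in
lemma tour_of_x (G : SimpleGraph V) (hn : 2 ≤ Fintype.card V) (r : V) (x : Sym2 V → ℝ)
    (hx0 : ∀ e, 0 ≤ x e) (hxG : ∀ e, e ∉ G.edgeSet → x e = 0)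
    (hcut : ∀ S : Finset V, S.Nonempty → r ∉ S → 2 ≤ cutL S x) :
    ∃ W : G.Walk r r, (∀ u, u ∈ W.support) ∧ (W.length : ℝ) ≤ 13 / 9 * ∑ e, x e := by
  obtain ⟨y, hy0, hycut, hyle, hyz, hycard⟩ := sparse_sol r x hx0 hcut
  set z : V → V → ℝ := fun u v => y s(u, v) with hz
  have hz0 : ∀ u v, 0 ≤ z u v := fun u v => hy0 _
  have hzs : ∀ u v, z u v = z v u := by
    intro u v
    simp only [hz, Sym2.eq_swap]
  have hzd : ∀ v, z v v = 0 := by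
    intro v
    exact hyz _ (hxG _ (by simp))
  have hzG : ∀ u v, 0 < z u v → G.Adj u v := by
    intro u v h
    by_contra h2
    have : z u v = 0 := hyz _ (hxG _ (by simpa using h2))
    linarith
  have hzcut : ∀ S : Finset V, S.Nonempty → r ∉ S → 2 ≤ ∑ u ∈ S, ∑ v ∈ Sᶜ, z u v := by
    intro S h1 h2
    exact (hycut S h1 h2).trans (cut_le y hy0 S)
  obtain ⟨le, par0, hdfs⟩ := dfs_exists z hz0 hzs (Fintype.card V) Finset.univ r
    (by simp) (Finset.mem_univ r) (by
      intro U _ hrU hcl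
      by_contra hne
      have h1 : (Uᶜ).Nonempty := by
        rw [Finset.nonempty_iff_ne_empty]
        intro h
        exact hne (by simpa using h)
      have h2 := hzcut Uᶜ h1 (by simpa using hrU)
      have h3 : ∑ u ∈ Uᶜ, ∑ v ∈ Uᶜᶜ, z u v = 0 := by
        apply Finset.sum_eq_zero
        intro u hu
        apply Finset.sum_eq_zero
        intro v hv
        rw [compl_compl] at hv
        by_contra h4
        have h5 : 0 < z v u := by
          rw [hzs]
          exact lt_of_le_of_ne (hz0 _ _) (Ne.symm h4)
        exact (Finset.mem_compl.1 hu) (hcl v hv u (Finset.mem_univ u) h5)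
      linarith)
  have ht0 := hdfs.toRTree
  set par := Function.update par0 r r with hpardef
  have hpw : ∀ w, w ≠ r → par w = par0 w := fun w hw => Function.update_of_ne hw _ _
  have hr : par r = r := Function.update_self _ _ _
  have ht : RTree r le par := by
    refine ⟨ht0.refl, ht0.trans, ht0.antisymm, ht0.root, ht0.chain, ?_, ?_, ?_⟩
    · intro w hw; rw [hpw w hw]; exact ht0.par_le w hw
    · intro w hw; rw [hpw w hw]; exact ht0.par_ne w hw
    · intro w hw; rw [hpw w hw]; exact ht0.le_par w hw
  have hpar : ∀ w, w ≠ r → 0 < z (par w) w := by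
    intro w hw
    rw [hpw w hw]
    exact hdfs.par_adj w (Finset.mem_univ w) hw
  have hcomp : ∀ u v, 0 < z u v → le u v ∨ le v u := fun u v =>
    hdfs.comp u (Finset.mem_univ u) v (Finset.mem_univ v)
  have hgr : ∀ w u, w ≠ r → le w u → z u (par w) ≤ z w (par w) := by
    intro w u hw hwu
    rw [hpw w hw]
    exact hdfs.greedy w (Finset.mem_univ w) hw u (Finset.mem_univ u) hwu
  obtain ⟨W, hW1, hW2⟩ := tour_psi G ht hr z hz0 hzs hzG hpar
  refine ⟨W, hW1, ?_⟩
  have h1 := psi_total ht hz0 hzs hzd hcomp hgr hpar hzcut (Finset.univ.filter (fun e => y e ≠ 0))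
    (fun u v h => by
      simp only [Finset.mem_filter, Finset.mem_univ, true_and]
      exact h.ne') hycard
  have h2 : ∑ v, ∑ u, z v u ≤ 2 * ∑ e, y e := total_le y hy0 hzd
  have h3 : ∀ v, 2 ≤ ∑ u, z v u := by
    intro v
    by_cases hv : v = r
    · subst hv
      obtain ⟨c, hc⟩ := Fintype.exists_ne_of_one_lt_card (by omega : 1 < Fintype.card V) v
      have h4 := hzcut (Finset.univ.erase v) ⟨c, by simp [hc]⟩ (by simp)
      have h5 : (Finset.univ.erase v)ᶜ = {v} := by
        ext u; simp
      rw [h5] at h4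
      simp only [Finset.sum_singleton] at h4
      refine h4.trans ?_
      rw [Finset.sum_congr rfl (fun u _ => hzs u v)]
      exact Finset.sum_le_sum_of_subset_of_nonneg (Finset.subset_univ _) (fun _ _ _ => hz0 _ _)
    · have h4 := hzcut {v} ⟨v, by simp⟩ (by simpa using Ne.symm hv)
      rw [Finset.sum_singleton] at h4
      exact h4.trans (Finset.sum_le_sum_of_subset_of_nonneg (Finset.subset_univ _) (fun _ _ _ => hz0 _ _))
  have h4 : (Fintype.card V : ℝ) * 2 ≤ ∑ v, ∑ u, z v u := by
    have := Finset.sum_le_sum (s := Finset.univ) (fun v _ => h3 v)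
    simpa using this
  linarith

end Assemble

section Final

variable {V : Type*} [Fintype V]

lemma finsum_mem_fintype {E : Type*} [Fintype E] (A : Set E) (x : E → ℝ) :
    ∑ᶠ e ∈ A, x e = ∑ e, A.indicator x e := by
  rw [finsum_mem_def, finsum_eq_sum_of_fintype]

open Classical in
lemma tour_of_feasible (G : SimpleGraph V) (hn : 2 ≤ Fintype.card V) (r : V) (x : Sym2 V → ℝ)
    (hx : HKFeasible G x) :
    ∃ W : G.Walk r r, (∀ u, u ∈ W.support) ∧ (W.length : ℝ) ≤ 13 / 9 * hkValue G x := by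
  have h := tour_of_x G hn r (G.edgeSet.indicator x) (fun e => Set.indicator_nonneg (fun e _ => hx.1 e) e)
    (fun e he => Set.indicator_of_notMem he x) (by
      intro S hS hrS
      have h1 := hx.2 (S : Set V) (by simpa using hS) (by
        intro h
        have : r ∈ (S : Set V) := by rw [h]; trivial
        exact hrS (by simpa using this))
      refine h1.trans ?_
      unfold hkCut
      rw [finsum_mem_fintype, cutL_apply]
      apply Finset.sum_le_sum
      intro e _
      unfold crI crs
      simp only [Set.indicator_apply, Set.mem_setOf_eq, Finset.mem_coe]
      by_cases h2 : e ∈ G.edgeSet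
      · simp [h2]
      · simp [h2])
  unfold hkValue
  rw [finsum_mem_fintype]
  exact h

open Classical in
lemma feasible_two (G : SimpleGraph V) (hconn : G.Connected) : HKFeasible G (fun _ => 2) := by
  refine ⟨fun _ => by norm_num, ?_⟩
  intro S hS hne
  obtain ⟨a, ha⟩ := hS
  obtain ⟨b, hb⟩ := (Set.ne_univ_iff_exists_notMem S).1 hne
  obtain ⟨p⟩ := hconn.preconnected a b
  obtain ⟨d, -, hd1, hd2⟩ := p.exists_boundary_dart S ha hb
  unfold hkCut
  rw [finsum_mem_fintype]
  have := Finset.single_le_sum (s := Finset.univ) (a := s(d.fst, d.snd))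
    (f := fun e => Set.indicator {e ∈ G.edgeSet | ∃ a b, e = s(a, b) ∧ a ∈ S ∧ b ∉ S} (fun _ => (2:ℝ)) e)
    (fun e _ => Set.indicator_nonneg (fun _ _ => by norm_num) e) (Finset.mem_univ _)
  refine le_trans ?_ this
  rw [Set.indicator_of_mem]
  exact ⟨d.adj, d.fst, d.snd, rfl, hd1, hd2⟩

lemma ratio_bound : (13:ℝ) / 9 ≤ 14 * (Real.sqrt 2 - 1) / (12 * Real.sqrt 2 - 13) := by
  have h1 : (Real.sqrt 2) ^ 2 = 2 := Real.sq_sqrt (by norm_num)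
  have h0 : 0 ≤ Real.sqrt 2 := Real.sqrt_nonneg 2
  have h2 : 1.414 < Real.sqrt 2 := by
    rw [Real.lt_sqrt (by norm_num)]; norm_num
  have h3 : Real.sqrt 2 < 1.415 := by
    rw [Real.sqrt_lt' (by norm_num)]; norm_num
  rw [div_le_div_iff₀ (by norm_num) (by linarith)]
  linarith

open Classical in
lemma final_bound (G : SimpleGraph V) (hn : 2 ≤ Fintype.card V) (hconn : G.Connected) :
    ∃ (v : V) (w : G.Walk v v), (∀ u : V, u ∈ w.support) ∧
      (w.length : ℝ) ≤ 14 * (Real.sqrt 2 - 1) / (12 * Real.sqrt 2 - 13) * OLP G := by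
  have hV : 0 < Fintype.card V := by omega
  obtain ⟨r⟩ := Fintype.card_pos_iff.1 hV
  have hfeas := feasible_two G hconn
  have hex : ∃ n, ∃ W : G.Walk r r, (∀ u, u ∈ W.support) ∧ W.length = n := by
    obtain ⟨W, hW, -⟩ := tour_of_feasible G hn r _ hfeas
    exact ⟨W.length, W, hW, rfl⟩
  obtain ⟨W, hW1, hW2⟩ := Nat.find_spec hex
  refine ⟨r, W, hW1, ?_⟩
  have h1 : (9:ℝ) / 13 * W.length ≤ OLP G := by
    unfold OLP
    apply le_csInf
    · exact ⟨_, _, hfeas, rfl⟩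
    · rintro y ⟨x, hx, rfl⟩
      obtain ⟨W', hW'1, hW'2⟩ := tour_of_feasible G hn r x hx
      have h2 : W.length ≤ W'.length := by
        rw [hW2]
        exact Nat.find_min' hex ⟨W', hW'1, rfl⟩
      have h3 : (W.length : ℝ) ≤ W'.length := by exact_mod_cast h2
      linarith
  have h2 : 0 ≤ OLP G := le_trans (by positivity) h1
  have h3 := mul_le_mul_of_nonneg_right ratio_bound h2
  linarith

end Final

/-- Every connected simple graph on `n ≥ 2` vertices has a spanning
closed walk of length at most `(14(√2 − 1)/(12√2 − 13)) · OLP(G)`; in particular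
the integrality gap of the Held-Karp relaxation for graph-TSP is at most
`14(√2 − 1)/(12√2 − 13) < 1.461`. -/
theorem spanning_closed_walk_le_heldKarp
    {V : Type*} [Fintype V]
    (G : SimpleGraph V)
    (hn : 2 ≤ Fintype.card V)
    (hconn : G.Connected) :
    ∃ (v : V) (w : G.Walk v v), (∀ u : V, u ∈ w.support) ∧
      (w.length : ℝ) ≤ 14 * (Real.sqrt 2 - 1) / (12 * Real.sqrt 2 - 13) * OLP G := by
  exact final_bound G hn hconn
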